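/- Assume the curve setup with counterclockwise orientation and let a well distributed mesh with parameters κ ≥ 2 and M > 0 be given. Then there exist C > 0 and N₀ such that the following holds for every N ≥ N₀. Let f : ℝ → ℝ be an L-periodic function of class C^κ with ∫₀^L f = 0, let γ ∈ ℝ, and suppose γ^N ∈ ℝ^N satisfies (1/N)·Σ_{j=1}^{N} γ^N_j·((l(s̃_i^N) − l(s_j^N))·τ(s̃_i^N))/‖l(s̃_i^N) − l(s_j^N)‖² = f(s̃_i^N) for all 1 ≤ i ≤ N−1, together with N^{−1}·Σ_{j=1}^{N} γ^N_j = γ. Define f_app^N(s) = (1/N)·Σ_{j=1}^{N} γ^N_j·((l(s) − l(s_j^N))·τ(s))/‖l(s) − l(s_j^N)‖². Then for every infinitely differentiable L-periodic function φ : ℝ → ℝ, |p.v.∫₀^L f_app^N(s)·φ(s) ds − ∫₀^L f(s)·φ(s) ds| ≤ C·N^{−κ}·(‖f‖_{C^κ} + |γ|)·‖φ‖_{C^{κ+1}}, where p.v.∫₀^L f_app^N·φ denotes the limit as ε → 0⁺ of the integral of f_app^N·φ over the set of s ∈ [0, L) whose distance modulo L to every point s_j^N is at least ε. -/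

import Mathlib

open Real MeasureTheory Filter Topology

/-- Dot product of two points of the plane `ℝ² ≃ ℂ`. -/
noncomputable def dotR (z w : ℂ) : ℝ := z.re * w.re + z.im * w.im

/-- The `C^m` norm of a function. -/
noncomputable def Cnorm (m : ℕ) (g : ℝ → ℝ) : ℝ :=
  ⨆ p : Fin (m + 1) × ℝ, |iteratedDeriv (p.1 : ℕ) g p.2|

/-!
The tangential kernel of the curve is `(π / L) cot (π (s - t) / L)` plus a smooth doubly periodic
remainder. Subtracting the singularity turns the principal value of `f_app` against `φ` into the
mean over `j` of `γ j` times the integral of a smooth periodic function of `s`. Replacing this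
integral by the sum over the collocation points, where `f_app = f`, costs `O(N ^ (-κ))` times the
mean of `|γ j|`, because trapezoidal sums of smooth periodic functions converge at that rate.

The mean of `|γ j|` is controlled by the data through a stability estimate. On the uniform grid the
cotangent matrix is, up to a factor, an isometry on vectors of mean zero, so a failure of stability
would produce in the weak `L²` limit of the step functions with values `γ j` a nonzero density of
mean zero whose tangential velocity vanishes. Such a density has zero logarithmic energy. Chordal
distances on a sphere bring the kernel into the form `-log (1 - k) = ∑ kⁿ / n` with `k` an inner
product; the energy then is a sum of squares of moments, and by the Stone–Weierstrass theorem the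
density is zero. The collocation equation that is not imposed is recovered, with the accuracy
needed, by testing with `φ = 1`.
-/

open scoped ContDiff

/-! ### Smooth periodic kernels -/

section ParametricIntegral

universe u v

variable {E : Type u} [NormedAddCommGroup E] [NormedSpace ℝ E] [ProperSpace E]

theorem hasFDerivAt_intervalIntegral_of_contDiff {G : Type*} [NormedAddCommGroup G]
    [NormedSpace ℝ G] {f : E × ℝ → G} (hf : ContDiff ℝ 1 f) (a b : ℝ) (p : E) :
    HasFDerivAt (fun p ↦ ∫ y in a..b, f (p, y))
      (∫ y in a..b, (fderiv ℝ f (p, y)).comp (.inl ℝ E ℝ)) p := by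
  have hf' : Continuous fun q ↦ (fderiv ℝ f q).comp (.inl ℝ E ℝ) :=
    (hf.continuous_fderiv one_ne_zero).clm_comp continuous_const
  obtain ⟨C, hC⟩ := ((isCompact_closedBall p 1).prod
    (isCompact_uIcc (a := a) (b := b))).exists_bound_of_continuousOn hf'.continuousOn
  refine intervalIntegral.hasFDerivAt_integral_of_dominated_of_fderiv_le (𝕜 := ℝ)
    (F := fun p y ↦ f (p, y)) (bound := fun _ ↦ C) (Metric.closedBall_mem_nhds p one_pos)
    (.of_forall fun x ↦ ?_) ?_ ?_
    (.of_forall fun y hy x hx ↦ hC (x, y) ⟨hx, Set.uIoc_subset_uIcc hy⟩)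
    intervalIntegrable_const (.of_forall fun y _ x _ ↦ ?_)
  · exact (hf.continuous.comp (.prodMk_right x)).aestronglyMeasurable
  · exact (hf.continuous.comp (.prodMk_right p)).intervalIntegrable _ _
  · exact (hf'.comp (.prodMk_right p)).aestronglyMeasurable
  · exact ((hf.differentiable one_ne_zero) _).hasFDerivAt.comp x (hasFDerivAt_prodMk_left x y)

theorem hasDerivAt_intervalIntegral_of_contDiff {G : Type*} [NormedAddCommGroup G]
    [NormedSpace ℝ G] [CompleteSpace G] {f : ℝ × ℝ → G} (hf : ContDiff ℝ 1 f) (a b s : ℝ) :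
    HasDerivAt (fun s ↦ ∫ y in a..b, f (s, y)) (∫ y in a..b, deriv (fun s ↦ f (s, y)) s) s := by
  have hcont : Continuous fun y ↦ (fderiv ℝ f (s, y)).comp (.inl ℝ ℝ ℝ) :=
    ((hf.continuous_fderiv one_ne_zero).comp (.prodMk_right s)).clm_comp continuous_const
  refine (hasFDerivAt_intervalIntegral_of_contDiff hf a b s).hasDerivAt.congr_deriv ?_
  rw [ContinuousLinearMap.intervalIntegral_apply (hcont.intervalIntegrable a b)]
  congr! 2 with y
  exact (((hf.differentiable one_ne_zero _).hasFDerivAt.comp s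
    (hasFDerivAt_prodMk_left s y)).hasDerivAt.deriv).symm

theorem contDiff_intervalIntegral_nat (n : ℕ) {G : Type (max u v)} [NormedAddCommGroup G]
    [NormedSpace ℝ G] {f : E × ℝ → G} (hf : ContDiff ℝ n f) (a b : ℝ) :
    ContDiff ℝ n fun p ↦ ∫ y in a..b, f (p, y) := by
  induction n generalizing G with
  | zero =>
    exact contDiff_zero.2 (intervalIntegral.continuous_parametric_intervalIntegral_of_continuous'
      (f := fun p y ↦ f (p, y)) hf.continuous a b)
  | succ n ih =>
    have hf' : ContDiff ℝ n fun q ↦ (fderiv ℝ f q).comp (.inl ℝ E ℝ) :=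
      (hf.fderiv_right le_rfl).clm_comp contDiff_const
    exact contDiff_succ_iff_hasFDerivAt.2 ⟨_, ih hf', fun p ↦
      hasFDerivAt_intervalIntegral_of_contDiff (hf.of_le (by simp)) a b p⟩

theorem contDiff_intervalIntegral {G : Type (max u v)} [NormedAddCommGroup G]
    [NormedSpace ℝ G] {f : E × ℝ → G} (hf : ContDiff ℝ ∞ f) (a b : ℝ) :
    ContDiff ℝ ∞ fun p ↦ ∫ y in a..b, f (p, y) :=
  contDiff_infty.2 fun n ↦ contDiff_intervalIntegral_nat.{u, v} n (contDiff_infty.1 hf n) a b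

end ParametricIntegral

section Periodic

variable {E : Type*} [NormedAddCommGroup E] [NormedSpace ℝ E]

theorem periodic_iteratedDeriv {f : ℝ → E} {L : ℝ} (hf : Function.Periodic f L) (n : ℕ) :
    Function.Periodic (iteratedDeriv n f) L := fun x ↦ by
  rw [← congrFun (iteratedDeriv_comp_add_const n f L) x, hf.funext]

theorem periodic_deriv {f : ℝ → E} {L : ℝ} (hf : Function.Periodic f L) :
    Function.Periodic (deriv f) L := by
  simpa only [iteratedDeriv_one] using periodic_iteratedDeriv hf 1

end Periodic

section DividedDifference

variable {E : Type*} [NormedAddCommGroup E] [NormedSpace ℝ E]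

/-- The divided difference `(ψ s - ψ t) / (s - t)` at `p = (s, t)`, in the integral form that also
makes sense on the diagonal. -/
noncomputable def dividedDifference (ψ : ℝ → E) (p : ℝ × ℝ) : E :=
  ∫ y in (0 : ℝ)..1, deriv ψ (p.2 + y * (p.1 - p.2))

theorem contDiff_dividedDifference {ψ : ℝ → E} (hψ : ContDiff ℝ ∞ ψ) :
    ContDiff ℝ ∞ (dividedDifference ψ) :=
  contDiff_intervalIntegral (f := fun q : (ℝ × ℝ) × ℝ ↦ deriv ψ (q.1.2 + q.2 * (q.1.1 - q.1.2)))
    ((contDiff_infty_iff_deriv.1 hψ).2.comp (by fun_prop)) 0 1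

theorem sub_smul_dividedDifference [CompleteSpace E] {ψ : ℝ → E} (hψ : ContDiff ℝ 1 ψ) (s t : ℝ) :
    (s - t) • dividedDifference ψ (s, t) = ψ s - ψ t := by
  have hderiv : ∀ y : ℝ, HasDerivAt (fun y : ℝ ↦ ψ (t + y * (s - t)))
      ((s - t) • deriv ψ (t + y * (s - t))) y := fun y ↦
    ((hψ.differentiable one_ne_zero) _).hasDerivAt.scomp y
      (by simpa only [id, one_mul] using ((hasDerivAt_id y).mul_const (s - t)).const_add t)
  have : Continuous (deriv ψ) := hψ.continuous_deriv le_rfl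
  rw [dividedDifference, ← intervalIntegral.integral_smul,
    intervalIntegral.integral_eq_sub_of_hasDerivAt (fun y _ ↦ hderiv y)
      (Continuous.intervalIntegrable (by fun_prop) _ _)]
  simp only [one_mul, add_sub_cancel, zero_mul, add_zero]

theorem dividedDifference_self [CompleteSpace E] (ψ : ℝ → E) (t : ℝ) :
    dividedDifference ψ (t, t) = deriv ψ t := by
  simp [dividedDifference]

end DividedDifference

section CirclePoint

variable {L : ℝ}

/-- The parametrisation of the unit circle of period `L`. Smooth `L`-periodic kernels are built by
dividing differences by differences of `circlePt L`. -/
noncomputable def circlePt (L s : ℝ) : ℂ := circleMap 0 1 (2 * π / L * s)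

theorem norm_circlePt (L s : ℝ) : ‖circlePt L s‖ = 1 := by simp [circlePt]

theorem circlePt_ne_zero (L s : ℝ) : circlePt L s ≠ 0 := circleMap_ne_center one_ne_zero

theorem contDiff_circlePt (L : ℝ) : ContDiff ℝ ∞ (circlePt L) :=
  (contDiff_circleMap 0 1).comp (contDiff_const.mul contDiff_id)

theorem hasDerivAt_circlePt (L s : ℝ) :
    HasDerivAt (circlePt L) ((2 * π / L : ℝ) * Complex.I * circlePt L s) s :=
  ((hasDerivAt_circleMap 0 1 _).scomp s ((hasDerivAt_id s).const_mul (2 * π / L))).congr_deriv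
    (by rw [mul_one, Complex.real_smul, circlePt, id]; ring)

theorem deriv_circlePt_ne_zero (hL : L ≠ 0) (s : ℝ) : deriv (circlePt L) s ≠ 0 := by
  rw [(hasDerivAt_circlePt L s).deriv]
  exact mul_ne_zero (mul_ne_zero (by simp [pi_ne_zero, hL]) Complex.I_ne_zero)
    (circlePt_ne_zero L s)

theorem circlePt_eq_iff (hL : L ≠ 0) {s t : ℝ} :
    circlePt L s = circlePt L t ↔ ∃ k : ℤ, s = t + k * L := by
  rw [circlePt, circlePt, circleMap_eq_circleMap_iff _ one_ne_zero]
  refine exists_congr fun k ↦ ?_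
  rw [← mul_assoc (k : ℂ), ← add_mul, mul_left_inj' Complex.I_ne_zero]
  norm_cast
  field_simp [pi_ne_zero]

theorem countable_setOf_circlePt_eq (hL : L ≠ 0) (t : ℝ) :
    {s | circlePt L s = circlePt L t}.Countable := by
  refine (Set.countable_range fun k : ℤ ↦ t + k * L).mono fun s hs ↦ ?_
  obtain ⟨k, rfl⟩ := (circlePt_eq_iff hL).1 hs
  exact ⟨k, rfl⟩

theorem circlePt_periodic (hL : L ≠ 0) : Function.Periodic (circlePt L) L := fun _ ↦
  (circlePt_eq_iff hL).2 ⟨1, by simp⟩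

theorem circlePt_ne_of_abs_sub_lt {s t : ℝ} (h : |s - t| < L) (hst : s ≠ t) :
    circlePt L s ≠ circlePt L t := by
  have hL : 0 < L := (abs_nonneg _).trans_lt h
  rw [Ne, circlePt_eq_iff hL.ne']
  rintro ⟨k, rfl⟩
  rw [add_sub_cancel_left, abs_mul, abs_of_pos hL, mul_lt_iff_lt_one_left hL] at h
  have hk : k = 0 := Int.abs_lt_one_iff.1 (by exact_mod_cast h)
  simp [hk] at hst

theorem norm_circlePt_sub (L s t : ℝ) :
    ‖circlePt L s - circlePt L t‖ = 2 * |Real.sin (π * (s - t) / L)| := by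
  have hmul : circlePt L s - circlePt L t =
      circlePt L t * (Complex.exp (Complex.I * (2 * (π * (s - t) / L) : ℝ)) - 1) := by
    simp only [circlePt, circleMap_zero, Complex.ofReal_one, one_mul]
    rw [mul_sub_one, ← Complex.exp_add]
    congr 2
    push_cast
    ring
  rw [hmul, norm_mul, norm_circlePt, one_mul, Complex.norm_exp_I_mul_ofReal_sub_one,
    mul_div_cancel_left₀ _ two_ne_zero, norm_mul, Real.norm_ofNat, Real.norm_eq_abs]

theorem circlePt_ne_iff_sin_ne_zero {s t : ℝ} :
    circlePt L s ≠ circlePt L t ↔ Real.sin (π * (s - t) / L) ≠ 0 := by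
  rw [← sub_ne_zero, ← norm_ne_zero_iff, norm_circlePt_sub, mul_ne_zero_iff_left two_ne_zero,
    abs_ne_zero]

theorem dividedDifference_circlePt_ne_zero {s t : ℝ} (h : |s - t| < L) :
    dividedDifference (circlePt L) (s, t) ≠ 0 := by
  obtain rfl | hst := eq_or_ne s t
  · rw [dividedDifference_self]
    exact deriv_circlePt_ne_zero ((abs_nonneg _).trans_lt h).ne' s
  · refine right_ne_zero_of_smul (a := s - t) ?_
    rw [sub_smul_dividedDifference (contDiff_infty.1 (contDiff_circlePt L) 1)]
    exact sub_ne_zero.2 (circlePt_ne_of_abs_sub_lt h hst)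

end CirclePoint

section CircleSlope

variable {L : ℝ} {ψ : ℝ → ℂ}

open Classical in
/-- The slope of the `L`-periodic function `ψ` with respect to `circlePt L`: the quotient
`(ψ s - ψ t) / (circlePt L s - circlePt L t)` at `p = (s, t)`, extended to the diagonal. -/
noncomputable def circleSlope (L : ℝ) (ψ : ℝ → ℂ) (p : ℝ × ℝ) : ℂ :=
  if circlePt L p.1 = circlePt L p.2 then deriv ψ p.1 / deriv (circlePt L) p.1
  else (ψ p.1 - ψ p.2) / (circlePt L p.1 - circlePt L p.2)

theorem circleSlope_mul_sub (hL : L ≠ 0) (hψ : Function.Periodic ψ L) (s t : ℝ) :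
    circleSlope L ψ (s, t) * (circlePt L s - circlePt L t) = ψ s - ψ t := by
  by_cases hst : circlePt L s = circlePt L t
  · obtain ⟨k, rfl⟩ := (circlePt_eq_iff hL).1 hst
    rw [hst, hψ.int_mul k t, sub_self, sub_self, mul_zero]
  · rw [circleSlope, if_neg hst, div_mul_cancel₀ _ (sub_ne_zero.2 hst)]

theorem circleSlope_periodic_left (hL : L ≠ 0) (hψ : Function.Periodic ψ L) (t : ℝ) :
    Function.Periodic (fun s ↦ circleSlope L ψ (s, t)) L := fun s ↦ by
  simp only [circleSlope, circlePt_periodic hL s, periodic_deriv (circlePt_periodic hL) s,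
    periodic_deriv hψ s, hψ s]

theorem circleSlope_periodic_right (hL : L ≠ 0) (hψ : Function.Periodic ψ L) (s : ℝ) :
    Function.Periodic (fun t ↦ circleSlope L ψ (s, t)) L := fun t ↦ by
  simp only [circleSlope, circlePt_periodic hL t, hψ t]

theorem circleSlope_of_abs_sub_lt (hψ : ContDiff ℝ 1 ψ) {s t : ℝ} (h : |s - t| < L) :
    circleSlope L ψ (s, t) =
      dividedDifference ψ (s, t) / dividedDifference (circlePt L) (s, t) := by
  obtain rfl | hst := eq_or_ne s t
  · rw [circleSlope, if_pos rfl, dividedDifference_self, dividedDifference_self]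
  · rw [circleSlope, if_neg (circlePt_ne_of_abs_sub_lt h hst), ← sub_smul_dividedDifference hψ,
      ← sub_smul_dividedDifference (contDiff_infty.1 (contDiff_circlePt L) 1), Complex.real_smul,
      Complex.real_smul, mul_div_mul_left]
    exact_mod_cast sub_ne_zero.2 hst

theorem contDiffAt_circleSlope_of_ne (hψ : ContDiff ℝ ∞ ψ) {p : ℝ × ℝ}
    (hp : circlePt L p.1 ≠ circlePt L p.2) : ContDiffAt ℝ ∞ (circleSlope L ψ) p := by
  have hz := contDiff_circlePt L
  have hz2 : Continuous fun p : ℝ × ℝ ↦ circlePt L p.1 - circlePt L p.2 :=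
    (hz.continuous.comp continuous_fst).sub (hz.continuous.comp continuous_snd)
  have hquot : ContDiffAt ℝ ∞
      (fun p : ℝ × ℝ ↦ (ψ p.1 - ψ p.2) * (circlePt L p.1 - circlePt L p.2)⁻¹) p :=
    ((hψ.comp contDiff_fst).sub (hψ.comp contDiff_snd)).contDiffAt.mul
      (((hz.comp contDiff_fst).sub (hz.comp contDiff_snd)).contDiffAt.inv (sub_ne_zero.2 hp))
  refine hquot.congr_of_eventuallyEq ?_
  filter_upwards [hz2.continuousAt.eventually_ne (sub_ne_zero.2 hp)] with q hq
  rw [circleSlope, if_neg (sub_ne_zero.1 hq), div_eq_mul_inv]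

theorem contDiffAt_circleSlope_of_abs_sub_lt (hψ : ContDiff ℝ ∞ ψ) {p : ℝ × ℝ}
    (hp : |p.1 - p.2| < L) : ContDiffAt ℝ ∞ (circleSlope L ψ) p := by
  have hquot : ContDiffAt ℝ ∞
      (fun p ↦ dividedDifference ψ p * (dividedDifference (circlePt L) p)⁻¹) p :=
    (contDiff_dividedDifference hψ).contDiffAt.mul
      ((contDiff_dividedDifference (contDiff_circlePt L)).contDiffAt.inv
        (dividedDifference_circlePt_ne_zero hp))
  refine hquot.congr_of_eventuallyEq ?_
  have hcont : Continuous fun p : ℝ × ℝ ↦ |p.1 - p.2| := by fun_prop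
  filter_upwards [hcont.continuousAt.eventually_lt continuousAt_const hp] with q hq
  rw [circleSlope_of_abs_sub_lt (contDiff_infty.1 hψ 1) hq, div_eq_mul_inv]

theorem contDiff_circleSlope (hL : 0 < L) (hψ : ContDiff ℝ ∞ ψ) (hper : Function.Periodic ψ L) :
    ContDiff ℝ ∞ (circleSlope L ψ) := by
  refine contDiff_iff_contDiffAt.2 fun ⟨s, t⟩ ↦ ?_
  by_cases hst : circlePt L s = circlePt L t
  · obtain ⟨k, rfl⟩ := (circlePt_eq_iff hL.ne').1 hst
    have hshift : circleSlope L ψ = fun p ↦ circleSlope L ψ (p.1 - k * L, p.2) := by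
      ext p
      exact ((circleSlope_periodic_left hL.ne' hper p.2).sub_int_mul_eq k).symm
    rw [hshift]
    refine ContDiffAt.comp (g := circleSlope L ψ) _
      (contDiffAt_circleSlope_of_abs_sub_lt hψ ?_) (by fun_prop)
    simpa using hL
  · exact contDiffAt_circleSlope_of_ne hψ hst

end CircleSlope

section CotKernel

variable {L : ℝ}

/-- The cotangent kernel `(π / L) cot (π x / L)` of period `L`, the singular part of the velocity
kernel of a closed curve parametrised with period `L`. -/
noncomputable def cotKernel (L x : ℝ) : ℝ := π / L * Real.cot (π * x / L)

theorem ofReal_cotKernel_sub (L s t : ℝ) :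
    (cotKernel L (s - t) : ℂ) = (π / L : ℝ) * Complex.I *
      ((circlePt L s + circlePt L t) / (circlePt L s - circlePt L t)) := by
  have hexp : Complex.exp (2 * Complex.I * (π * (s - t) / L : ℝ)) =
      circlePt L s / circlePt L t := by
    rw [circlePt, circlePt, circleMap_zero_div, div_one, circleMap_zero, Complex.ofReal_one,
      one_mul]
    congr 1
    push_cast
    ring
  rw [cotKernel, Complex.ofReal_mul, Complex.ofReal_cot, Complex.cot_eq_exp_ratio, hexp, mul_assoc]
  congr 1
  have ht := circlePt_ne_zero L t
  rw [div_add_one ht, one_sub_div ht, mul_div_assoc', div_div_div_cancel_right₀ ht,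
    ← neg_sub (circlePt L s), mul_neg, ← neg_mul, ← Complex.inv_I, div_mul_eq_div_div,
    div_inv_eq_mul]
  ring

theorem logDeriv_circlePt_sub_const {s t : ℝ} (h : circlePt L s ≠ circlePt L t) :
    logDeriv (fun s ↦ circlePt L s - circlePt L t) s =
      (π / L : ℝ) * Complex.I + cotKernel L (s - t) := by
  have hne := sub_ne_zero.2 h
  rw [logDeriv_apply, deriv_sub_const, (hasDerivAt_circlePt L s).deriv, ofReal_cotKernel_sub,
    mul_div_assoc 2 π, Complex.ofReal_mul]
  push_cast
  field_simp
  ring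

end CotKernel

section DerivativeBounds

variable {E : Type*} [NormedAddCommGroup E] [NormedSpace ℝ E]

theorem norm_iteratedDeriv_mul_le_of_le {A : Type*} [NormedRing A] [NormOneClass A]
    [NormedAlgebra ℝ A] {f g : ℝ → A} {k : ℕ} {x a b : ℝ} (hf : ContDiffAt ℝ k f x)
    (hg : ContDiffAt ℝ k g x) (hfa : ∀ i ≤ k, ‖iteratedDeriv i f x‖ ≤ a)
    (hgb : ∀ i ≤ k, ‖iteratedDeriv i g x‖ ≤ b) :
    ‖iteratedDeriv k (fun x ↦ f x * g x) x‖ ≤ 2 ^ k * (a * b) := by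
  have : 0 ≤ a := (norm_nonneg _).trans (hfa 0 k.zero_le)
  calc ‖iteratedDeriv k (fun x ↦ f x * g x) x‖
      ≤ ∑ i ∈ Finset.range (k + 1), (k.choose i : ℝ) * (a * b) := by
        rw [iteratedDeriv_fun_mul hf hg]
        refine norm_sum_le_of_le _ fun i hi ↦ ?_
        have hchoose : ‖(k.choose i : A)‖ ≤ k.choose i := by
          simpa using Nat.norm_cast_le (α := A) (k.choose i)
        rw [mul_assoc]
        exact norm_mul_le_of_le hchoose (norm_mul_le_of_le (hfa i (Finset.mem_range_succ_iff.1 hi))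
          (hgb _ (k.sub_le i)))
    _ = 2 ^ k * (a * b) := by
        rw [← Finset.sum_mul, ← Nat.cast_sum, Nat.sum_range_choose, Nat.cast_pow, Nat.cast_ofNat]

theorem exists_forall_le_of_le (C : ℕ → ℝ) (k : ℕ) : ∃ B, ∀ i ≤ k, C i ≤ B :=
  ((Set.finite_Iic k).image C).bddAbove.imp fun _ hB _ hi ↦ hB (Set.mem_image_of_mem C hi)

theorem exists_norm_le_of_periodic {α : Type*} [SeminormedAddGroup α] {L : ℝ} (hL : L ≠ 0)
    {f : ℝ → α} (hf : Continuous f) (hper : Function.Periodic f L) : ∃ C, ∀ x, ‖f x‖ ≤ C := by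
  obtain ⟨C, hC⟩ := (hper.isBounded_of_continuous hL hf).exists_norm_le
  exact ⟨C, fun x ↦ hC _ (Set.mem_range_self x)⟩

/-- A smooth function on the torus `(ℝ / Lℤ)²`, seen as a doubly `L`-periodic function on `ℝ²`. -/
structure IsSmoothPeriodicKernel (L : ℝ) (F : ℝ × ℝ → E) : Prop where
  contDiff : ContDiff ℝ ∞ F
  periodic_left : ∀ t, Function.Periodic (fun s ↦ F (s, t)) L
  periodic_right : ∀ s, Function.Periodic (fun t ↦ F (s, t)) L

namespace IsSmoothPeriodicKernel

variable {L : ℝ} {F : ℝ × ℝ → E}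

theorem contDiff_left (hF : IsSmoothPeriodicKernel L F) (t : ℝ) :
    ContDiff ℝ ∞ fun s ↦ F (s, t) :=
  hF.contDiff.comp (contDiff_prodMk_left t)

theorem deriv_left (hF : IsSmoothPeriodicKernel L F) :
    IsSmoothPeriodicKernel L fun p ↦ deriv (fun s ↦ F (s, p.2)) p.1 := by
  refine ⟨?_, fun t ↦ periodic_deriv (hF.periodic_left t), fun s t ↦ ?_⟩
  · have hderiv : (fun p : ℝ × ℝ ↦ deriv (fun s ↦ F (s, p.2)) p.1) =
        fun p ↦ fderiv ℝ F p (1, 0) := by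
      ext p
      have hF' := (hF.contDiff.differentiable (by simp) p).hasFDerivAt
      exact (hF'.comp_hasDerivAt_of_eq p.1
        ((hasDerivAt_id p.1).prodMk (hasDerivAt_const p.1 p.2)) rfl).deriv
    rw [hderiv]
    exact (hF.contDiff.fderiv_right (by simp)).clm_apply contDiff_const
  · exact congrArg (deriv · s) (funext fun s ↦ hF.periodic_right s t)

theorem exists_norm_le (hF : IsSmoothPeriodicKernel L F) (hL : 0 < L) : ∃ C, ∀ p, ‖F p‖ ≤ C := by
  obtain ⟨C, hC⟩ := (isCompact_Icc.prod isCompact_Icc).exists_bound_of_continuousOn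
    (s := Set.Icc 0 L ×ˢ Set.Icc 0 L) hF.contDiff.continuous.continuousOn
  refine ⟨C, fun ⟨s, t⟩ ↦ ?_⟩
  obtain ⟨s', hs', hss'⟩ := (hF.periodic_left t).exists_mem_Ico₀ hL s
  obtain ⟨t', ht', htt'⟩ := (hF.periodic_right s').exists_mem_Ico₀ hL t
  rw [hss', htt']
  exact hC (s', t') ⟨Set.Ico_subset_Icc_self hs', Set.Ico_subset_Icc_self ht'⟩

theorem exists_norm_iteratedDeriv_eq_le (hF : IsSmoothPeriodicKernel L F) (hL : 0 < L) (i : ℕ) :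
    ∃ C, ∀ s t, ‖iteratedDeriv i (fun s ↦ F (s, t)) s‖ ≤ C := by
  induction i generalizing F with
  | zero =>
    obtain ⟨C, hC⟩ := hF.exists_norm_le hL
    exact ⟨C, fun s t ↦ by simpa only [iteratedDeriv_zero] using hC (s, t)⟩
  | succ i ih =>
    simp only [iteratedDeriv_succ']
    exact ih hF.deriv_left

theorem exists_norm_iteratedDeriv_le (hF : IsSmoothPeriodicKernel L F) (hL : 0 < L) (k : ℕ) :
    ∃ C, ∀ i ≤ k, ∀ s t, ‖iteratedDeriv i (fun s ↦ F (s, t)) s‖ ≤ C := by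
  choose C hC using hF.exists_norm_iteratedDeriv_eq_le hL
  obtain ⟨B, hB⟩ := exists_forall_le_of_le C k
  exact ⟨B, fun i hi s t ↦ (hC i s t).trans (hB i hi)⟩

end IsSmoothPeriodicKernel

end DerivativeBounds

section DividedDifferenceBounds

variable {E : Type*} [NormedAddCommGroup E] [NormedSpace ℝ E]

theorem hasDerivAt_integral_pow_smul [CompleteSpace E] {ψ : ℝ → E} (hψ : ContDiff ℝ 1 ψ) (m : ℕ)
    (t s : ℝ) :
    HasDerivAt (fun s ↦ ∫ y in (0 : ℝ)..1, y ^ m • ψ (t + y * (s - t)))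
      (∫ y in (0 : ℝ)..1, y ^ (m + 1) • deriv ψ (t + y * (s - t))) s := by
  have hsmooth : ContDiff ℝ 1 fun q : ℝ × ℝ ↦ q.2 ^ m • ψ (t + q.2 * (q.1 - t)) :=
    (contDiff_snd.pow m).smul (hψ.comp (by fun_prop))
  refine (hasDerivAt_intervalIntegral_of_contDiff hsmooth 0 1 s).congr_deriv ?_
  congr! 2 with y
  have haffine : HasDerivAt (fun s ↦ t + y * (s - t)) y s := by
    simpa only [id, mul_one] using (((hasDerivAt_id s).sub_const t).const_mul y).const_add t
  have hcomp := ((hψ.differentiable one_ne_zero _).hasDerivAt.scomp s haffine).const_smul (y ^ m)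
  exact hcomp.deriv.trans (by rw [smul_smul, pow_succ])

theorem iteratedDeriv_integral_pow_smul [CompleteSpace E] (k : ℕ) {ψ : ℝ → E}
    (hψ : ContDiff ℝ ∞ ψ) (m : ℕ) (t s : ℝ) :
    iteratedDeriv k (fun s ↦ ∫ y in (0 : ℝ)..1, y ^ m • ψ (t + y * (s - t))) s =
      ∫ y in (0 : ℝ)..1, y ^ (m + k) • iteratedDeriv k ψ (t + y * (s - t)) := by
  induction k generalizing ψ m with
  | zero => simp only [iteratedDeriv_zero, add_zero]
  | succ k ih =>
    rw [iteratedDeriv_succ', iteratedDeriv_succ', add_comm k, ← add_assoc,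
      ← ih (contDiff_infty_iff_deriv.1 hψ).2]
    exact congrArg (iteratedDeriv k · s) (funext fun s ↦
      (hasDerivAt_integral_pow_smul (contDiff_infty.1 hψ 1) m t s).deriv)

theorem norm_iteratedDeriv_dividedDifference_le [CompleteSpace E] {ψ : ℝ → E}
    (hψ : ContDiff ℝ ∞ ψ) (k : ℕ) {B : ℝ} (hB : ∀ x, ‖iteratedDeriv (k + 1) ψ x‖ ≤ B) (s t : ℝ) :
    ‖iteratedDeriv k (fun s ↦ dividedDifference ψ (s, t)) s‖ ≤ B := by
  have hiter := iteratedDeriv_integral_pow_smul k (contDiff_infty_iff_deriv.1 hψ).2 0 t s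
  simp only [pow_zero, one_smul, zero_add, ← iteratedDeriv_succ'] at hiter
  simp only [dividedDifference, hiter]
  refine (intervalIntegral.norm_integral_le_of_norm_le_const (C := B) fun y hy ↦ ?_).trans_eq
    (by rw [sub_zero, abs_one, mul_one])
  rw [Set.uIoc_of_le zero_le_one] at hy
  rw [norm_smul, norm_pow, Real.norm_of_nonneg hy.1.le]
  exact (mul_le_of_le_one_left (norm_nonneg _) (pow_le_one₀ hy.1.le hy.2)).trans (hB _)

end DividedDifferenceBounds

section CircleSlopeBounds

variable {L : ℝ}

theorem dividedDifference_circlePt_eq_mul (L s t : ℝ) :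
    dividedDifference (circlePt L) (s, t) =
      circlePt L t * dividedDifference (circlePt L) (s - t, 0) := by
  simp only [dividedDifference, (hasDerivAt_circlePt L _).deriv]
  rw [← intervalIntegral.integral_const_mul]
  refine intervalIntegral.integral_congr fun y _ ↦ ?_
  have hadd : circlePt L (t + y * (s - t)) = circlePt L t * circlePt L (0 + y * (s - t - 0)) := by
    rw [circlePt, circlePt, circlePt, circleMap_zero_mul]
    ring_nf
  simp only [hadd]
  ring

theorem contDiffAt_inv_dividedDifference_circlePt {x : ℝ} (hx : |x| < L) :
    ContDiffAt ℝ ∞ (fun x ↦ (dividedDifference (circlePt L) (x, 0))⁻¹) x :=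
  ((contDiff_dividedDifference (contDiff_circlePt L)).comp (contDiff_prodMk_left 0)).contDiffAt.inv
    (dividedDifference_circlePt_ne_zero (by rwa [sub_zero]))

theorem exists_norm_iteratedDeriv_inv_dividedDifference_circlePt_le (hL : 0 < L) (k : ℕ) :
    ∃ C, ∀ i ≤ k, ∀ x, |x| ≤ L / 2 →
      ‖iteratedDeriv i (fun x ↦ (dividedDifference (circlePt L) (x, 0))⁻¹) x‖ ≤ C := by
  have hbound (i : ℕ) : ∃ C, ∀ x ∈ Metric.closedBall 0 (L / 2),
      ‖iteratedDeriv i (fun x ↦ (dividedDifference (circlePt L) (x, 0))⁻¹) x‖ ≤ C := by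
    refine (isCompact_closedBall 0 (L / 2)).exists_bound_of_continuousOn fun x hx ↦ ?_
    have hxL : |x| < L := (mem_closedBall_zero_iff.1 hx).trans_lt (half_lt_self hL)
    have hcont := ((contDiffAt_inv_dividedDifference_circlePt hxL).iteratedFDeriv_right (m := 0)
      (i := i) (by exact_mod_cast le_top)).continuousAt
    exact (hcont.eval_const fun _ ↦ 1).continuousWithinAt
  choose C hC using hbound
  obtain ⟨B, hB⟩ := exists_forall_le_of_le C k
  exact ⟨B, fun i hi x hx ↦ (hC i x (mem_closedBall_zero_iff.2 hx)).trans (hB i hi)⟩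

theorem isSmoothPeriodicKernel_circleSlope (hL : 0 < L) {ψ : ℝ → ℂ} (hψ : ContDiff ℝ ∞ ψ)
    (hper : Function.Periodic ψ L) : IsSmoothPeriodicKernel L (circleSlope L ψ) :=
  ⟨contDiff_circleSlope hL hψ hper, circleSlope_periodic_left hL.ne' hper,
    circleSlope_periodic_right hL.ne' hper⟩

theorem exists_int_abs_sub_mul_le (hL : 0 < L) (x : ℝ) : ∃ k : ℤ, |x - k * L| ≤ L / 2 := by
  refine ⟨round (x / L), ?_⟩
  have hround := abs_sub_round (x / L)
  rwa [div_sub' hL.ne', abs_div, abs_of_pos hL, div_le_iff₀ hL, mul_comm L, one_div_mul_eq_div]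
    at hround

theorem iteratedDeriv_circleSlope_eq {ψ : ℝ → ℂ} (hψ : ContDiff ℝ ∞ ψ) {s t : ℝ}
    (h : |s - t| < L) (k : ℕ) :
    iteratedDeriv k (fun s ↦ circleSlope L ψ (s, t)) s = iteratedDeriv k (fun s ↦
      dividedDifference ψ (s, t) *
        ((circlePt L t)⁻¹ * (dividedDifference (circlePt L) (s - t, 0))⁻¹)) s := by
  have hcont : Continuous fun s ↦ |s - t| := by fun_prop
  refine Filter.EventuallyEq.iteratedDeriv_eq k ?_
  filter_upwards [hcont.continuousAt.eventually_lt continuousAt_const h] with x hx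
  rw [circleSlope_of_abs_sub_lt (contDiff_infty.1 hψ 1) hx, dividedDifference_circlePt_eq_mul L x t,
    div_eq_mul_inv, mul_inv]

theorem exists_norm_iteratedDeriv_circleSlope_le (hL : 0 < L) (k : ℕ) :
    ∃ C, ∀ ψ : ℝ → ℂ, ContDiff ℝ ∞ ψ → Function.Periodic ψ L → ∀ B,
      (∀ i ≤ k + 1, ∀ x, ‖iteratedDeriv i ψ x‖ ≤ B) →
      ∀ s t, ‖iteratedDeriv k (fun s ↦ circleSlope L ψ (s, t)) s‖ ≤ C * B := by
  obtain ⟨C, hC⟩ := exists_norm_iteratedDeriv_inv_dividedDifference_circlePt_le hL k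
  refine ⟨2 ^ k * C, fun ψ hψ hper B hB s t ↦ ?_⟩
  obtain ⟨n, hn⟩ := exists_int_abs_sub_mul_le hL (s - t)
  rw [← (periodic_iteratedDeriv (circleSlope_periodic_left hL.ne' hper t) k).sub_int_mul_eq n]
  rw [sub_right_comm] at hn
  set s' := s - n * L
  have hnear : |s' - t| < L := hn.trans_lt (half_lt_self hL)
  have hinv : ContDiffAt ℝ ∞ (fun s ↦
      (circlePt L t)⁻¹ * (dividedDifference (circlePt L) (s - t, 0))⁻¹) s' :=
    contDiffAt_const.mul
      (ContDiffAt.comp (g := fun x ↦ (dividedDifference (circlePt L) (x, 0))⁻¹) s'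
        (contDiffAt_inv_dividedDifference_circlePt hnear) (by fun_prop))
  have hdd : ContDiff ℝ ∞ fun s ↦ dividedDifference ψ (s, t) :=
    (contDiff_dividedDifference hψ).comp (contDiff_prodMk_left t)
  rw [iteratedDeriv_circleSlope_eq hψ hnear, mul_assoc, mul_comm C]
  refine norm_iteratedDeriv_mul_le_of_le (contDiff_infty.1 hdd k).contDiffAt
    (hinv.of_le (by exact_mod_cast le_top)) (fun i hi ↦
      norm_iteratedDeriv_dividedDifference_le hψ i (hB (i + 1) (by lia)) s' t) fun i hi ↦ ?_
  rw [iteratedDeriv_const_mul_field, norm_mul, norm_inv, norm_circlePt, inv_one, one_mul,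
    iteratedDeriv_comp_sub_const (f := fun x ↦ (dividedDifference (circlePt L) (x, 0))⁻¹)]
  exact hC i hi _ hn

end CircleSlopeBounds

/-! ### The tangential kernel of a closed curve -/

section Curve

/-- A smooth regular simple closed curve in the plane, parametrised with period `L`. -/
structure IsSimpleClosedCurve (L : ℝ) (l : ℝ → ℂ) : Prop where
  pos : 0 < L
  contDiff : ContDiff ℝ ∞ l
  periodic : Function.Periodic l L
  deriv_ne_zero : ∀ s, deriv l s ≠ 0
  injOn : Set.InjOn l (Set.Ico 0 L)

/-- The kernel `(l s - l t) · l' s / ‖l s - l t‖²`: the tangential component at `l s` of the flow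
generated by a point charge at `l t`. -/
noncomputable def tangentialKernel (l : ℝ → ℂ) (s t : ℝ) : ℝ :=
  dotR (l s - l t) (deriv l s) / ‖l s - l t‖ ^ 2

/-- The smooth part of the tangential kernel, left when its cotangent singularity is removed. -/
noncomputable def regularKernel (L : ℝ) (l : ℝ → ℂ) (p : ℝ × ℝ) : ℝ :=
  (logDeriv (fun s ↦ circleSlope L l (s, p.2)) p.1).re

theorem tangentialKernel_eq_re_logDeriv (l : ℝ → ℂ) (s t : ℝ) :
    tangentialKernel l s t = (logDeriv (fun s ↦ l s - l t) s).re := by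
  rw [tangentialKernel, logDeriv_apply, deriv_sub_const, Complex.div_re,
    ← Complex.normSq_eq_norm_sq, ← add_div, dotR, mul_comm (l s - l t).re, mul_comm (l s - l t).im]

theorem hasDerivAt_log_norm {f : ℝ → ℂ} {s : ℝ} (hf : DifferentiableAt ℝ f s) (hs : f s ≠ 0) :
    HasDerivAt (fun s ↦ Real.log ‖f s‖) (logDeriv f s).re s := by
  have hlog := (hf.hasDerivAt.norm_sq.log (pow_ne_zero 2 (norm_ne_zero_iff.2 hs))).div_const 2
  refine (hlog.congr_of_eventuallyEq (.of_forall fun x ↦ ?_)).congr_deriv ?_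
  · simp only [Real.log_pow, Nat.cast_ofNat, mul_div_cancel_left₀ _ (two_ne_zero' ℝ)]
  · rw [mul_div_assoc, mul_div_cancel_left₀ _ two_ne_zero, logDeriv_apply, Complex.div_re,
      Complex.inner, Complex.mul_re, Complex.conj_re, Complex.conj_im, Complex.normSq_eq_norm_sq]
    ring

namespace IsSimpleClosedCurve

variable {L : ℝ} {l : ℝ → ℂ}

theorem circlePt_eq_of_apply_eq (hl : IsSimpleClosedCurve L l) {s t : ℝ} (h : l s = l t) :
    circlePt L s = circlePt L t := by
  have hmem (x : ℝ) : toIcoMod hl.pos 0 x ∈ Set.Ico 0 L := by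
    simpa only [zero_add] using toIcoMod_mem_Ico hl.pos 0 x
  have hmod {ψ : ℝ → ℂ} (hψ : Function.Periodic ψ L) (x : ℝ) : ψ (toIcoMod hl.pos 0 x) = ψ x := by
    rw [toIcoMod, hψ.sub_zsmul_eq]
  rw [← hmod (circlePt_periodic hl.pos.ne') s, ← hmod (circlePt_periodic hl.pos.ne') t,
    hl.injOn (hmem s) (hmem t) (by rw [hmod hl.periodic, hmod hl.periodic, h])]

theorem circleSlope_ne_zero (hl : IsSimpleClosedCurve L l) (p : ℝ × ℝ) :
    circleSlope L l p ≠ 0 := by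
  rw [circleSlope]
  split_ifs with h
  · exact div_ne_zero (hl.deriv_ne_zero _) (deriv_circlePt_ne_zero hl.pos.ne' _)
  · exact div_ne_zero (sub_ne_zero.2 (mt hl.circlePt_eq_of_apply_eq h)) (sub_ne_zero.2 h)

theorem isSmoothPeriodicKernel_slope (hl : IsSimpleClosedCurve L l) :
    IsSmoothPeriodicKernel L (circleSlope L l) :=
  isSmoothPeriodicKernel_circleSlope hl.pos hl.contDiff hl.periodic

theorem isSmoothPeriodicKernel_regularKernel (hl : IsSimpleClosedCurve L l) :
    IsSmoothPeriodicKernel L (regularKernel L l) := by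
  have hslope := hl.isSmoothPeriodicKernel_slope
  have hderiv := hslope.deriv_left
  change IsSmoothPeriodicKernel L fun p ↦
    (deriv (fun s ↦ circleSlope L l (s, p.2)) p.1 / circleSlope L l p).re
  have hlog : ContDiff ℝ ∞ fun p : ℝ × ℝ ↦
      deriv (fun s ↦ circleSlope L l (s, p.2)) p.1 / circleSlope L l p := by
    simp only [div_eq_mul_inv]
    exact hderiv.contDiff.mul (hslope.contDiff.inv hl.circleSlope_ne_zero)
  refine ⟨Complex.reCLM.contDiff.comp hlog, fun t s ↦ ?_, fun s t ↦ ?_⟩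
  · exact congrArg Complex.re
      (congrArg₂ (· / ·) (hderiv.periodic_left t s) (hslope.periodic_left t s))
  · exact congrArg Complex.re
      (congrArg₂ (· / ·) (hderiv.periodic_right s t) (hslope.periodic_right s t))

theorem tangentialKernel_eq (hl : IsSimpleClosedCurve L l) {s t : ℝ}
    (h : circlePt L s ≠ circlePt L t) :
    tangentialKernel l s t = cotKernel L (s - t) + regularKernel L l (s, t) := by
  have hfactor : (fun s ↦ l s - l t) =
      fun s ↦ circleSlope L l (s, t) * (circlePt L s - circlePt L t) :=
    funext fun s ↦ (circleSlope_mul_sub hl.pos.ne' hl.periodic s t).symm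
  rw [tangentialKernel_eq_re_logDeriv, hfactor, logDeriv_mul (f := fun s ↦ circleSlope L l (s, t))
    (g := fun s ↦ circlePt L s - circlePt L t) s (hl.circleSlope_ne_zero _)
    (sub_ne_zero.2 h) ((hl.isSmoothPeriodicKernel_slope.contDiff_left t).differentiable
      (by simp) s) (((contDiff_circlePt L).differentiable (by simp) s).sub_const _),
    logDeriv_circlePt_sub_const h, Complex.add_re, Complex.add_re, Complex.re_ofReal_mul,
    Complex.I_re, mul_zero, zero_add, Complex.ofReal_re, add_comm, regularKernel]

theorem hasDerivAt_log_norm_circleSlope (hl : IsSimpleClosedCurve L l) (s t : ℝ) :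
    HasDerivAt (fun s ↦ Real.log ‖circleSlope L l (s, t)‖) (regularKernel L l (s, t)) s :=
  hasDerivAt_log_norm
    ((hl.isSmoothPeriodicKernel_slope.contDiff_left t).differentiable (by simp) s)
    (hl.circleSlope_ne_zero _)

theorem integral_regularKernel (hl : IsSimpleClosedCurve L l) (t : ℝ) :
    ∫ s in (0 : ℝ)..L, regularKernel L l (s, t) = 0 := by
  have hcont := (hl.isSmoothPeriodicKernel_regularKernel.contDiff_left t).continuous
  rw [intervalIntegral.integral_eq_sub_of_hasDerivAt
    (fun s _ ↦ hl.hasDerivAt_log_norm_circleSlope s t) (hcont.intervalIntegrable _ _),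
    (hl.isSmoothPeriodicKernel_slope.periodic_left t).eq, sub_self]

end IsSimpleClosedCurve

end Curve

section CNorm

variable {L : ℝ} {m : ℕ} {g : ℝ → ℝ}

theorem Cnorm_nonneg (m : ℕ) (g : ℝ → ℝ) : 0 ≤ Cnorm m g :=
  Real.iSup_nonneg fun _ ↦ abs_nonneg _

theorem abs_iteratedDeriv_le_Cnorm (hL : L ≠ 0) (hg : ContDiff ℝ m g)
    (hper : Function.Periodic g L) {k : ℕ} (hk : k ≤ m) (x : ℝ) :
    |iteratedDeriv k g x| ≤ Cnorm m g := by
  have hbound (i : Fin (m + 1)) : ∃ C, ∀ x, ‖iteratedDeriv i g x‖ ≤ C :=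
    exists_norm_le_of_periodic hL (hg.continuous_iteratedDeriv i (by exact_mod_cast i.is_le))
      (periodic_iteratedDeriv hper i)
  choose C hC using hbound
  have hbdd : BddAbove (Set.range fun p : Fin (m + 1) × ℝ ↦ |iteratedDeriv p.1 g p.2|) := by
    obtain ⟨B, hB⟩ := (Set.finite_range C).bddAbove
    refine ⟨B, ?_⟩
    rintro _ ⟨p, rfl⟩
    exact (hC p.1 p.2).trans (hB (Set.mem_range_self p.1))
  exact le_ciSup hbdd (⟨k, Nat.lt_succ_of_le hk⟩, x)

theorem abs_le_Cnorm (hL : L ≠ 0) (hg : ContDiff ℝ m g) (hper : Function.Periodic g L) (x : ℝ) :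
    |g x| ≤ Cnorm m g := by
  simpa only [iteratedDeriv_zero] using abs_iteratedDeriv_le_Cnorm hL hg hper m.zero_le x

end CNorm

section RegularizedIntegrand

variable {L : ℝ} {l : ℝ → ℂ} {φ : ℝ → ℝ}

/-- The smooth doubly periodic extension of
`(s, t) ↦ cotKernel L (s - t) * (φ s - φ t) + regularKernel L l (s, t) * φ s`. -/
noncomputable def regularizedIntegrand (L : ℝ) (l : ℝ → ℂ) (φ : ℝ → ℝ) (p : ℝ × ℝ) : ℝ :=
  (circleSlope L (fun x ↦ φ x) p *
      ((π / L : ℝ) * Complex.I * (circlePt L p.1 + circlePt L p.2))).re +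
    regularKernel L l p * φ p.1

theorem regularizedIntegrand_eq (hL : L ≠ 0) (l : ℝ → ℂ) (hφ : Function.Periodic φ L) {s t : ℝ}
    (h : circlePt L s ≠ circlePt L t) :
    regularizedIntegrand L l φ (s, t) =
      cotKernel L (s - t) * (φ s - φ t) + regularKernel L l (s, t) * φ s := by
  have hslope : (φ s - φ t : ℂ) =
      circleSlope L (fun x ↦ φ x) (s, t) * (circlePt L s - circlePt L t) :=
    (circleSlope_mul_sub hL (hφ.comp Complex.ofReal) s t).symm
  have hcot : ((cotKernel L (s - t) * (φ s - φ t) : ℝ) : ℂ) = circleSlope L (fun x ↦ φ x) (s, t) *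
      ((π / L : ℝ) * Complex.I * (circlePt L s + circlePt L t)) := by
    have := sub_ne_zero.2 h
    rw [Complex.ofReal_mul, Complex.ofReal_sub, hslope, ofReal_cotKernel_sub]
    field_simp
  rw [regularizedIntegrand, ← hcot, Complex.ofReal_re]

theorem contDiff_ofReal_comp (hφ : ContDiff ℝ ∞ φ) : ContDiff ℝ ∞ fun x ↦ (φ x : ℂ) :=
  Complex.ofRealCLM.contDiff.comp hφ

theorem isSmoothPeriodicKernel_circlePt_add (hL : L ≠ 0) : IsSmoothPeriodicKernel L
    fun p ↦ (π / L : ℝ) * Complex.I * (circlePt L p.1 + circlePt L p.2) := by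
  refine ⟨?_, fun t s ↦ ?_, fun s t ↦ ?_⟩
  · exact contDiff_const.mul (((contDiff_circlePt L).comp contDiff_fst).add
      ((contDiff_circlePt L).comp contDiff_snd))
  · simp only [circlePt_periodic hL s]
  · simp only [circlePt_periodic hL t]

theorem IsSimpleClosedCurve.isSmoothPeriodicKernel_regularizedIntegrand
    (hl : IsSimpleClosedCurve L l) (hφ : ContDiff ℝ ∞ φ) (hper : Function.Periodic φ L) :
    IsSmoothPeriodicKernel L (regularizedIntegrand L l φ) := by
  have hslope := isSmoothPeriodicKernel_circleSlope hl.pos (contDiff_ofReal_comp hφ)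
    (hper.comp Complex.ofReal)
  have hsum := isSmoothPeriodicKernel_circlePt_add hl.pos.ne'
  have hreg := hl.isSmoothPeriodicKernel_regularKernel
  refine ⟨?_, fun t s ↦ ?_, fun s t ↦ ?_⟩
  · exact (Complex.reCLM.contDiff.comp (hslope.contDiff.mul hsum.contDiff)).add
      (hreg.contDiff.mul (hφ.comp contDiff_fst))
  · exact congrArg₂ (· + ·) (congrArg Complex.re
      (congrArg₂ (· * ·) (hslope.periodic_left t s) (hsum.periodic_left t s)))
      (congrArg₂ (· * ·) (hreg.periodic_left t s) (hper s))
  · exact congrArg₂ (· + ·) (congrArg Complex.re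
      (congrArg₂ (· * ·) (hslope.periodic_right s t) (hsum.periodic_right s t)))
      (congrArg (· * φ s) (hreg.periodic_right s t))

theorem norm_iteratedDeriv_clm_comp_le {E F : Type*} [NormedAddCommGroup E] [NormedSpace ℝ E]
    [NormedAddCommGroup F] [NormedSpace ℝ F] (A : E →L[ℝ] F) {f : ℝ → E} {k : ℕ} {x : ℝ}
    (hf : ContDiffAt ℝ k f x) :
    ‖iteratedDeriv k (fun x ↦ A (f x)) x‖ ≤ ‖A‖ * ‖iteratedDeriv k f x‖ := by
  rw [← norm_iteratedFDeriv_eq_norm_iteratedDeriv, ← norm_iteratedFDeriv_eq_norm_iteratedDeriv]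
  exact A.norm_iteratedFDeriv_comp_left hf le_rfl

theorem exists_abs_iteratedDeriv_re_circleSlope_mul_le (hL : 0 < L) {Z : ℝ × ℝ → ℂ}
    (hZ : IsSmoothPeriodicKernel L Z) (k : ℕ) :
    ∃ C, ∀ φ : ℝ → ℝ, ContDiff ℝ ∞ φ → Function.Periodic φ L → ∀ B,
      (∀ i ≤ k + 1, ∀ x, |iteratedDeriv i φ x| ≤ B) →
      ∀ s t, |iteratedDeriv k (fun s ↦ (circleSlope L (fun x ↦ φ x) (s, t) * Z (s, t)).re) s| ≤
        C * B := by
  choose D hD using exists_norm_iteratedDeriv_circleSlope_le hL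
  obtain ⟨D', hD'⟩ := exists_forall_le_of_le D k
  obtain ⟨C, hC⟩ := hZ.exists_norm_iteratedDeriv_le hL k
  refine ⟨2 ^ k * (D' * C), fun φ hφ hper B hB s t ↦ ?_⟩
  have hB0 : 0 ≤ B := (abs_nonneg _).trans (hB 0 (Nat.zero_le _) 0)
  have hφc := contDiff_ofReal_comp hφ
  have hperc : Function.Periodic (fun x ↦ (φ x : ℂ)) L := hper.comp Complex.ofReal
  have hBc (i : ℕ) (hi : i ≤ k + 1) (x : ℝ) : ‖iteratedDeriv i (fun x ↦ (φ x : ℂ)) x‖ ≤ B :=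
    (norm_iteratedDeriv_clm_comp_le Complex.ofRealCLM (contDiff_infty.1 hφ i).contDiffAt).trans
      (by rw [Complex.ofRealCLM_norm, one_mul]; exact hB i hi x)
  have hslope := (isSmoothPeriodicKernel_circleSlope hL hφc hperc).contDiff_left t
  calc |iteratedDeriv k (fun s ↦ (circleSlope L (fun x ↦ φ x) (s, t) * Z (s, t)).re) s|
      ≤ ‖iteratedDeriv k (fun s ↦ circleSlope L (fun x ↦ φ x) (s, t) * Z (s, t)) s‖ :=
        (norm_iteratedDeriv_clm_comp_le Complex.reCLM
          (contDiff_infty.1 (hslope.mul (hZ.contDiff_left t)) k).contDiffAt).trans_eq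
          (by rw [Complex.reCLM_norm, one_mul])
    _ ≤ 2 ^ k * (D' * B * C) :=
        norm_iteratedDeriv_mul_le_of_le (contDiff_infty.1 hslope k).contDiffAt
          (contDiff_infty.1 (hZ.contDiff_left t) k).contDiffAt
          (fun i hi ↦ (hD i _ hφc hperc B (fun j hj ↦ hBc j (by lia)) s t).trans
            (mul_le_mul_of_nonneg_right (hD' i hi) hB0)) fun i hi ↦ hC i hi s t
    _ = 2 ^ k * (D' * C) * B := by ring

theorem IsSimpleClosedCurve.exists_abs_iteratedDeriv_regularizedIntegrand_le
    (hl : IsSimpleClosedCurve L l) (k : ℕ) :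
    ∃ C, ∀ φ : ℝ → ℝ, ContDiff ℝ ∞ φ → Function.Periodic φ L → ∀ B,
      (∀ i ≤ k + 1, ∀ x, |iteratedDeriv i φ x| ≤ B) →
      ∀ s t, |iteratedDeriv k (fun s ↦ regularizedIntegrand L l φ (s, t)) s| ≤ C * B := by
  have hsum := isSmoothPeriodicKernel_circlePt_add hl.pos.ne'
  have hreg := hl.isSmoothPeriodicKernel_regularKernel
  obtain ⟨D, hD⟩ := exists_abs_iteratedDeriv_re_circleSlope_mul_le hl.pos hsum k
  obtain ⟨R, hR⟩ := hreg.exists_norm_iteratedDeriv_le hl.pos k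
  refine ⟨D + 2 ^ k * R, fun φ hφ hper B hB s t ↦ ?_⟩
  have hsing := Complex.reCLM.contDiff.comp
    (((isSmoothPeriodicKernel_circleSlope hl.pos (contDiff_ofReal_comp hφ)
      (hper.comp Complex.ofReal)).contDiff_left t).mul (hsum.contDiff_left t))
  have hrest := (hreg.contDiff_left t).mul hφ
  have hrest_le := norm_iteratedDeriv_mul_le_of_le
    (contDiff_infty.1 (hreg.contDiff_left t) k).contDiffAt (contDiff_infty.1 hφ k).contDiffAt
    (fun i hi ↦ hR i hi s t) fun i hi ↦ hB i (by lia) s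
  calc |iteratedDeriv k (fun s ↦ regularizedIntegrand L l φ (s, t)) s|
      ≤ D * B + 2 ^ k * (R * B) := by
        refine (congrArg abs (iteratedDeriv_fun_add (contDiff_infty.1 hsing k).contDiffAt
          (contDiff_infty.1 hrest k).contDiffAt)).trans_le ?_
        exact (abs_add_le _ _).trans (add_le_add (hD φ hφ hper B hB s t) hrest_le)
    _ = (D + 2 ^ k * R) * B := by ring

/-- The principal value integral `t ↦ p.v. ∫ tangentialKernel l s t * φ s ds`, computed with the
singularity subtracted. -/
noncomputable def pvTransform (L : ℝ) (l : ℝ → ℂ) (φ : ℝ → ℝ) (t : ℝ) : ℝ :=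
  ∫ s in (0 : ℝ)..L, regularizedIntegrand L l φ (s, t)

end RegularizedIntegrand

/-! ### Quadrature on well distributed meshes -/

section Quadrature

theorem abs_sub_le_of_abs_deriv_le {w : ℝ → ℝ} (hw : Differentiable ℝ w) {B : ℝ}
    (hB : ∀ x, |deriv w x| ≤ B) (x y : ℝ) : |w x - w y| ≤ B * |x - y| :=
  convex_univ.norm_image_sub_le_of_norm_deriv_le (fun x _ ↦ hw x) (fun x _ ↦ hB x)
    (Set.mem_univ y) (Set.mem_univ x)

theorem abs_deriv_le_of_periodic {h : ℝ} (hh : 0 < h) (j : ℕ) {w : ℝ → ℝ}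
    (hw : ContDiff ℝ (j + 1 : ℕ) w) (hper : Function.Periodic w h) {D : ℝ}
    (hD : ∀ x, |iteratedDeriv (j + 1) w x| ≤ D) (x : ℝ) : |deriv w x| ≤ h ^ j * D := by
  induction j generalizing w x with
  | zero => simpa only [zero_add, iteratedDeriv_one, pow_zero, one_mul] using hD x
  | succ j ih =>
    have hderiv : ContDiff ℝ (j + 1 : ℕ) (deriv w) :=
      (contDiff_succ_iff_deriv.1 (by exact_mod_cast hw)).2.2
    simp only [iteratedDeriv_succ' (n := j + 1)] at hD
    have hsecond := ih hderiv (periodic_deriv hper) hD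
    obtain ⟨c, hc, hc0⟩ := exists_deriv_eq_zero (lt_add_of_pos_right x hh)
      hw.continuous.continuousOn (hper x).symm
    calc |deriv w x| = |deriv w x - deriv w c| := by rw [hc0, sub_zero]
      _ ≤ h ^ j * D * |x - c| :=
        abs_sub_le_of_abs_deriv_le (hderiv.differentiable (by simp)) hsecond x c
      _ ≤ h ^ j * D * h := by
        have := (abs_nonneg _).trans (hsecond x)
        gcongr
        rw [abs_sub_comm, abs_of_pos (sub_pos.2 hc.1)]
        linarith [hc.2]
      _ = h ^ (j + 1) * D := by ring

/-- The Riemann sum of `w` over the `N` points `y, y + h, …, y + (N - 1) h`. -/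
noncomputable def riemannSum (w : ℝ → ℝ) (N : ℕ) (h y : ℝ) : ℝ :=
  h * ∑ m ∈ Finset.range N, w (y + m * h)

variable {w : ℝ → ℝ} {N : ℕ} {h : ℝ}

theorem periodic_riemannSum (hper : Function.Periodic w (N * h)) :
    Function.Periodic (riemannSum w N h) h := fun y ↦ by
  have hshift (m : ℕ) : w (y + h + m * h) = w (y + (m + 1 : ℕ) * h) := by
    congr 1
    push_cast
    ring
  simp only [riemannSum, hshift]
  congr 1
  refine add_right_cancel ((Finset.sum_range_succ' (fun m : ℕ ↦ w (y + m * h)) N).symm.trans ?_)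
  rw [Finset.sum_range_succ, hper y, Nat.cast_zero, zero_mul, add_zero]

theorem contDiff_riemannSum {k : ℕ} (hw : ContDiff ℝ k w) : ContDiff ℝ k (riemannSum w N h) :=
  contDiff_const.mul (ContDiff.sum fun _ _ ↦ hw.comp (by fun_prop))

theorem abs_iteratedDeriv_riemannSum_le (hh : 0 ≤ h) {k : ℕ} (hw : ContDiff ℝ k w) {B : ℝ}
    (hB : ∀ x, |iteratedDeriv k w x| ≤ B) (y : ℝ) :
    |iteratedDeriv k (riemannSum w N h) y| ≤ N * h * B := by
  have hsmooth (m : ℕ) : ContDiff ℝ k fun y ↦ w (y + m * h) := hw.comp (by fun_prop)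
  have hsum : |∑ m ∈ Finset.range N, iteratedDeriv k (fun y ↦ w (y + m * h)) y| ≤ N * B := by
    refine (Finset.abs_sum_le_sum_abs _ _).trans ?_
    simpa using Finset.sum_le_card_nsmul (Finset.range N) _ B fun m _ ↦ by
      simpa only [iteratedDeriv_comp_add_const] using hB _
  calc |iteratedDeriv k (riemannSum w N h) y|
      = h * |∑ m ∈ Finset.range N, iteratedDeriv k (fun y ↦ w (y + m * h)) y| := by
        unfold riemannSum
        rw [iteratedDeriv_const_mul_field, iteratedDeriv_fun_sum fun m _ ↦ (hsmooth m).contDiffAt,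
          abs_mul, abs_of_nonneg hh]
    _ ≤ h * (N * B) := by gcongr
    _ = N * h * B := by ring

theorem integral_riemannSum (hw : Continuous w) (N : ℕ) (h : ℝ) :
    ∫ y in (0 : ℝ)..h, riemannSum w N h y = h * ∫ x in (0 : ℝ)..(N * h), w x := by
  have hcont (m : ℕ) : Continuous fun y ↦ w (y + m * h) := by fun_prop
  have hadj := intervalIntegral.sum_integral_adjacent_intervals (a := fun m : ℕ ↦ m * h) (n := N)
    fun _ _ ↦ hw.intervalIntegrable (μ := volume) _ _
  rw [Nat.cast_zero, zero_mul] at hadj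
  simp only [riemannSum]
  rw [intervalIntegral.integral_const_mul, ← hadj, intervalIntegral.integral_finsetSum
    fun m _ ↦ (hcont m).intervalIntegrable _ _]
  congr 1
  refine Finset.sum_congr rfl fun m _ ↦ ?_
  rw [intervalIntegral.integral_comp_add_right, zero_add, Nat.cast_succ, add_one_mul, add_comm h]

-- A Riemann sum over a full period is `h`-periodic in its offset, so all its derivatives of order
-- less than `j + 1` vanish somewhere, and it differs little from its mean.
theorem abs_riemannSum_sub_integral_le (hh : 0 < h) {j : ℕ} (hw : ContDiff ℝ (j + 1 : ℕ) w)
    (hper : Function.Periodic w (N * h)) {B : ℝ} (hB : ∀ x, |iteratedDeriv (j + 1) w x| ≤ B)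
    {y : ℝ} (hy : y ∈ Set.Icc 0 h) :
    |riemannSum w N h y - ∫ x in (0 : ℝ)..(N * h), w x| ≤ h ^ (j + 1) * (N * h * B) := by
  have hW := contDiff_riemannSum (N := N) (h := h) hw
  have hderiv := abs_deriv_le_of_periodic hh j hW (periodic_riemannSum hper)
    (abs_iteratedDeriv_riemannSum_le hh.le hw hB)
  have hmean := intervalIntegral.norm_integral_le_of_norm_le_const (a := 0) (b := h)
    (f := fun x ↦ riemannSum w N h y - riemannSum w N h x) (C := h ^ j * (N * h * B) * h)
    fun x hx ↦ by
      rw [Set.uIoc_of_le hh.le] at hx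
      have := (abs_nonneg _).trans (hderiv 0)
      refine (abs_sub_le_of_abs_deriv_le (hW.differentiable (by simp)) hderiv y x).trans ?_
      gcongr
      rw [abs_le]
      constructor <;> linarith [hx.1, hx.2, hy.1, hy.2]
  rw [intervalIntegral.integral_sub (by simp) (hW.continuous.intervalIntegrable _ _),
    integral_riemannSum hw.continuous, intervalIntegral.integral_const, sub_zero, smul_eq_mul,
    ← mul_sub, norm_mul, abs_of_pos hh, Real.norm_of_nonneg hh.le, mul_comm] at hmean
  refine (le_of_mul_le_mul_right hmean hh).trans_eq ?_
  ring

theorem abs_sum_midpoint_sub_integral_le {L : ℝ} (hL : 0 < L) {κ : ℕ} (hκ : κ ≠ 0)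
    (hw : ContDiff ℝ κ w) (hper : Function.Periodic w L) {B : ℝ}
    (hB : ∀ x, |iteratedDeriv κ w x| ≤ B) (hN : N ≠ 0) :
    |L / N * ∑ i : Fin N, w ((i + 1 / 2) * L / N) - ∫ x in (0 : ℝ)..L, w x| ≤
      L ^ κ * L / N ^ κ * B := by
  obtain ⟨j, rfl⟩ := Nat.exists_eq_add_one_of_ne_zero hκ
  have hNL : (N : ℝ) * (L / N) = L := mul_div_cancel₀ L (by exact_mod_cast hN)
  have hh : 0 < L / N := by positivity
  have hsum : L / N * ∑ i : Fin N, w ((i + 1 / 2) * L / N) =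
      riemannSum w N (L / N) (L / N / 2) := by
    rw [riemannSum, ← Fin.sum_univ_eq_sum_range fun m ↦ w (L / N / 2 + m * (L / N))]
    congr! 3
    ring
  have hgrid := abs_riemannSum_sub_integral_le hh hw (by rwa [hNL]) hB
    ⟨(half_pos hh).le, half_le_self hh.le⟩
  rw [hNL, ← hsum] at hgrid
  exact hgrid.trans_eq (by rw [div_pow]; ring)

theorem abs_sum_sub_integral_le {L : ℝ} (hL : 0 < L) {κ : ℕ} (hκ : κ ≠ 0)
    (hw : ContDiff ℝ κ w) (hper : Function.Periodic w L) {B : ℝ} (hB₁ : ∀ x, |deriv w x| ≤ B)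
    (hB : ∀ x, |iteratedDeriv κ w x| ≤ B) (hN : N ≠ 0) {M : ℝ} {x : Fin N → ℝ}
    (hx : ∀ i : Fin N, |x i - (i + 1 / 2) * L / N| ≤ M / N ^ (κ + 1)) :
    |L / N * ∑ i, w (x i) - ∫ x in (0 : ℝ)..L, w x| ≤ L * (L ^ κ + M) / N ^ κ * B := by
  have hN' : (1 : ℝ) ≤ N := by exact_mod_cast Nat.one_le_iff_ne_zero.2 hN
  have hB0 : 0 ≤ B := (abs_nonneg _).trans (hB 0)
  have hM : 0 ≤ M / N ^ (κ + 1) :=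
    (abs_nonneg _).trans (hx ⟨0, Nat.pos_of_ne_zero hN⟩)
  have hshift : |L / N * ∑ i, w (x i) - L / N * ∑ i : Fin N, w ((i + 1 / 2) * L / N)| ≤
      L * M / N ^ κ * B :=
    calc |L / N * ∑ i, w (x i) - L / N * ∑ i : Fin N, w ((i + 1 / 2) * L / N)|
        ≤ L / N * ∑ _i : Fin N, B * (M / N ^ (κ + 1)) := by
          rw [← mul_sub, ← Finset.sum_sub_distrib, abs_mul, abs_of_pos (by positivity)]
          gcongr
          refine (Finset.abs_sum_le_sum_abs _ _).trans (Finset.sum_le_sum fun i _ ↦ ?_)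
          exact (abs_sub_le_of_abs_deriv_le (hw.differentiable (by simpa using hκ)) hB₁ _ _).trans
            (mul_le_mul_of_nonneg_left (hx i) hB0)
      _ = L * B * (M / N ^ (κ + 1)) := by
          rw [Finset.sum_const, Finset.card_univ, Fintype.card_fin, nsmul_eq_mul]
          field_simp
      _ ≤ L * B * (M / N ^ (κ + 1) * N) := by
          gcongr
          exact le_mul_of_one_le_right hM hN'
      _ = L * M / N ^ κ * B := by
          rw [pow_succ]
          field_simp
  refine (abs_sub_le _ _ _).trans ((add_le_add hshift
    (abs_sum_midpoint_sub_integral_le hL hκ hw hper hB hN)).trans_eq ?_)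
  ring

end Quadrature

section CotangentMatrix

theorem sum_range_add_of_periodic {N : ℕ} {F : ℤ → ℝ} (hF : Function.Periodic F N) (j : ℤ) :
    ∑ i ∈ Finset.range N, F (i + j) = ∑ i ∈ Finset.range N, F i := by
  have hstep (j : ℤ) : ∑ i ∈ Finset.range N, F (i + (j + 1)) = ∑ i ∈ Finset.range N, F (i + j) := by
    have hlast := Finset.sum_range_succ (fun m : ℕ ↦ F (m + j)) N
    have hfirst := Finset.sum_range_succ' (fun m : ℕ ↦ F (m + j)) N
    simp only [Nat.cast_add_one, add_assoc, add_comm (1 : ℤ), Nat.cast_zero, zero_add] at hfirst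
    rw [add_comm (N : ℤ), hF] at hlast
    linarith
  induction j with
  | zero => simp only [add_zero]
  | succ i ih => rw [hstep, ih]
  | pred i ih => rw [← hstep, sub_add_cancel, ih]

/-- The values of `cot (π x / N)` at the half-integers `x = m + 1/2`: up to the factor `π / L`,
the cotangent kernel between the ideal collocation point and node whose indices differ by `m`. -/
noncomputable def gridCot (N : ℕ) (m : ℤ) : ℝ := Real.cot (π * (m + 1 / 2) / N)

theorem sin_pi_mul_div_ne_zero {N : ℕ} (hN : N ≠ 0) {x : ℝ} (hx : ∀ n : ℤ, x ≠ n * N) :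
    Real.sin (π * x / N) ≠ 0 := by
  rw [Real.sin_ne_zero_iff]
  intro n hn
  refine hx n ?_
  field_simp at hn
  exact hn.symm

theorem sin_gridCot_ne_zero {N : ℕ} (hN : N ≠ 0) (m : ℤ) :
    Real.sin (π * (m + 1 / 2) / N) ≠ 0 := by
  refine sin_pi_mul_div_ne_zero hN fun n hn ↦ ?_
  have : 2 * m + 1 = 2 * (n * N) := by
    rify
    linarith
  lia

theorem periodic_gridCot {N : ℕ} (hN : N ≠ 0) : Function.Periodic (gridCot N) N := fun m ↦ by
  have harg : π * ((m + N : ℤ) + 1 / 2) / N = π * (m + 1 / 2) / N + π := by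
    push_cast
    field_simp
    ring
  rw [gridCot, gridCot, harg, Real.cot_eq_cos_div_sin, Real.cot_eq_cos_div_sin, Real.cos_add_pi,
    Real.sin_add_pi, neg_div_neg_eq]

theorem gridCot_neg_one_sub (N : ℕ) (m : ℤ) : gridCot N (-1 - m) = -gridCot N m := by
  have harg : π * ((-1 - m : ℤ) + 1 / 2) / N = -(π * (m + 1 / 2) / N) := by
    push_cast
    ring
  rw [gridCot, gridCot, harg, Real.cot_eq_cos_div_sin, Real.cot_eq_cos_div_sin, Real.cos_neg,
    Real.sin_neg, div_neg]

variable {N : ℕ}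

theorem sum_range_gridCot (hN : N ≠ 0) : ∑ i ∈ Finset.range N, gridCot N i = 0 := by
  have hreflect := Finset.sum_range_reflect (fun i : ℕ ↦ gridCot N i) N
  have hneg : ∑ i ∈ Finset.range N, gridCot N (N - 1 - i : ℕ) =
      ∑ i ∈ Finset.range N, -gridCot N i := by
    refine Finset.sum_congr rfl fun i hi ↦ ?_
    have := Finset.mem_range.1 hi
    rw [← gridCot_neg_one_sub, ← periodic_gridCot hN (-1 - i)]
    congr 1
    lia
  rw [Finset.sum_neg_distrib] at hneg
  linarith

theorem sum_gridCot_sub (hN : N ≠ 0) (j : ℤ) : ∑ i : Fin N, gridCot N (i.1 - j) = 0 := by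
  rw [Fin.sum_univ_eq_sum_range (fun i ↦ gridCot N (i - j)) N]
  simpa only [← sub_eq_add_neg, sum_range_gridCot hN] using
    sum_range_add_of_periodic (periodic_gridCot hN) (-j)

theorem sum_gridCot_sub' (hN : N ≠ 0) (i : ℤ) : ∑ j : Fin N, gridCot N (i - j.1) = 0 := by
  have hswap (j : Fin N) : gridCot N (i - j.1) = -gridCot N (j.1 - (i + 1)) := by
    rw [← gridCot_neg_one_sub]
    congr 1
    ring
  simp only [hswap, Finset.sum_neg_distrib, sum_gridCot_sub hN, neg_zero]

theorem cot_mul_cot {x y : ℝ} (hx : Real.sin x ≠ 0) (hy : Real.sin y ≠ 0)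
    (hxy : Real.sin (x - y) ≠ 0) :
    Real.cot x * Real.cot y = Real.cot (x - y) * (Real.cot y - Real.cot x) - 1 := by
  simp only [Real.cot_eq_cos_div_sin]
  rw [div_sub_div _ _ hy hx, mul_comm (Real.cos y), mul_comm (Real.sin y), ← Real.sin_sub,
    div_mul_div_cancel₀ hxy, Real.cos_sub]
  field_simp
  ring

theorem sum_gridCot_mul_gridCot_of_ne (hN : N ≠ 0) {j k : Fin N} (hjk : j ≠ k) :
    ∑ i : Fin N, gridCot N (i.1 - j.1) * gridCot N (i.1 - k.1) = -N := by
  have hsin : Real.sin (π * (k.1 - j.1) / N) ≠ 0 := by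
    refine sin_pi_mul_div_ne_zero hN fun n hn ↦ hjk (Fin.ext ?_)
    have hdvd : (N : ℤ) ∣ k.1 - j.1 := ⟨n, by rify; linarith⟩
    have hmod : j.1 ≡ k.1 [MOD N] := (Nat.modEq_iff_dvd (n := N)).2 hdvd
    exact hmod.eq_of_lt_of_lt j.2 k.2
  have hmul (i : Fin N) : gridCot N (i.1 - j.1) * gridCot N (i.1 - k.1) =
      Real.cot (π * (k.1 - j.1) / N) * (gridCot N (i.1 - k.1) - gridCot N (i.1 - j.1)) - 1 := by
    have harg : π * (k.1 - j.1) / N = π * ((i.1 - j.1 : ℤ) + 1 / 2) / N -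
        π * ((i.1 - k.1 : ℤ) + 1 / 2) / N := by
      push_cast
      ring
    rw [harg] at hsin ⊢
    exact cot_mul_cot (sin_gridCot_ne_zero hN _) (sin_gridCot_ne_zero hN _) hsin
  simp only [hmul, Finset.sum_sub_distrib, ← Finset.mul_sum, sum_gridCot_sub hN, sub_zero,
    mul_zero, zero_sub, Finset.sum_const, Finset.card_univ, Fintype.card_fin, nsmul_eq_mul, mul_one]

theorem sum_gridCot_sq (hN : N ≠ 0) (j : Fin N) :
    ∑ i : Fin N, gridCot N (i.1 - j.1) ^ 2 = N ^ 2 - N := by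
  have hrow : ∑ k : Fin N, ∑ i : Fin N, gridCot N (i.1 - j.1) * gridCot N (i.1 - k.1) = 0 := by
    rw [Finset.sum_comm]
    simp only [← Finset.mul_sum, sum_gridCot_sub' hN, mul_zero, Finset.sum_const_zero]
  have hoff : ∑ k ∈ Finset.univ.erase j, ∑ i : Fin N,
      gridCot N (i.1 - j.1) * gridCot N (i.1 - k.1) = (N - 1) * -N := by
    rw [Finset.sum_congr rfl fun k hk ↦
        sum_gridCot_mul_gridCot_of_ne hN (Finset.ne_of_mem_erase hk).symm,
      Finset.sum_const, Finset.card_erase_of_mem (Finset.mem_univ j), Finset.card_univ,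
      Fintype.card_fin, nsmul_eq_mul, Nat.cast_pred (Nat.pos_of_ne_zero hN)]
  rw [← Finset.add_sum_erase _ _ (Finset.mem_univ j), hoff] at hrow
  simp only [← sq] at hrow
  linarith

theorem sum_gridCot_mul_gridCot (hN : N ≠ 0) (j k : Fin N) :
    ∑ i : Fin N, gridCot N (i.1 - j.1) * gridCot N (i.1 - k.1) =
      (if j = k then (N : ℝ) ^ 2 else 0) - N := by
  split_ifs with h
  · rw [← h, ← sum_gridCot_sq hN j]
    simp only [sq]
  · rw [sum_gridCot_mul_gridCot_of_ne hN h, zero_sub]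

theorem sum_sq_sum_gridCot_mul (hN : N ≠ 0) (g : Fin N → ℝ) :
    ∑ i : Fin N, ((N : ℝ)⁻¹ * ∑ j : Fin N, gridCot N (i.1 - j.1) * g j) ^ 2 =
      ∑ j, g j ^ 2 - N * ((N : ℝ)⁻¹ * ∑ j, g j) ^ 2 := by
  have hexpand : ∑ i : Fin N, (∑ j : Fin N, gridCot N (i.1 - j.1) * g j) ^ 2 =
      ∑ j, ∑ k, (∑ i : Fin N, gridCot N (i.1 - j.1) * gridCot N (i.1 - k.1)) * (g j * g k) := by
    simp only [sq, Finset.sum_mul_sum, mul_mul_mul_comm _ (g _)]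
    simp only [Finset.sum_mul]
    rw [Finset.sum_comm]
    exact Finset.sum_congr rfl fun j _ ↦ Finset.sum_comm
  simp only [sum_gridCot_mul_gridCot hN, sub_mul, ite_mul, zero_mul, Finset.sum_sub_distrib,
    Finset.sum_ite_eq, Finset.mem_univ, if_true, ← Finset.mul_sum, ← Finset.sum_mul, ← sq]
    at hexpand
  simp only [mul_pow, ← Finset.mul_sum, hexpand]
  field_simp

theorem sum_one_add_gridCot_sq (hN : N ≠ 0) (j : Fin N) :
    ∑ i : Fin N, (1 + gridCot N (i.1 - j.1) ^ 2) = (N : ℝ) ^ 2 := by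
  rw [Finset.sum_add_distrib, sum_gridCot_sq hN, Finset.sum_const, Finset.card_univ,
    Fintype.card_fin, nsmul_eq_mul, mul_one, add_sub_cancel]

theorem sum_one_add_gridCot_sq' (hN : N ≠ 0) (i : ℤ) :
    ∑ j : Fin N, (1 + gridCot N (i - j.1) ^ 2) = (N : ℝ) ^ 2 := by
  have hper : Function.Periodic (fun m ↦ 1 + gridCot N m ^ 2) N := fun m ↦ by
    simp only [periodic_gridCot hN m]
  have hcol := sum_one_add_gridCot_sq hN ⟨0, Nat.pos_of_ne_zero hN⟩
  rw [Nat.cast_zero, Fin.sum_univ_eq_sum_range (fun i ↦ 1 + gridCot N (i - (0 : ℤ)) ^ 2) N] at hcol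
  rw [Fin.sum_univ_eq_sum_range (fun j ↦ 1 + gridCot N (i - j) ^ 2) N, ← hcol]
  simp only [sub_zero]
  rw [← sum_range_add_of_periodic hper (-1 - i)]
  refine Finset.sum_congr rfl fun j _ ↦ ?_
  rw [← neg_sq, ← gridCot_neg_one_sub]
  congr 3
  ring

theorem half_abs_sin_le_abs_sin {a b : ℝ} (h : |a - b| ≤ |Real.sin b| / 2) :
    |Real.sin b| / 2 ≤ |Real.sin a| := by
  have := abs_sub_abs_le_abs_sub (Real.sin b) (Real.sin a)
  have := Real.abs_sin_sub_sin_le b a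
  rw [abs_sub_comm a] at h
  linarith

theorem one_add_cot_sq {x : ℝ} (hx : Real.sin x ≠ 0) :
    1 + Real.cot x ^ 2 = 1 / |Real.sin x| ^ 2 := by
  rw [sq_abs, Real.cot_eq_cos_div_sin]
  field_simp
  exact Real.sin_sq_add_cos_sq x

theorem abs_cot_sub_cot_le {a b : ℝ} (hb : Real.sin b ≠ 0) (h : |a - b| ≤ |Real.sin b| / 2) :
    |Real.cot a - Real.cot b| ≤ 2 * |a - b| * (1 + Real.cot b ^ 2) := by
  have hab := half_abs_sin_le_abs_sin h
  have hb' : 0 < |Real.sin b| := abs_pos.2 hb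
  have ha : Real.sin a ≠ 0 := abs_pos.1 ((half_pos hb').trans_le hab)
  have hdiff : Real.cot a - Real.cot b = Real.sin (b - a) / (Real.sin a * Real.sin b) := by
    rw [Real.sin_sub, Real.cot_eq_cos_div_sin, Real.cot_eq_cos_div_sin]
    field_simp
  rw [hdiff, one_add_cot_sq hb, abs_div, abs_mul]
  calc |Real.sin (b - a)| / (|Real.sin a| * |Real.sin b|)
      ≤ |a - b| / (|Real.sin b| / 2 * |Real.sin b|) := by
        rw [abs_sub_comm a]
        exact div_le_div₀ (abs_nonneg _) Real.abs_sin_le_abs (by positivity) (by gcongr)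
    _ = 2 * |a - b| * (1 / |Real.sin b| ^ 2) := by field_simp

end CotangentMatrix

section Mesh

/-- The nodes `s` and the collocation points `st` of a well distributed mesh of size `N`: up to
`M / N ^ (κ + 1)` they are the points of the uniform grid of `[0, L]` and their midpoints. -/
structure IsWellDistributed (L : ℝ) (κ : ℕ) (M : ℝ) {N : ℕ} (s st : Fin N → ℝ) : Prop where
  node (i : Fin N) : |s i - i * L / N| ≤ M / N ^ (κ + 1)
  collocation (i : Fin N) : |st i - (i + 1 / 2) * L / N| ≤ M / N ^ (κ + 1)

theorem one_div_le_abs_sin_grid {N : ℕ} (hN : N ≠ 0) (i j : Fin N) :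
    1 / N ≤ |Real.sin (π * ((i.1 - j.1 : ℤ) + 1 / 2) / N)| := by
  have hsin := sin_gridCot_ne_zero hN (i.1 - j.1)
  have hcsc : 1 + gridCot N (i.1 - j.1) ^ 2 ≤ (N : ℝ) ^ 2 := by
    rw [← sum_one_add_gridCot_sq hN j]
    exact Finset.single_le_sum (f := fun i : Fin N ↦ 1 + gridCot N (i.1 - j.1) ^ 2)
      (fun _ _ ↦ by positivity) (Finset.mem_univ i)
  rw [gridCot, one_add_cot_sq hsin, ← one_div_pow] at hcsc
  exact one_div_le (abs_pos.2 hsin) (by positivity) |>.1 (le_of_sq_le_sq hcsc (by positivity))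

namespace IsWellDistributed

variable {L : ℝ} {κ N : ℕ} {M : ℝ} {s st : Fin N → ℝ}

theorem abs_angle_sub_le (hmesh : IsWellDistributed L κ M s st) (hL : 0 < L) (i j : Fin N) :
    |π * (st i - s j) / L - π * ((i.1 - j.1 : ℤ) + 1 / 2) / N| ≤ 2 * π * M / L / N ^ (κ + 1) := by
  have hsplit : π * (st i - s j) / L - π * ((i.1 - j.1 : ℤ) + 1 / 2) / N =
      π / L * ((st i - (i + 1 / 2) * L / N) - (s j - j * L / N)) := by
    push_cast
    field_simp
    ring
  rw [hsplit, abs_mul, abs_of_pos (by positivity)]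
  calc π / L * |(st i - (i + 1 / 2) * L / N) - (s j - j * L / N)|
      ≤ π / L * (M / N ^ (κ + 1) + M / N ^ (κ + 1)) := by
        gcongr
        exact (abs_sub _ _).trans (add_le_add (hmesh.collocation i) (hmesh.node j))
    _ = 2 * π * M / L / N ^ (κ + 1) := by ring

theorem abs_angle_sub_le_half_abs_sin (hmesh : IsWellDistributed L κ M s st) (hL : 0 < L)
    (hN : N ≠ 0) (hNM : 4 * π * M / L ≤ N ^ κ) (i j : Fin N) :
    |π * (st i - s j) / L - π * ((i.1 - j.1 : ℤ) + 1 / 2) / N| ≤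
      |Real.sin (π * ((i.1 - j.1 : ℤ) + 1 / 2) / N)| / 2 :=
  calc |π * (st i - s j) / L - π * ((i.1 - j.1 : ℤ) + 1 / 2) / N|
      ≤ 2 * π * M / L / N ^ (κ + 1) := hmesh.abs_angle_sub_le hL i j
    _ = 4 * π * M / L / (2 * N ^ (κ + 1)) := by ring
    _ ≤ N ^ κ / (2 * N ^ (κ + 1)) := by gcongr
    _ = 1 / N / 2 := by
        rw [pow_succ]
        field_simp
    _ ≤ |Real.sin (π * ((i.1 - j.1 : ℤ) + 1 / 2) / N)| / 2 := by
        gcongr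
        exact one_div_le_abs_sin_grid hN i j

theorem circlePt_ne (hmesh : IsWellDistributed L κ M s st) (hL : 0 < L) (hN : N ≠ 0)
    (hNM : 4 * π * M / L ≤ N ^ κ) (i j : Fin N) : circlePt L (st i) ≠ circlePt L (s j) := by
  have hsin := abs_pos.2 (sin_gridCot_ne_zero hN (i.1 - j.1))
  have hhalf := half_abs_sin_le_abs_sin (hmesh.abs_angle_sub_le_half_abs_sin hL hN hNM i j)
  exact circlePt_ne_iff_sin_ne_zero.2 (abs_pos.1 ((half_pos hsin).trans_le hhalf))

theorem abs_cotKernel_sub_gridCot_le (hmesh : IsWellDistributed L κ M s st) (hL : 0 < L)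
    (hN : N ≠ 0) (hNM : 4 * π * M / L ≤ N ^ κ) (i j : Fin N) :
    |cotKernel L (st i - s j) - π / L * gridCot N (i.1 - j.1)| ≤
      4 * π ^ 2 * M / L ^ 2 / N ^ (κ + 1) * (1 + gridCot N (i.1 - j.1) ^ 2) := by
  have hcot := abs_cot_sub_cot_le (sin_gridCot_ne_zero hN _)
    (hmesh.abs_angle_sub_le_half_abs_sin hL hN hNM i j)
  rw [cotKernel, ← mul_sub, abs_mul, abs_of_pos (by positivity)]
  calc π / L * |Real.cot (π * (st i - s j) / L) - gridCot N (i.1 - j.1)|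
      ≤ π / L * (2 * (2 * π * M / L / N ^ (κ + 1)) * (1 + gridCot N (i.1 - j.1) ^ 2)) := by
        refine mul_le_mul_of_nonneg_left (hcot.trans ?_) (by positivity)
        refine mul_le_mul_of_nonneg_right ?_ (by positivity)
        gcongr
        exact hmesh.abs_angle_sub_le hL i j
    _ = 4 * π ^ 2 * M / L ^ 2 / N ^ (κ + 1) * (1 + gridCot N (i.1 - j.1) ^ 2) := by ring

theorem abs_sum_cotKernel_le (hmesh : IsWellDistributed L κ M s st) (hL : 0 < L)
    (hN : N ≠ 0) (hNM : 4 * π * M / L ≤ N ^ κ) (j : Fin N) :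
    |L / N * ∑ i, cotKernel L (st i - s j)| ≤ 4 * π ^ 2 * M / L / N ^ κ := by
  have hsum : ∑ i, cotKernel L (st i - s j) =
      ∑ i, (cotKernel L (st i - s j) - π / L * gridCot N (i.1 - j.1)) := by
    rw [Finset.sum_sub_distrib, ← Finset.mul_sum, sum_gridCot_sub hN, mul_zero, sub_zero]
  rw [hsum, abs_mul, abs_of_pos (by positivity)]
  calc L / N * |∑ i, (cotKernel L (st i - s j) - π / L * gridCot N (i.1 - j.1))|
      ≤ L / N * ∑ i : Fin N,
          4 * π ^ 2 * M / L ^ 2 / N ^ (κ + 1) * (1 + gridCot N (i.1 - j.1) ^ 2) := by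
        gcongr
        exact (Finset.abs_sum_le_sum_abs _ _).trans (Finset.sum_le_sum fun i _ ↦
          hmesh.abs_cotKernel_sub_gridCot_le hL hN hNM i j)
    _ = 4 * π ^ 2 * M / L / N ^ κ := by
        rw [← Finset.mul_sum, sum_one_add_gridCot_sq hN, pow_succ (N : ℝ) κ]
        field_simp

theorem abs_node_sub_node_le (hmesh : IsWellDistributed L κ M s st) (hL : 0 < L) (hN : N ≠ 0)
    (hNM : 4 * π * M / L ≤ N ^ κ) (i j : Fin N) :
    |s i - s j - (i - j : ℤ) * (L / N)| < L / N := by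
  have hM : 2 * M / L < N ^ κ := by
    have : 2 * M / L * (2 * π) ≤ N ^ κ := le_of_eq_of_le (by ring) hNM
    have hpow : (0 : ℝ) < N ^ κ := by positivity
    nlinarith [Real.pi_gt_three]
  calc |s i - s j - (i - j : ℤ) * (L / N)|
      = |(s i - i * L / N) - (s j - j * L / N)| := by
        push_cast
        ring_nf
    _ ≤ M / N ^ (κ + 1) + M / N ^ (κ + 1) :=
        (abs_sub _ _).trans (add_le_add (hmesh.node i) (hmesh.node j))
    _ = 2 * M / L * (L / N ^ (κ + 1)) := by
        field_simp
        ring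
    _ < N ^ κ * (L / N ^ (κ + 1)) := by gcongr
    _ = L / N := by
        rw [pow_succ]
        field_simp

theorem injective_circlePt_node (hmesh : IsWellDistributed L κ M s st) (hL : 0 < L) (hN : N ≠ 0)
    (hNM : 4 * π * M / L ≤ N ^ κ) : Function.Injective fun j ↦ circlePt L (s j) := by
  intro i j hij
  by_contra hne
  have hclose := hmesh.abs_node_sub_node_le hL hN hNM i j
  set m : ℤ := i - j with hm
  have hone : (1 : ℝ) ≤ |(m : ℝ)| := by
    exact_mod_cast Int.one_le_abs (sub_ne_zero.2 fun h ↦ hne (Fin.ext (by exact_mod_cast h)))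
  have hlast : |(m : ℝ)| ≤ N - 1 := by
    have : |m| ≤ N - 1 := abs_le.2 (by omega)
    exact_mod_cast this
  have hgrid : |m * (L / N)| = |(m : ℝ)| * (L / N) := by
    rw [abs_mul, abs_of_pos (a := L / N) (by positivity)]
  have hLN : N * (L / N) = L := mul_div_cancel₀ L (by exact_mod_cast hN)
  have hpos : 0 < L / N := by positivity
  refine circlePt_ne_of_abs_sub_lt (s := s i) (t := s j) ?_ (fun heq ↦ ?_) hij
  · have := abs_sub_abs_le_abs_sub (s i - s j) (m * (L / N))
    nlinarith
  · rw [heq, sub_self, zero_sub, abs_neg, hgrid] at hclose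
    nlinarith

end IsWellDistributed

theorem eventually_ne_zero_and_le_pow {κ : ℕ} (hκ : κ ≠ 0) (c : ℝ) :
    ∀ᶠ N : ℕ in atTop, N ≠ 0 ∧ c ≤ N ^ κ :=
  (eventually_ne_atTop 0).and
    (((tendsto_pow_atTop hκ).comp tendsto_natCast_atTop_atTop).eventually_ge_atTop c)

end Mesh

/-! ### Principal values and their quadrature -/

section TransformQuadrature

variable {L : ℝ} {l : ℝ → ℂ} {κ : ℕ}

theorem IsSimpleClosedCurve.exists_abs_sum_regularizedIntegrand_sub_le
    (hl : IsSimpleClosedCurve L l) (hκ : κ ≠ 0) (M : ℝ) :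
    ∃ C, ∀ᶠ N : ℕ in atTop, ∀ s st : Fin N → ℝ, IsWellDistributed L κ M s st →
      ∀ φ : ℝ → ℝ, ContDiff ℝ ∞ φ → Function.Periodic φ L → ∀ t,
      |L / N * ∑ i, regularizedIntegrand L l φ (st i, t) - pvTransform L l φ t| ≤
        C / N ^ κ * Cnorm (κ + 1) φ := by
  obtain ⟨C₁, hC₁⟩ := hl.exists_abs_iteratedDeriv_regularizedIntegrand_le 1
  obtain ⟨C₂, hC₂⟩ := hl.exists_abs_iteratedDeriv_regularizedIntegrand_le κ
  refine ⟨L * (L ^ κ + M) * max C₁ C₂, ?_⟩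
  filter_upwards [eventually_ne_atTop 0] with N hN s st hmesh φ hφ hper t
  have hw := hl.isSmoothPeriodicKernel_regularizedIntegrand hφ hper
  have hbound (k : ℕ) (hk : k ≤ κ + 1) (x : ℝ) : |iteratedDeriv k φ x| ≤ Cnorm (κ + 1) φ :=
    abs_iteratedDeriv_le_Cnorm hl.pos.ne' (contDiff_infty.1 hφ _) hper hk x
  have hB := Cnorm_nonneg (κ + 1) φ
  refine (abs_sum_sub_integral_le hl.pos hκ (contDiff_infty.1 (hw.contDiff_left t) κ)
    (hw.periodic_left t) (B := max C₁ C₂ * Cnorm (κ + 1) φ) (fun x ↦ ?_) (fun x ↦ ?_) hN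
    hmesh.collocation).trans_eq (by ring)
  · rw [← iteratedDeriv_one]
    refine (hC₁ φ hφ hper _ (fun k hk ↦ hbound k (by lia)) x t).trans ?_
    gcongr
    exact le_max_left C₁ C₂
  · refine (hC₂ φ hφ hper _ hbound x t).trans ?_
    gcongr
    exact le_max_right C₁ C₂

theorem IsSimpleClosedCurve.exists_abs_sum_tangentialKernel_sub_le
    (hl : IsSimpleClosedCurve L l) (hκ : κ ≠ 0) (M : ℝ) :
    ∃ C, ∀ᶠ N : ℕ in atTop, ∀ s st : Fin N → ℝ, IsWellDistributed L κ M s st →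
      ∀ φ : ℝ → ℝ, ContDiff ℝ ∞ φ → Function.Periodic φ L → ∀ j,
      |L / N * ∑ i, tangentialKernel l (st i) (s j) * φ (st i) - pvTransform L l φ (s j)| ≤
        C / N ^ κ * Cnorm (κ + 1) φ := by
  obtain ⟨C, hC⟩ := hl.exists_abs_sum_regularizedIntegrand_sub_le hκ M
  refine ⟨C + 4 * π ^ 2 * M / L, ?_⟩
  filter_upwards [hC, eventually_ne_zero_and_le_pow hκ (4 * π * M / L)] with N hC ⟨hN, hNM⟩ s st
    hmesh φ hφ hper j
  have hsplit (i : Fin N) : tangentialKernel l (st i) (s j) * φ (st i) =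
      regularizedIntegrand L l φ (st i, s j) + cotKernel L (st i - s j) * φ (s j) := by
    have hne := hmesh.circlePt_ne hl.pos hN hNM i j
    rw [regularizedIntegrand_eq hl.pos.ne' l hper hne, tangentialKernel_eq hl hne]
    ring
  have hcot : |L / N * (∑ i, cotKernel L (st i - s j)) * φ (s j)| ≤
      4 * π ^ 2 * M / L / N ^ κ * Cnorm (κ + 1) φ := by
    rw [abs_mul]
    have hsum := hmesh.abs_sum_cotKernel_le hl.pos hN hNM j
    exact mul_le_mul hsum (abs_le_Cnorm hl.pos.ne' (contDiff_infty.1 hφ _) hper _)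
      (abs_nonneg _) ((abs_nonneg _).trans hsum)
  simp only [hsplit, Finset.sum_add_distrib, ← Finset.sum_mul]
  calc |L / N * (∑ i, regularizedIntegrand L l φ (st i, s j) +
          (∑ i, cotKernel L (st i - s j)) * φ (s j)) - pvTransform L l φ (s j)|
      = |(L / N * ∑ i, regularizedIntegrand L l φ (st i, s j) - pvTransform L l φ (s j)) +
          L / N * (∑ i, cotKernel L (st i - s j)) * φ (s j)| := by
        congr 1
        ring
    _ ≤ C / N ^ κ * Cnorm (κ + 1) φ + 4 * π ^ 2 * M / L / N ^ κ * Cnorm (κ + 1) φ :=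
        (abs_add_le _ _).trans (add_le_add (hC s st hmesh φ hφ hper (s j)) hcot)
    _ = (C + 4 * π ^ 2 * M / L) / N ^ κ * Cnorm (κ + 1) φ := by ring

end TransformQuadrature

section PrincipalValue

variable {ι : Type*} {L : ℝ}

/-- The fundamental period `[0, L)` without the points whose distance modulo `L` to one of the
points `s j` is less than `ε`. -/
def puncturedPeriod (L : ℝ) (s : ι → ℝ) (ε : ℝ) : Set ℝ :=
  {x : ℝ | x ∈ Set.Ico 0 L ∧ ∀ j, ∀ k : ℤ, ε ≤ |x - s j - k * L|}

theorem forall_le_abs_sub_int_mul_iff {x ε : ℝ} :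
    (∀ k : ℤ, ε ≤ |x - k * L|) ↔ ε ≤ ‖(x : AddCircle L)‖ := by
  refine ⟨fun h ↦ ?_, fun h k ↦ ?_⟩
  · rw [AddCircle.norm_eq, mul_comm L⁻¹]
    exact h _
  · have hk : ((x - k * L : ℝ) : AddCircle L) = x := by
      rw [AddCircle.coe_sub, (AddCircle.coe_eq_zero_iff L).2 ⟨k, zsmul_eq_mul L k⟩, sub_zero]
    rw [← hk] at h
    exact h.trans QuotientAddGroup.norm_mk_le_norm

theorem puncturedPeriod_eq (L : ℝ) (s : ι → ℝ) (ε : ℝ) :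
    puncturedPeriod L s ε = Set.Ico 0 L ∩ {x | ∀ j, ε ≤ ‖((x - s j : ℝ) : AddCircle L)‖} := by
  simp only [puncturedPeriod, forall_le_abs_sub_int_mul_iff]
  rfl

theorem isClosed_setOf_forall_le_norm_sub (L : ℝ) (s : ι → ℝ) (ε : ℝ) :
    IsClosed {x : ℝ | ∀ j, ε ≤ ‖((x - s j : ℝ) : AddCircle L)‖} := by
  simp only [Set.ofPred_forall]
  refine isClosed_iInter fun j ↦ isClosed_le continuous_const ?_
  exact ((AddCircle.continuous_mk' L).comp (continuous_sub_right (s j))).norm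

theorem measurableSet_puncturedPeriod (L : ℝ) (s : ι → ℝ) (ε : ℝ) :
    MeasurableSet (puncturedPeriod L s ε) := by
  rw [puncturedPeriod_eq L]
  exact measurableSet_Ico.inter (isClosed_setOf_forall_le_norm_sub L s ε).measurableSet

theorem circlePt_eq_iff_norm_eq_zero (hL : L ≠ 0) {x t : ℝ} :
    circlePt L x = circlePt L t ↔ ‖((x - t : ℝ) : AddCircle L)‖ = 0 := by
  rw [circlePt_eq_iff hL, norm_eq_zero, AddCircle.coe_eq_zero_iff]
  exact exists_congr fun k ↦ by rw [zsmul_eq_mul, eq_sub_iff_add_eq', eq_comm]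

theorem circlePt_ne_of_mem_puncturedPeriod (hL : L ≠ 0) {s : ι → ℝ} {ε : ℝ} (hε : 0 < ε) {x : ℝ}
    (hx : x ∈ puncturedPeriod L s ε) (j : ι) : circlePt L x ≠ circlePt L (s j) := by
  rw [puncturedPeriod_eq L] at hx
  rw [Ne, circlePt_eq_iff_norm_eq_zero hL]
  exact (hε.trans_le (hx.2 j)).ne'

theorem aecover_puncturedPeriod [Finite ι] (hL : L ≠ 0) (s : ι → ℝ) :
    AECover (volume.restrict (Set.Ico 0 L)) (𝓝[>] 0) (puncturedPeriod L s) where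
  ae_eventually_mem := by
    have hcount : (⋃ j, {x | circlePt L x = circlePt L (s j)}).Countable :=
      Set.countable_iUnion fun j ↦ countable_setOf_circlePt_eq hL (s j)
    filter_upwards [ae_restrict_mem measurableSet_Ico, hcount.ae_notMem _] with x hxI hx
    simp only [Set.mem_iUnion, Set.mem_ofPred_eq, not_exists] at hx
    simp only [puncturedPeriod_eq L, Set.mem_inter_iff, hxI, true_and, Set.mem_ofPred_eq]
    refine eventually_all.2 fun j ↦ nhdsWithin_le_nhds (eventually_le_nhds ?_)
    exact (norm_nonneg _).lt_of_ne' (mt (circlePt_eq_iff_norm_eq_zero hL).2 (hx j))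
  measurableSet := measurableSet_puncturedPeriod L s

theorem tendsto_integral_puncturedPeriod [Finite ι] (hL : L ≠ 0) (s : ι → ℝ) {u : ℝ → ℝ}
    (hu : IntegrableOn u (Set.Ico 0 L)) :
    Tendsto (fun ε ↦ ∫ x in puncturedPeriod L s ε, u x) (𝓝[>] 0)
      (𝓝 (∫ x in Set.Ico 0 L, u x)) := by
  refine ((aecover_puncturedPeriod hL s).integral_tendsto_of_countably_generated hu).congr
    fun ε ↦ ?_
  rw [Measure.restrict_restrict (measurableSet_puncturedPeriod L s ε),
    Set.inter_eq_left.2 fun x hx ↦ hx.1]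

theorem cotKernel_neg (L x : ℝ) : cotKernel L (-x) = -cotKernel L x := by
  rw [cotKernel, cotKernel, Real.cot_eq_cos_div_sin, Real.cot_eq_cos_div_sin, mul_neg, neg_div,
    Real.cos_neg, Real.sin_neg, div_neg, mul_neg]

theorem periodic_cotKernel (hL : L ≠ 0) : Function.Periodic (cotKernel L) L := fun x ↦ by
  have harg : π * (x + L) / L = π * x / L + π := by field_simp
  rw [cotKernel, cotKernel, harg, Real.cot_eq_cos_div_sin, Real.cot_eq_cos_div_sin,
    Real.cos_add_pi, Real.sin_add_pi, neg_div_neg_eq]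

theorem integral_eq_zero_of_odd_of_periodic {h : ℝ → ℝ} (hodd : ∀ x, h (-x) = -h x)
    (hper : Function.Periodic h L) (t : ℝ) : ∫ x in t..t + L, h x = 0 := by
  rw [hper.intervalIntegral_add_eq t (-(L / 2)), neg_add_eq_sub, sub_half]
  have hneg := intervalIntegral.integral_comp_neg (f := h) (a := -(L / 2)) (b := L / 2)
  simp only [hodd, neg_neg, intervalIntegral.integral_neg] at hneg
  linarith

theorem integral_cotKernel_puncturedPeriod (hL : 0 < L) (t ε : ℝ) :
    ∫ x in puncturedPeriod L (fun _ : Unit ↦ t) ε, cotKernel L (x - t) = 0 := by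
  set h : ℝ → ℝ := {x : ℝ | ε ≤ ‖(x : AddCircle L)‖}.indicator (cotKernel L)
  have hodd (x : ℝ) : h (-x) = -h x := by
    simp only [h, Set.indicator, Set.mem_ofPred_eq, AddCircle.coe_neg, norm_neg, cotKernel_neg]
    split_ifs <;> simp only [neg_zero]
  have hper : Function.Periodic h L := fun x ↦ by
    simp only [h, Set.indicator, Set.mem_ofPred_eq, AddCircle.coe_add_period,
      periodic_cotKernel hL.ne' x]
  have hmeas := (isClosed_setOf_forall_le_norm_sub L (fun _ : Unit ↦ t) ε).measurableSet
  have hshift : Set.indicator {x : ℝ | ∀ _ : Unit, ε ≤ ‖((x - t : ℝ) : AddCircle L)‖}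
      (fun x ↦ cotKernel L (x - t)) = fun x ↦ h (x - t) := by
    funext x
    simp only [h, Set.indicator, Set.mem_ofPred_eq, forall_const]
  rw [puncturedPeriod_eq L, ← setIntegral_indicator hmeas, hshift,
    integral_Ico_eq_integral_Ioc, ← intervalIntegral.integral_of_le hL.le,
    intervalIntegral.integral_comp_sub_right, zero_sub, ← neg_add_eq_sub]
  exact integral_eq_zero_of_odd_of_periodic hodd hper _

theorem continuousAt_cotKernel_sub {x t : ℝ} (h : circlePt L x ≠ circlePt L t) :
    ContinuousAt (fun x ↦ cotKernel L (x - t)) x := by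
  simp only [cotKernel, Real.cot_eq_cos_div_sin]
  refine continuousAt_const.mul (ContinuousAt.div (by fun_prop) (by fun_prop) ?_)
  exact circlePt_ne_iff_sin_ne_zero.1 h

theorem integrableOn_cotKernel_puncturedPeriod (hL : L ≠ 0) (s : ι → ℝ) {ε : ℝ} (hε : 0 < ε)
    (j : ι) : IntegrableOn (fun x ↦ cotKernel L (x - s j)) (puncturedPeriod L s ε) := by
  have hclosed := isClosed_setOf_forall_le_norm_sub L s ε
  rw [puncturedPeriod_eq L]
  refine ContinuousOn.integrableOn_compact (isCompact_Icc.inter_right hclosed) (fun x hx ↦ ?_)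
    |>.mono_set (Set.inter_subset_inter_left _ Set.Ico_subset_Icc_self)
  refine (continuousAt_cotKernel_sub ?_).continuousWithinAt
  rw [Ne, circlePt_eq_iff_norm_eq_zero hL]
  exact (hε.trans_le (hx.2 j)).ne'

theorem exists_puncturedPeriod_diff_eq [Finite ι] (hL : L ≠ 0) {s : ι → ℝ}
    (hs : Function.Injective fun i ↦ circlePt L (s i)) (j : ι) :
    ∃ δ > 0, ∀ ε ≤ δ,
      puncturedPeriod L s ε \ puncturedPeriod L (fun _ : Unit ↦ s j) δ =
        puncturedPeriod L (fun _ : Unit ↦ s j) ε \ puncturedPeriod L (fun _ : Unit ↦ s j) δ := by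
  have hsep : ∀ᶠ δ in 𝓝[>] (0 : ℝ), ∀ i, i ≠ j → 2 * δ ≤ ‖((s i - s j : ℝ) : AddCircle L)‖ := by
    refine eventually_all.2 fun i ↦ eventually_imp_distrib_left.2 fun hij ↦ nhdsWithin_le_nhds ?_
    have hpos : 0 < ‖((s i - s j : ℝ) : AddCircle L)‖ :=
      (norm_nonneg _).lt_of_ne' (mt (circlePt_eq_iff_norm_eq_zero hL).2 (hs.ne hij))
    exact (eventually_le_nhds (half_pos hpos)).mono fun δ hδ ↦ by linarith
  obtain ⟨δ, hδ, hδ0⟩ := (hsep.and self_mem_nhdsWithin).exists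
  refine ⟨δ, hδ0, fun ε hε ↦ Set.ext fun x ↦ and_congr_left fun hx ↦ ?_⟩
  simp only [puncturedPeriod_eq L, Set.mem_inter_iff, Set.mem_ofPred_eq, forall_const, not_and,
    not_le] at hx ⊢
  refine and_congr_right fun hxI ↦ ⟨fun h ↦ h j, fun h i ↦ ?_⟩
  obtain rfl | hij := eq_or_ne i j
  · exact h
  · have htri := norm_sub_le ((x - s j : ℝ) : AddCircle L) (x - s i : ℝ)
    rw [← AddCircle.coe_sub, sub_sub_sub_cancel_left] at htri
    linarith [hδ i hij, hx hxI]

theorem tendsto_integral_cotKernel_puncturedPeriod [Finite ι] (hL : 0 < L) {s : ι → ℝ}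
    (hs : Function.Injective fun i ↦ circlePt L (s i)) (j : ι) :
    Tendsto (fun ε ↦ ∫ x in puncturedPeriod L s ε, cotKernel L (x - s j)) (𝓝[>] 0) (𝓝 0) := by
  obtain ⟨δ, hδ, hdiff⟩ := exists_puncturedPeriod_diff_eq hL.ne' hs j
  set X := puncturedPeriod L (fun _ : Unit ↦ s j)
  have hX := measurableSet_puncturedPeriod L (fun _ : Unit ↦ s j) δ
  have hint {ε : ℝ} (hε : 0 < ε) : IntegrableOn (fun x ↦ cotKernel L (x - s j)) (X ε) :=
    integrableOn_cotKernel_puncturedPeriod hL.ne' (fun _ : Unit ↦ s j) hε ()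
  have hlim := tendsto_integral_puncturedPeriod hL.ne' s
    ((integrable_indicator_iff hX).2 (hint hδ)).integrableOn
  rw [setIntegral_indicator hX, Set.inter_eq_right.2 fun x hx ↦ hx.1,
    integral_cotKernel_puncturedPeriod hL] at hlim
  refine hlim.congr' ?_
  filter_upwards [self_mem_nhdsWithin, nhdsWithin_le_nhds (eventually_le_nhds hδ)] with ε hε hεδ
  have hsub : X δ ⊆ X ε := fun x hx ↦ ⟨hx.1, fun j k ↦ hεδ.trans (hx.2 j k)⟩
  rw [setIntegral_indicator hX, ← integral_inter_add_sdiff hX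
      (integrableOn_cotKernel_puncturedPeriod hL.ne' s hε j), hdiff ε hεδ,
    setIntegral_sdiff hX (hint hε) hsub, integral_cotKernel_puncturedPeriod hL,
    integral_cotKernel_puncturedPeriod hL, sub_zero, add_zero]

variable {l : ℝ → ℂ} {φ : ℝ → ℝ}

theorem IsSimpleClosedCurve.integrableOn_regularizedIntegrand (hl : IsSimpleClosedCurve L l)
    (hφ : ContDiff ℝ ∞ φ) (hper : Function.Periodic φ L) (t : ℝ) :
    IntegrableOn (fun x ↦ regularizedIntegrand L l φ (x, t)) (Set.Ico 0 L) :=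
  (((hl.isSmoothPeriodicKernel_regularizedIntegrand hφ hper).contDiff_left
    t).continuous.continuousOn.integrableOn_compact isCompact_Icc).mono_set
    Set.Ico_subset_Icc_self

theorem IsSimpleClosedCurve.eqOn_tangentialKernel_mul (hl : IsSimpleClosedCurve L l)
    (hper : Function.Periodic φ L) (s : ι → ℝ) {ε : ℝ} (hε : 0 < ε) (j : ι) :
    Set.EqOn (fun x ↦ tangentialKernel l x (s j) * φ x)
      (fun x ↦ regularizedIntegrand L l φ (x, s j) + cotKernel L (x - s j) * φ (s j))
      (puncturedPeriod L s ε) := fun x hx ↦ by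
  have hne := circlePt_ne_of_mem_puncturedPeriod hl.pos.ne' hε hx j
  simp only [regularizedIntegrand_eq hl.pos.ne' l hper hne, tangentialKernel_eq hl hne]
  ring

theorem IsSimpleClosedCurve.integrableOn_tangentialKernel_mul (hl : IsSimpleClosedCurve L l)
    (hφ : ContDiff ℝ ∞ φ) (hper : Function.Periodic φ L) (s : ι → ℝ) {ε : ℝ} (hε : 0 < ε) (j : ι) :
    IntegrableOn (fun x ↦ tangentialKernel l x (s j) * φ x) (puncturedPeriod L s ε) :=
  (((hl.integrableOn_regularizedIntegrand hφ hper (s j)).mono_set fun _ hx ↦ hx.1).add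
    ((integrableOn_cotKernel_puncturedPeriod hl.pos.ne' s hε j).mul_const (φ (s j)))).congr_fun
    (hl.eqOn_tangentialKernel_mul hper s hε j).symm (measurableSet_puncturedPeriod L s ε)

theorem IsSimpleClosedCurve.tendsto_integral_tangentialKernel_mul [Finite ι]
    (hl : IsSimpleClosedCurve L l) {s : ι → ℝ} (hs : Function.Injective fun i ↦ circlePt L (s i))
    (hφ : ContDiff ℝ ∞ φ) (hper : Function.Periodic φ L) (j : ι) :
    Tendsto (fun ε ↦ ∫ x in puncturedPeriod L s ε, tangentialKernel l x (s j) * φ x) (𝓝[>] 0)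
      (𝓝 (pvTransform L l φ (s j))) := by
  have hint := hl.integrableOn_regularizedIntegrand hφ hper (s j)
  have hlim := (tendsto_integral_puncturedPeriod hl.pos.ne' s hint).add
    ((tendsto_integral_cotKernel_puncturedPeriod hl.pos hs j).mul_const (φ (s j)))
  rw [zero_mul, add_zero, integral_Ico_eq_integral_Ioc,
    ← intervalIntegral.integral_of_le hl.pos.le] at hlim
  refine hlim.congr' ?_
  filter_upwards [self_mem_nhdsWithin] with ε hε
  rw [setIntegral_congr_fun (measurableSet_puncturedPeriod L s ε)
      (hl.eqOn_tangentialKernel_mul hper s hε j),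
    integral_add (hint.mono_set fun _ hx ↦ hx.1)
      ((integrableOn_cotKernel_puncturedPeriod hl.pos.ne' s hε j).mul_const _), integral_mul_const]

theorem IsSimpleClosedCurve.tendsto_integral_sum_tangentialKernel_mul [Fintype ι]
    (hl : IsSimpleClosedCurve L l) {s : ι → ℝ} (hs : Function.Injective fun i ↦ circlePt L (s i))
    (hφ : ContDiff ℝ ∞ φ) (hper : Function.Periodic φ L) (c : ℝ) (g : ι → ℝ) :
    Tendsto (fun ε ↦ ∫ x in puncturedPeriod L s ε,
        (c * ∑ j, g j * tangentialKernel l x (s j)) * φ x) (𝓝[>] 0)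
      (𝓝 (c * ∑ j, g j * pvTransform L l φ (s j))) := by
  refine ((tendsto_finsetSum _ fun j _ ↦ (hl.tendsto_integral_tangentialKernel_mul hs hφ hper
    j).const_mul (g j)).const_mul c).congr' ?_
  filter_upwards [self_mem_nhdsWithin] with ε hε
  simp only [mul_assoc, Finset.sum_mul]
  rw [integral_const_mul, integral_finsetSum _ fun j _ ↦
    (hl.integrableOn_tangentialKernel_mul hφ hper s hε j).const_mul (g j)]
  simp only [integral_const_mul]

end PrincipalValue

/-! ### The logarithmic kernel -/

section LogKernel

/-- Lebesgue measure on one period `(0, L]`. -/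
noncomputable abbrev periodMeasure (L : ℝ) : Measure ℝ := volume.restrict (Set.Ioc 0 L)

variable {L : ℝ}

theorem integral_periodMeasure (hL : 0 ≤ L) (f : ℝ → ℝ) :
    ∫ x, f x ∂periodMeasure L = ∫ x in (0 : ℝ)..L, f x :=
  (intervalIntegral.integral_of_le hL).symm

/-- The integrable singularity `|log |sin (π x / L)||` that dominates all logarithmic kernels. -/
noncomputable def absLogSin (L x : ℝ) : ℝ := |Real.log (Real.sin (π * x / L))|

theorem measurable_absLogSin (L : ℝ) : Measurable (absLogSin L) :=
  (Real.measurable_log.comp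
    (by fun_prop : Continuous fun x ↦ Real.sin (π * x / L)).measurable).abs

theorem periodic_absLogSin (hL : L ≠ 0) : Function.Periodic (absLogSin L) L := fun x ↦ by
  have harg : π * (x + L) / L = π * x / L + π := by field_simp
  rw [absLogSin, absLogSin, harg, Real.sin_add_pi, Real.log_neg_eq_log]

theorem intervalIntegrable_absLogSin (hL : L ≠ 0) (a b : ℝ) :
    IntervalIntegrable (absLogSin L) volume a b := by
  have hcomp := (intervalIntegrable_log_sin (a := π / L * a) (b := π / L * b)).comp_mul_left
    (c := π / L)
  have hc : π / L ≠ 0 := div_ne_zero pi_ne_zero hL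
  rw [mul_div_cancel_left₀ _ hc, mul_div_cancel_left₀ _ hc] at hcomp
  refine hcomp.abs.congr fun x _ ↦ ?_
  simp only [absLogSin, Function.comp_apply, mul_div_right_comm]

theorem integrable_absLogSin_sub (hL : 0 < L) (t : ℝ) :
    Integrable (fun s ↦ absLogSin L (s - t)) (periodMeasure L) := by
  have hint := (intervalIntegrable_absLogSin hL.ne' (0 - t) (L - t)).comp_sub_right t
  rw [sub_add_cancel, sub_add_cancel] at hint
  exact (intervalIntegrable_iff_integrableOn_Ioc_of_le hL.le).1 hint

theorem integral_absLogSin_sub (hL : 0 < L) (t : ℝ) :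
    ∫ s, absLogSin L (s - t) ∂periodMeasure L = ∫ s, absLogSin L s ∂periodMeasure L := by
  have hshift := (periodic_absLogSin hL.ne').intervalIntegral_add_eq (0 - t) 0
  rw [zero_add, sub_add_eq_add_sub, zero_add] at hshift
  rw [integral_periodMeasure hL.le, integral_periodMeasure hL.le,
    intervalIntegral.integral_comp_sub_right (f := absLogSin L), hshift]

theorem integrable_absLogSin_sub_mul (hL : 0 < L) {h : ℝ → ℝ}
    (hh : Integrable h (periodMeasure L)) :
    Integrable (fun p : ℝ × ℝ ↦ absLogSin L (p.1 - p.2) * h p.2)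
      ((periodMeasure L).prod (periodMeasure L)) := by
  have hmeas : AEStronglyMeasurable (fun p : ℝ × ℝ ↦ absLogSin L (p.1 - p.2) * h p.2)
      ((periodMeasure L).prod (periodMeasure L)) :=
    ((measurable_absLogSin L).comp (measurable_fst.sub measurable_snd)).aestronglyMeasurable.mul
      hh.aestronglyMeasurable.comp_snd
  refine (integrable_prod_iff' hmeas).2
    ⟨.of_forall fun t ↦ (integrable_absLogSin_sub hL t).mul_const (h t), ?_⟩
  have hnorm (s t : ℝ) : ‖absLogSin L (s - t) * h t‖ = absLogSin L (s - t) * ‖h t‖ := by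
    rw [norm_mul, absLogSin, Real.norm_eq_abs |_|, abs_abs]
  simp only [hnorm, integral_mul_const, integral_absLogSin_sub hL]
  exact hh.norm.const_mul _

/-- The kernel of the single-layer potential of the curve `l`. -/
noncomputable def logKernel (l : ℝ → ℂ) (s t : ℝ) : ℝ := Real.log ‖l s - l t‖

theorem measurable_logKernel {l : ℝ → ℂ} (hl : Continuous l) :
    Measurable fun p : ℝ × ℝ ↦ logKernel l p.1 p.2 :=
  Real.measurable_log.comp
    (by fun_prop : Continuous fun p : ℝ × ℝ ↦ ‖l p.1 - l p.2‖).measurable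

theorem abs_log_norm_circlePt_sub_le (L s t : ℝ) :
    |Real.log ‖circlePt L s - circlePt L t‖| ≤ Real.log 2 + absLogSin L (s - t) := by
  have hlog2 : 0 ≤ Real.log 2 := Real.log_nonneg one_le_two
  rw [norm_circlePt_sub, absLogSin]
  obtain hs | hs := eq_or_ne (Real.sin (π * (s - t) / L)) 0
  · simpa only [hs, abs_zero, mul_zero, Real.log_zero, add_zero] using hlog2
  · rw [Real.log_mul two_ne_zero (abs_ne_zero.2 hs), Real.log_abs]
    exact (abs_add_le _ _).trans_eq (by rw [abs_of_nonneg hlog2])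

theorem continuous_log_norm_mul_self : Continuous fun w : ℂ ↦ (Real.log ‖w‖ : ℂ) * w := by
  refine continuous_iff_continuousAt.2 fun w ↦ ?_
  obtain rfl | hw := eq_or_ne w 0
  · have hnorm := (Real.continuous_mul_log.comp (continuous_norm (E := ℂ))).norm.tendsto 0
    rw [Function.comp_apply, norm_zero, zero_mul, norm_zero] at hnorm
    rw [ContinuousAt, mul_zero, tendsto_zero_iff_norm_tendsto_zero]
    refine hnorm.congr fun w ↦ ?_
    rw [Function.comp_apply, norm_mul, norm_mul, Complex.norm_real, norm_norm, mul_comm]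
  · exact (Complex.continuous_ofReal.continuousAt.comp
      (continuous_norm.continuousAt.log (norm_ne_zero_iff.2 hw))).mul continuousAt_id

namespace IsSimpleClosedCurve

variable {l : ℝ → ℂ} {φ g : ℝ → ℝ}

theorem exists_abs_logKernel_le (hl : IsSimpleClosedCurve L l) :
    ∃ A, ∀ s t, |logKernel l s t| ≤ A + absLogSin L (s - t) := by
  have hslope := hl.isSmoothPeriodicKernel_slope
  have hlog : IsSmoothPeriodicKernel L fun p ↦ Real.log ‖circleSlope L l p‖ :=
    ⟨(hslope.contDiff.norm ℝ hl.circleSlope_ne_zero).log fun p ↦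
        norm_ne_zero_iff.2 (hl.circleSlope_ne_zero p),
      fun t ↦ (hslope.periodic_left t).comp fun w ↦ Real.log ‖w‖,
      fun s ↦ (hslope.periodic_right s).comp fun w ↦ Real.log ‖w‖⟩
  obtain ⟨A, hA⟩ := hlog.exists_norm_le hl.pos
  refine ⟨A + Real.log 2, fun s t ↦ ?_⟩
  have hcircle := abs_log_norm_circlePt_sub_le L s t
  rw [add_assoc, logKernel, ← circleSlope_mul_sub hl.pos.ne' hl.periodic, norm_mul]
  obtain hst | hst := eq_or_ne ‖circlePt L s - circlePt L t‖ 0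
  · rw [hst, mul_zero, Real.log_zero, abs_zero]
    exact add_nonneg ((norm_nonneg _).trans (hA 0)) ((abs_nonneg _).trans hcircle)
  · rw [Real.log_mul (norm_ne_zero_iff.2 (hl.circleSlope_ne_zero _)) hst]
    exact (abs_add_le _ _).trans (add_le_add (hA (s, t)) hcircle)

theorem integrable_logKernel (hl : IsSimpleClosedCurve L l) (t : ℝ) :
    Integrable (fun s ↦ logKernel l s t) (periodMeasure L) := by
  obtain ⟨A, hA⟩ := hl.exists_abs_logKernel_le
  exact ((integrable_const A).add (integrable_absLogSin_sub hl.pos t)).mono'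
    ((measurable_logKernel hl.contDiff.continuous).comp
      measurable_prodMk_right).aestronglyMeasurable (.of_forall fun s ↦ hA s t)

theorem integrable_logKernel_mul (hl : IsSimpleClosedCurve L l)
    (hg : Integrable g (periodMeasure L)) :
    Integrable (fun p : ℝ × ℝ ↦ logKernel l p.1 p.2 * g p.2)
      ((periodMeasure L).prod (periodMeasure L)) := by
  obtain ⟨A, hA⟩ := hl.exists_abs_logKernel_le
  refine (((hg.norm.comp_snd _).const_mul A).add
    (integrable_absLogSin_sub_mul hl.pos hg.norm)).mono'
    ((measurable_logKernel hl.contDiff.continuous).aestronglyMeasurable.mul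
      hg.aestronglyMeasurable.comp_snd) (.of_forall fun p ↦ ?_)
  rw [norm_mul, Pi.add_apply, ← add_mul]
  exact mul_le_mul_of_nonneg_right (hA p.1 p.2) (norm_nonneg _)

theorem integrable_logKernel_mul_mul (hl : IsSimpleClosedCurve L l)
    (hg : MemLp g 2 (periodMeasure L)) :
    Integrable (fun p : ℝ × ℝ ↦ logKernel l p.1 p.2 * (g p.1 * g p.2))
      ((periodMeasure L).prod (periodMeasure L)) := by
  have hsq := (hl.integrable_logKernel_mul hg.integrable_sq).norm
  have hmeas := hg.aestronglyMeasurable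
  refine (hsq.add hsq.swap).mono' ((measurable_logKernel
    hl.contDiff.continuous).aestronglyMeasurable.mul (hmeas.comp_fst.mul hmeas.comp_snd))
    (.of_forall fun p ↦ ?_)
  have hsymm : logKernel l p.2 p.1 = logKernel l p.1 p.2 := by
    rw [logKernel, logKernel, norm_sub_rev]
  have hamgm : |g p.1 * g p.2| ≤ g p.2 ^ 2 + g p.1 ^ 2 := by
    rw [abs_mul, ← sq_abs (g p.1), ← sq_abs (g p.2)]
    nlinarith [sq_nonneg (|g p.1| - |g p.2|), abs_nonneg (g p.1), abs_nonneg (g p.2)]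
  simp only [Pi.add_apply, Function.comp_apply, Prod.fst_swap, Prod.snd_swap, hsymm, norm_mul,
    norm_pow, Real.norm_eq_abs, sq_abs, ← mul_add, ← abs_mul (g p.1)]
  exact mul_le_mul_of_nonneg_left hamgm (abs_nonneg _)

theorem continuous_logKernel_mul_sub (hl : IsSimpleClosedCurve L l) (hφ : ContDiff ℝ ∞ φ)
    (hper : Function.Periodic φ L) (t : ℝ) :
    Continuous fun s ↦ logKernel l s t * (φ s - φ t) := by
  have hslope (s : ℝ) : (φ s - φ t : ℂ) =
      circleSlope L (fun x ↦ φ x) (s, t) / circleSlope L l (s, t) * (l s - l t) := by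
    rw [← circleSlope_mul_sub hl.pos.ne' hl.periodic, ← mul_assoc,
      div_mul_cancel₀ _ (hl.circleSlope_ne_zero _)]
    exact (circleSlope_mul_sub hl.pos.ne' (hper.comp Complex.ofReal) s t).symm
  have heq (s : ℝ) : logKernel l s t * (φ s - φ t) =
      (circleSlope L (fun x ↦ φ x) (s, t) / circleSlope L l (s, t) *
        (Real.log ‖l s - l t‖ * (l s - l t))).re := by
    rw [mul_left_comm, ← hslope, logKernel]
    norm_cast
  simp only [heq]
  exact Complex.continuous_re.comp <| ((((isSmoothPeriodicKernel_circleSlope hl.pos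
    (contDiff_ofReal_comp hφ) (hper.comp Complex.ofReal)).contDiff_left t).continuous.div
    (hl.isSmoothPeriodicKernel_slope.contDiff_left t).continuous fun s ↦
      hl.circleSlope_ne_zero _).mul
    (continuous_log_norm_mul_self.comp (hl.contDiff.continuous.sub continuous_const)))

theorem hasDerivAt_logKernel_mul_sub (hl : IsSimpleClosedCurve L l) (hφ : Differentiable ℝ φ)
    (hper : Function.Periodic φ L) {s t : ℝ} (hst : circlePt L s ≠ circlePt L t) :
    HasDerivAt (fun s ↦ logKernel l s t * (φ s - φ t))
      (regularizedIntegrand L l φ (s, t) - regularKernel L l (s, t) * φ t +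
        logKernel l s t * deriv φ s) s := by
  have hlog : HasDerivAt (fun s ↦ logKernel l s t) (tangentialKernel l s t) s := by
    rw [tangentialKernel_eq_re_logDeriv]
    exact hasDerivAt_log_norm ((hl.contDiff.differentiable (by simp) s).sub_const _)
      (sub_ne_zero.2 (mt hl.circlePt_eq_of_apply_eq hst))
  refine (hlog.mul ((hφ s).hasDerivAt.sub_const _)).congr_deriv ?_
  rw [tangentialKernel_eq hl hst, regularizedIntegrand_eq hl.pos.ne' l hper hst]
  ring

theorem pvTransform_eq_neg_integral (hl : IsSimpleClosedCurve L l) (hφ : ContDiff ℝ ∞ φ)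
    (hper : Function.Periodic φ L) (t : ℝ) :
    pvTransform L l φ t = -∫ s, logKernel l s t * deriv φ s ∂periodMeasure L := by
  have hreg := ((hl.isSmoothPeriodicKernel_regularizedIntegrand hφ hper).contDiff_left
    t).continuous.intervalIntegrable (μ := volume) 0 L
  have hker := (((hl.isSmoothPeriodicKernel_regularKernel.contDiff_left t).continuous.mul_const
    (φ t)).intervalIntegrable (μ := volume) 0 L)
  have hlog : IntervalIntegrable (fun s ↦ logKernel l s t * deriv φ s) volume 0 L :=
    ((intervalIntegrable_iff_integrableOn_Ioc_of_le hl.pos.le).2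
      (hl.integrable_logKernel t)).mul_continuousOn
      (hφ.continuous_deriv (by simp)).continuousOn
  have hftc := MeasureTheory.integral_eq_of_hasDerivAt_off_countable_of_le _ _ hl.pos.le
    (countable_setOf_circlePt_eq hl.pos.ne' t)
    (hl.continuous_logKernel_mul_sub hφ hper t).continuousOn
    (fun s hs ↦ hl.hasDerivAt_logKernel_mul_sub (hφ.differentiable (by simp)) hper hs.2)
    ((hreg.sub hker).add hlog)
  rw [intervalIntegral.integral_add (hreg.sub hker) hlog, intervalIntegral.integral_sub hreg hker,
    intervalIntegral.integral_mul_const, hl.integral_regularKernel, zero_mul, sub_zero, logKernel,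
    logKernel, hl.periodic.eq, hper.eq, sub_self] at hftc
  rw [pvTransform, integral_periodMeasure hl.pos.le]
  exact eq_neg_of_add_eq_zero_left hftc

end IsSimpleClosedCurve

end LogKernel

/-! ### Vanishing logarithmic energy -/

section LogEnergy

variable {L : ℝ}

theorem exists_contDiff_periodic_eqOn {n : ℕ∞} (hL : 0 < L) {ψ : ℝ → ℝ} (hψ : ContDiff ℝ n ψ)
    (hsupp : tsupport ψ ⊆ Set.Ioo 0 L) :
    ∃ Ψ : ℝ → ℝ, ContDiff ℝ n Ψ ∧ Function.Periodic Ψ L ∧ Set.EqOn Ψ ψ (Set.Ioo 0 L) := by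
  have hzero {x : ℝ} (hx : x ∉ Set.Ioo 0 L) : ψ x = 0 :=
    image_eq_zero_of_notMem_tsupport (mt (@hsupp x) hx)
  have hper : Function.Periodic (ψ ∘ toIcoMod hL 0) L := (toIcoMod_periodic hL 0).comp ψ
  have heq {x : ℝ} (hx : 0 ≤ x) (hxL : x < L) : (ψ ∘ toIcoMod hL 0) x = ψ x := by
    rw [Function.comp_apply, (toIcoMod_eq_self hL).2 ⟨hx, by rwa [zero_add]⟩]
  refine ⟨ψ ∘ toIcoMod hL 0, contDiff_iff_contDiffAt.2 fun x ↦ ?_, hper,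
    fun x hx ↦ heq hx.1.le hx.2⟩
  have hbase {x : ℝ} (hx : x ∈ Set.Ico 0 (0 + L)) : ContDiffAt ℝ n (ψ ∘ toIcoMod hL 0) x := by
    rw [zero_add] at hx
    have hsum : ContDiff ℝ n fun y ↦ ψ y + ψ (y + L) :=
      hψ.add (hψ.comp (contDiff_id.add contDiff_const))
    refine hsum.contDiffAt.congr_of_eventuallyEq ?_
    filter_upwards [Ioo_mem_nhds (by linarith [hx.1] : -L < x) hx.2] with y hy
    obtain hy0 | hy0 := le_or_gt 0 y
    · rw [heq hy0 hy.2, hzero fun h : y + L ∈ Set.Ioo 0 L ↦ by linarith [h.2], add_zero]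
    · rw [← hper, heq (by linarith [hy.1]) (by linarith), hzero fun h ↦ hy0.not_gt h.1, zero_add]
  have hshift : ψ ∘ toIcoMod hL 0 = (ψ ∘ toIcoMod hL 0) ∘ fun y ↦ y - toIcoDiv hL 0 x • L :=
    funext fun y ↦ (hper.sub_zsmul_eq _).symm
  rw [hshift]
  exact ContDiffAt.comp x (hbase (toIcoMod_mem_Ico hL 0 x))
    (contDiff_id.sub contDiff_const).contDiffAt

theorem exists_periodic_deriv_eq {p : ℝ → ℝ} (hp : ContDiff ℝ ∞ p) (hper : Function.Periodic p L)
    (hmean : ∫ x in (0 : ℝ)..L, p x = 0) :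
    ∃ φ : ℝ → ℝ, ContDiff ℝ ∞ φ ∧ Function.Periodic φ L ∧ deriv φ = p := by
  have hint (a b : ℝ) : IntervalIntegrable p volume a b := hp.continuous.intervalIntegrable a b
  have hderiv (x : ℝ) : HasDerivAt (fun x ↦ ∫ y in (0 : ℝ)..x, p y) (p x) x :=
    hp.continuous.integral_hasStrictDerivAt 0 x |>.hasDerivAt
  have hderiv_eq : deriv (fun x ↦ ∫ y in (0 : ℝ)..x, p y) = p := funext fun x ↦ (hderiv x).deriv
  refine ⟨_, contDiff_infty_iff_deriv.2 ⟨fun x ↦ (hderiv x).differentiableAt, ?_⟩, fun x ↦ ?_,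
    hderiv_eq⟩
  · rwa [hderiv_eq]
  · have hperiod := hper.intervalIntegral_add_eq x 0
    rw [zero_add, hmean] at hperiod
    beta_reduce
    rw [← intervalIntegral.integral_add_adjacent_intervals (hint 0 x) (hint x (x + L)), hperiod,
      add_zero]

theorem integrable_periodMeasure_of_continuous {ψ : ℝ → ℝ} (hψ : Continuous ψ) :
    Integrable ψ (periodMeasure L) :=
  hψ.integrableOn_Ioc

theorem integrable_mul_of_continuous_of_periodic (hL : L ≠ 0) {u ψ : ℝ → ℝ}
    (hu : Integrable u (periodMeasure L)) (hψ : Continuous ψ) (hper : Function.Periodic ψ L) :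
    Integrable (fun x ↦ u x * ψ x) (periodMeasure L) := by
  obtain ⟨B, hB⟩ := exists_norm_le_of_periodic hL hψ hper
  exact hu.mul_bdd hψ.aestronglyMeasurable (.of_forall hB)

theorem integral_sub_average_mul_eq_zero (hL : 0 < L) {u : ℝ → ℝ}
    (hu : Integrable u (periodMeasure L))
    (horth : ∀ φ : ℝ → ℝ, ContDiff ℝ ∞ φ → Function.Periodic φ L →
      ∫ x, u x * deriv φ x ∂periodMeasure L = 0)
    {ψ : ℝ → ℝ} (hψ : ContDiff ℝ ∞ ψ) (hper : Function.Periodic ψ L) :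
    ∫ x, (u x - ⨍ y, u y ∂periodMeasure L) * ψ x ∂periodMeasure L = 0 := by
  set ubar := ⨍ y, u y ∂periodMeasure L
  set ψbar := ⨍ y, ψ y ∂periodMeasure L
  have hψmean : ∫ x, ψ x - ψbar ∂periodMeasure L = 0 := integral_sub_average _ _
  obtain ⟨φ, hφ, hφper, hderiv⟩ := exists_periodic_deriv_eq (hψ.sub contDiff_const)
    (fun x ↦ by rw [hper]) (by rwa [← integral_periodMeasure hL.le])
  have hu_orth := horth φ hφ hφper
  simp only [hderiv] at hu_orth
  have hψsub : Integrable (fun x ↦ ψ x - ψbar) (periodMeasure L) :=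
    (integrable_periodMeasure_of_continuous hψ.continuous).sub (integrable_const _)
  have hmul : Integrable (fun x ↦ u x * (ψ x - ψbar)) (periodMeasure L) :=
    integrable_mul_of_continuous_of_periodic hL.ne' hu (hψ.continuous.sub continuous_const)
      fun x ↦ by rw [hper]
  have hsplit (x : ℝ) : (u x - ubar) * ψ x =
      u x * (ψ x - ψbar) - ubar * (ψ x - ψbar) + (u x - ubar) * ψbar := by ring
  have hdiff : Integrable (fun x ↦ u x * (ψ x - ψbar) - ubar * (ψ x - ψbar)) (periodMeasure L) :=
    hmul.sub (hψsub.const_mul _)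
  have hrest : Integrable (fun x ↦ (u x - ubar) * ψbar) (periodMeasure L) :=
    (hu.sub (integrable_const _)).mul_const _
  simp only [hsplit]
  rw [integral_add hdiff hrest, integral_sub hmul (hψsub.const_mul _), integral_const_mul,
    integral_mul_const, hψmean, hu_orth, integral_sub_average]
  ring

/-- The du Bois-Reymond lemma on the circle `ℝ / Lℤ`. -/
theorem ae_eq_average_of_integral_mul_deriv_eq_zero (hL : 0 < L) {u : ℝ → ℝ}
    (hu : Integrable u (periodMeasure L))
    (horth : ∀ φ : ℝ → ℝ, ContDiff ℝ ∞ φ → Function.Periodic φ L →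
      ∫ x, u x * deriv φ x ∂periodMeasure L = 0) :
    ∀ᵐ x ∂periodMeasure L, u x = ⨍ y, u y ∂periodMeasure L := by
  have hsub : Integrable (fun x ↦ u x - ⨍ y, u y ∂periodMeasure L) (periodMeasure L) :=
    hu.sub (integrable_const _)
  have hloc : LocallyIntegrableOn (fun x ↦ u x - ⨍ y, u y ∂periodMeasure L) (Set.Ioo 0 L) :=
    (IntegrableOn.mono_set hsub Set.Ioo_subset_Ioc_self).locallyIntegrableOn
  have hzero := isOpen_Ioo.ae_eq_zero_of_integral_contDiff_smul_eq_zero hloc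
    fun ψ hψ _ hsupp ↦ by
      obtain ⟨Ψ, hΨ, hper, heq⟩ := exists_contDiff_periodic_eqOn hL hψ hsupp
      have hint := integral_sub_average_mul_eq_zero hL hu horth hΨ hper
      rw [integral_Ioc_eq_integral_Ioo] at hint
      rw [← hint, ← setIntegral_eq_integral_of_forall_compl_eq_zero (s := Set.Ioo 0 L) fun x hx ↦ by
        rw [image_eq_zero_of_notMem_tsupport (mt (@hsupp x) hx), zero_smul]]
      exact setIntegral_congr_fun measurableSet_Ioo fun x hx ↦ by
        rw [heq hx, smul_eq_mul, mul_comm]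
  rw [periodMeasure, ← restrict_Ioo_eq_restrict_Ioc, ae_restrict_iff' measurableSet_Ioo]
  filter_upwards [hzero] with x hx hxI
  rw [restrict_Ioo_eq_restrict_Ioc]
  exact sub_eq_zero.1 (hx hxI)

namespace IsSimpleClosedCurve

variable {l : ℝ → ℂ} {φ g : ℝ → ℝ}

theorem integral_logPotential_mul_deriv (hl : IsSimpleClosedCurve L l)
    (hg : Integrable g (periodMeasure L)) (hφ : ContDiff ℝ ∞ φ) (hper : Function.Periodic φ L) :
    ∫ s, (∫ t, logKernel l s t * g t ∂periodMeasure L) * deriv φ s ∂periodMeasure L =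
      -∫ t, g t * pvTransform L l φ t ∂periodMeasure L := by
  have hderiv : Continuous (deriv φ) := hφ.continuous_deriv (by simp)
  obtain ⟨B, hB⟩ := exists_norm_le_of_periodic hl.pos.ne' hderiv (periodic_deriv hper)
  have hint : Integrable (fun p : ℝ × ℝ ↦ logKernel l p.1 p.2 * g p.2 * deriv φ p.1)
      ((periodMeasure L).prod (periodMeasure L)) :=
    (hl.integrable_logKernel_mul hg).mul_bdd
      (hderiv.comp continuous_fst).aestronglyMeasurable (.of_forall fun p ↦ hB p.1)
  simp only [← integral_mul_const, ← integral_neg]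
  rw [integral_integral_swap hint]
  refine integral_congr_ae (.of_forall fun t ↦ ?_)
  simp only [hl.pvTransform_eq_neg_integral hφ hper, mul_neg, neg_neg, ← integral_const_mul]
  exact integral_congr_ae (.of_forall fun s ↦ by ring)

theorem integral_logKernel_mul_mul_eq_zero (hl : IsSimpleClosedCurve L l)
    (hg : MemLp g 2 (periodMeasure L)) (hmean : ∫ x, g x ∂periodMeasure L = 0)
    (horth : ∀ φ : ℝ → ℝ, ContDiff ℝ ∞ φ → Function.Periodic φ L →
      ∫ x, g x * pvTransform L l φ x ∂periodMeasure L = 0) :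
    ∫ p : ℝ × ℝ, logKernel l p.1 p.2 * (g p.1 * g p.2)
      ∂(periodMeasure L).prod (periodMeasure L) = 0 := by
  have hg1 : Integrable g (periodMeasure L) := hg.integrable one_le_two
  have hconst := ae_eq_average_of_integral_mul_deriv_eq_zero hl.pos
    (hl.integrable_logKernel_mul hg1).integral_prod_left fun φ hφ hper ↦ by
      rw [hl.integral_logPotential_mul_deriv hg1 hφ hper, horth φ hφ hper, neg_zero]
  set c := ⨍ s, ∫ t, logKernel l s t * g t ∂periodMeasure L ∂periodMeasure L
  have hinner : (fun s ↦ ∫ t, logKernel l s t * (g s * g t) ∂periodMeasure L)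
      =ᵐ[periodMeasure L] fun s ↦ g s * c := by
    filter_upwards [hconst] with s hs
    rw [← hs, ← integral_const_mul]
    exact integral_congr_ae (.of_forall fun t ↦ by ring)
  rw [integral_prod _ (hl.integrable_logKernel_mul_mul hg), integral_congr_ae hinner,
    integral_mul_const, hmean, zero_mul]

end IsSimpleClosedCurve

end LogEnergy

/-! ### Moments of a function with vanishing energy -/

section Moments

variable {X ι : Type*}

theorem sum_mul_pow_mul_eq [Fintype ι] (v : ι → X → ℝ) (g : X → ℝ) (n : ℕ) (p : X × X) :
    (∑ a, v a p.1 * v a p.2) ^ n * (g p.1 * g p.2) =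
      ∑ f : Fin n → ι, ((∏ i, v (f i) p.1) * g p.1) * ((∏ i, v (f i) p.2) * g p.2) := by
  simp only [Fintype.sum_pow, Finset.prod_mul_distrib, Finset.sum_mul]
  exact Finset.sum_congr rfl fun f _ ↦ by ring

variable [MeasurableSpace X] {μ : Measure X} {v : ι → X → ℝ} {g : X → ℝ}

theorem integrable_prod_apply_mul (hv : ∀ a, AEStronglyMeasurable (v a) μ)
    (hv_le : ∀ a x, |v a x| ≤ 1) (hg : Integrable g μ) {n : ℕ} (f : Fin n → ι) :
    Integrable (fun x ↦ (∏ i, v (f i) x) * g x) μ := by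
  refine hg.bdd_mul (c := 1) (Finset.aestronglyMeasurable_fun_prod _ fun i _ ↦ hv (f i))
    (.of_forall fun x ↦ ?_)
  rw [norm_prod]
  exact Finset.prod_le_one (fun _ _ ↦ norm_nonneg _) fun i _ ↦ hv_le (f i) x

variable [Fintype ι]

theorem integrable_sum_mul_pow_mul (hv : ∀ a, AEStronglyMeasurable (v a) μ)
    (hv_le : ∀ a x, |v a x| ≤ 1) (hg : Integrable g μ) (n : ℕ) :
    Integrable (fun p : X × X ↦ (∑ a, v a p.1 * v a p.2) ^ n * (g p.1 * g p.2)) (μ.prod μ) := by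
  simp only [sum_mul_pow_mul_eq]
  exact integrable_finsetSum _ fun f _ ↦ (integrable_prod_apply_mul hv hv_le hg f).mul_prod
    (integrable_prod_apply_mul hv hv_le hg f)

theorem hasSum_integral_sum_mul_pow_mul (hv : ∀ a, AEStronglyMeasurable (v a) μ)
    (hv_le : ∀ a x, |v a x| ≤ 1) (hg : Integrable g μ)
    (hnonneg : ∀ x y, 0 ≤ ∑ a, v a x * v a y)
    (hlt : ∀ᵐ p : X × X ∂μ.prod μ, ∑ a, v a p.1 * v a p.2 < 1)
    (hlog : Integrable (fun p : X × X ↦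
      -Real.log (1 - ∑ a, v a p.1 * v a p.2) * (g p.1 * g p.2)) (μ.prod μ)) :
    HasSum (fun n : ℕ ↦ ∫ p : X × X,
        (∑ a, v a p.1 * v a p.2) ^ (n + 1) / (n + 1) * (g p.1 * g p.2) ∂μ.prod μ)
      (∫ p : X × X, -Real.log (1 - ∑ a, v a p.1 * v a p.2) * (g p.1 * g p.2) ∂μ.prod μ) := by
  have hsum : ∀ᵐ p : X × X ∂μ.prod μ, HasSum (fun n : ℕ ↦
      (∑ a, v a p.1 * v a p.2) ^ (n + 1) / (n + 1)) (-Real.log (1 - ∑ a, v a p.1 * v a p.2)) := by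
    filter_upwards [hlt] with p hp
    exact Real.hasSum_pow_div_log_of_abs_lt_one (by rwa [abs_of_nonneg (hnonneg p.1 p.2)])
  have hterm (n : ℕ) (p : X × X) : 0 ≤ (∑ a, v a p.1 * v a p.2) ^ (n + 1) / (n + 1 : ℝ) :=
    div_nonneg (pow_nonneg (hnonneg p.1 p.2) _) n.cast_add_one_pos.le
  refine hasSum_integral_of_dominated_convergence
    (fun n p ↦ (∑ a, v a p.1 * v a p.2) ^ (n + 1) / (n + 1) * |g p.1 * g p.2|) (fun n ↦ ?_)
    (fun n ↦ .of_forall fun p ↦ ?_) ?_ ?_ ?_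
  · simp only [div_mul_eq_mul_div]
    exact ((integrable_sum_mul_pow_mul hv hv_le hg (n + 1)).div_const _).aestronglyMeasurable
  · rw [norm_mul, Real.norm_of_nonneg (hterm n p), Real.norm_eq_abs]
  · filter_upwards [hsum] with p hp
    exact (hp.mul_right _).summable
  · refine hlog.abs.congr ?_
    filter_upwards [hsum] with p hp
    rw [(hp.mul_right _).tsum_eq, abs_mul, abs_of_nonneg (hp.nonneg fun n ↦ hterm n p)]
  · filter_upwards [hsum] with p hp
    exact hp.mul_right _

variable [SFinite μ]

theorem integral_sum_mul_pow_mul (hv : ∀ a, AEStronglyMeasurable (v a) μ)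
    (hv_le : ∀ a x, |v a x| ≤ 1) (hg : Integrable g μ) (n : ℕ) :
    ∫ p : X × X, (∑ a, v a p.1 * v a p.2) ^ n * (g p.1 * g p.2) ∂μ.prod μ =
      ∑ f : Fin n → ι, (∫ x, (∏ i, v (f i) x) * g x ∂μ) ^ 2 := by
  have hint (f : Fin n → ι) := integrable_prod_apply_mul hv hv_le hg f
  simp only [sum_mul_pow_mul_eq]
  rw [integral_finsetSum _ fun f _ ↦ (hint f).mul_prod (hint f)]
  refine Finset.sum_congr rfl fun f _ ↦ ?_
  rw [integral_prod_mul (fun x ↦ (∏ i, v (f i) x) * g x) (fun x ↦ (∏ i, v (f i) x) * g x), sq]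

/-- Expanding `-log (1 - k) = ∑ kⁿ / n` writes the energy as a series of squares of moments. -/
theorem integral_prod_apply_mul_eq_zero (hv : ∀ a, AEStronglyMeasurable (v a) μ)
    (hv_le : ∀ a x, |v a x| ≤ 1) (hg : Integrable g μ)
    (hnonneg : ∀ x y, 0 ≤ ∑ a, v a x * v a y)
    (hlt : ∀ᵐ p : X × X ∂μ.prod μ, ∑ a, v a p.1 * v a p.2 < 1)
    (hlog : Integrable (fun p : X × X ↦
      -Real.log (1 - ∑ a, v a p.1 * v a p.2) * (g p.1 * g p.2)) (μ.prod μ))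
    (hzero : ∫ p : X × X,
      -Real.log (1 - ∑ a, v a p.1 * v a p.2) * (g p.1 * g p.2) ∂μ.prod μ = 0)
    {n : ℕ} (f : Fin (n + 1) → ι) : ∫ x, (∏ i, v (f i) x) * g x ∂μ = 0 := by
  have hseries := hasSum_integral_sum_mul_pow_mul hv hv_le hg hnonneg hlt hlog
  simp only [div_mul_eq_mul_div, integral_div, integral_sum_mul_pow_mul hv hv_le hg, hzero]
    at hseries
  have hsq (n : ℕ) (f : Fin (n + 1) → ι) : 0 ≤ (∫ x, (∏ i, v (f i) x) * g x ∂μ) ^ 2 := sq_nonneg _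
  have hterms := (hasSum_zero_iff_of_nonneg fun n ↦
    div_nonneg (Finset.sum_nonneg fun f _ ↦ hsq n f) n.cast_add_one_pos.le).1 hseries
  have hn : ∑ f : Fin (n + 1) → ι, (∫ x, (∏ i, v (f i) x) * g x ∂μ) ^ 2 = 0 :=
    (div_eq_zero_iff.1 (congrFun hterms n)).resolve_right n.cast_add_one_ne_zero
  exact pow_eq_zero_iff two_ne_zero |>.1
    ((Finset.sum_eq_zero_iff_of_nonneg fun f _ ↦ hsq n f).1 hn f (Finset.mem_univ f))

end Moments

section StoneWeierstrass

theorem continuousLinearMap_eq_zero_of_forall_prod_eq_zero {Y ι : Type*} [TopologicalSpace Y]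
    [CompactSpace Y] {v : ι → C(Y, ℝ)} (hsep : ∀ x y, (∀ a, v a x = v a y) → x = y)
    (Λ : C(Y, ℝ) →L[ℝ] ℝ) (hΛ : ∀ (n : ℕ) (f : Fin n → ι), Λ (∏ i, v (f i)) = 0) : Λ = 0 := by
  set A := Algebra.adjoin ℝ (Set.range v) with hA
  have hker : Subalgebra.toSubmodule A ≤ Λ.ker := by
    rw [hA, Algebra.adjoin_eq_span, Submodule.span_le]
    intro F hF
    obtain ⟨factors, hmem, rfl⟩ := Submonoid.exists_list_of_mem_closure hF
    choose f hf using fun i : Fin factors.length ↦ hmem _ (factors.get_mem i)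
    rw [← List.ofFn_get factors, List.prod_ofFn]
    exact (congrArg Λ (Finset.prod_congr rfl fun i _ ↦ (hf i).symm)).trans (hΛ _ f)
  have hAsep : A.SeparatesPoints := by
    intro x y hxy
    by_contra! hall
    exact hxy (hsep x y fun a ↦ hall _ ⟨v a, Algebra.subset_adjoin ⟨a, rfl⟩, rfl⟩)
  have htop := ContinuousMap.subalgebra_topologicalClosure_eq_top_of_separatesPoints A hAsep
  ext F
  have hF : F ∈ closure (A : Set C(Y, ℝ)) := by
    rw [← Subalgebra.topologicalClosure_coe, htop]
    exact Algebra.mem_top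
  exact closure_minimal hker (isClosed_singleton.preimage Λ.continuous) hF

theorem exists_continuousLinearMap_apply_eq_integral {X Y : Type*} [MeasurableSpace X]
    {μ : Measure X} [TopologicalSpace Y] [CompactSpace Y] [MeasurableSpace Y]
    [OpensMeasurableSpace Y] {γ : X → Y} (hγ : Measurable γ) {g : X → ℝ} (hg : Integrable g μ) :
    ∃ Λ : C(Y, ℝ) →L[ℝ] ℝ, ∀ F, Λ F = ∫ x, F (γ x) * g x ∂μ := by
  have hle (F : C(Y, ℝ)) (x : X) : ‖F (γ x)‖ ≤ ‖F‖ := F.norm_coe_le_norm _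
  have hint (F : C(Y, ℝ)) : Integrable (fun x ↦ F (γ x) * g x) μ :=
    hg.bdd_mul (F.continuous.measurable.comp hγ).aestronglyMeasurable (.of_forall (hle F))
  let Λ : C(Y, ℝ) →ₗ[ℝ] ℝ :=
    { toFun F := ∫ x, F (γ x) * g x ∂μ
      map_add' F G := by
        simp only [ContinuousMap.add_apply, add_mul, integral_add (hint F) (hint G)]
      map_smul' r F := by
        simp only [ContinuousMap.smul_apply, smul_eq_mul, mul_assoc, integral_const_mul,
          RingHom.id_apply] }
  refine ⟨Λ.mkContinuous (∫ x, ‖g x‖ ∂μ) fun F ↦ ?_, fun F ↦ rfl⟩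
  calc ‖∫ x, F (γ x) * g x ∂μ‖ ≤ ∫ x, ‖F (γ x) * g x‖ ∂μ := norm_integral_le_integral_norm _
    _ ≤ ∫ x, ‖F‖ * ‖g x‖ ∂μ := by
      refine integral_mono (hint F).norm (hg.norm.const_mul _) fun x ↦ ?_
      rw [norm_mul]
      exact mul_le_mul_of_nonneg_right (hle F x) (norm_nonneg _)
    _ = (∫ x, ‖g x‖ ∂μ) * ‖F‖ := by rw [integral_const_mul, mul_comm]

theorem integral_mul_eq_zero_of_moments_eq_zero {ι : Type*} {L : ℝ} (hL : 0 < L) {v : ι → ℝ → ℝ}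
    (hv : ∀ a, Continuous (v a)) (hper : ∀ a, Function.Periodic (v a) L)
    (hsep : ∀ x y, (∀ a, v a x = v a y) → ∃ k : ℤ, x = y + k * L)
    {g : ℝ → ℝ} (hg : Integrable g (periodMeasure L))
    (hmom : ∀ (n : ℕ) (f : Fin n → ι), ∫ x, (∏ i, v (f i) x) * g x ∂periodMeasure L = 0)
    {ψ : ℝ → ℝ} (hψ : Continuous ψ) (hψper : Function.Periodic ψ L) :
    ∫ x, ψ x * g x ∂periodMeasure L = 0 := by
  have : Fact (0 < L) := ⟨hL⟩
  let lift (u : ℝ → ℝ) (hu : Continuous u) (hper : Function.Periodic u L) : C(AddCircle L, ℝ) :=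
    ⟨hper.lift, continuous_coinduced_dom.2 hu⟩
  obtain ⟨Λ, hΛ⟩ := exists_continuousLinearMap_apply_eq_integral
    (AddCircle.measurable_mk' (a := L)) hg
  have hzero : Λ = 0 := by
    refine continuousLinearMap_eq_zero_of_forall_prod_eq_zero
      (v := fun a ↦ lift (v a) (hv a) (hper a)) (fun x y ↦ ?_) Λ fun n f ↦ ?_
    · induction x using QuotientAddGroup.induction_on with | H s => ?_
      induction y using QuotientAddGroup.induction_on with | H t => ?_
      intro hst
      obtain ⟨k, rfl⟩ := hsep s t hst
      rw [← zsmul_eq_mul, AddCircle.coe_add, AddCircle.coe_zsmul, AddCircle.coe_period, zsmul_zero,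
        add_zero]
    · rw [hΛ]
      simp only [ContinuousMap.prod_apply]
      exact hmom n f
  have hψ_zero := hΛ (lift ψ hψ hψper)
  rw [hzero] at hψ_zero
  exact hψ_zero.symm

end StoneWeierstrass

section ChordalKernel

/-- The coordinates of `z : ℂ` in an embedding of the plane into the unit sphere of `ℝ⁴`, chosen so
that the squared chordal distance of two points is `1 - ⟪·, ·⟫`, see
`one_sub_sum_chordalFeature_mul`. -/
noncomputable def chordalFeature (a : Fin 4) (z : ℂ) : ℝ :=
  ![1, ‖z‖ ^ 2, √2 * z.re, √2 * z.im] a / (1 + ‖z‖ ^ 2)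

theorem one_sub_sum_chordalFeature_mul (z w : ℂ) :
    1 - ∑ a, chordalFeature a z * chordalFeature a w =
      ‖z - w‖ ^ 2 / ((1 + ‖z‖ ^ 2) * (1 + ‖w‖ ^ 2)) := by
  have hsqrt : √2 * √2 = 2 := Real.mul_self_sqrt zero_le_two
  have hz : 1 + ‖z‖ ^ 2 ≠ 0 := by positivity
  have hw : 1 + ‖w‖ ^ 2 ≠ 0 := by positivity
  have hnorm (z : ℂ) : ‖z‖ ^ 2 = z.re * z.re + z.im * z.im := by
    rw [← Complex.normSq_eq_norm_sq, Complex.normSq_apply]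
  have hsum : ∑ a, chordalFeature a z * chordalFeature a w =
      (1 + ‖z‖ ^ 2 * ‖w‖ ^ 2 + √2 * √2 * (z.re * w.re + z.im * w.im)) /
        ((1 + ‖z‖ ^ 2) * (1 + ‖w‖ ^ 2)) := by
    simp only [chordalFeature, Fin.sum_univ_four, Matrix.cons_val]
    field_simp
    ring
  rw [hsum, hsqrt, one_sub_div (mul_ne_zero hz hw), hnorm (z - w), hnorm z, hnorm w, Complex.sub_re,
    Complex.sub_im]
  ring

theorem sum_chordalFeature_mul_nonneg (z w : ℂ) :
    0 ≤ ∑ a, chordalFeature a z * chordalFeature a w := by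
  have hdist : ‖z - w‖ ^ 2 ≤ (1 + ‖z‖ ^ 2) * (1 + ‖w‖ ^ 2) := by
    nlinarith [pow_le_pow_left₀ (norm_nonneg _) (norm_sub_le z w) 2, sq_nonneg (‖z‖ * ‖w‖ - 1)]
  linarith [one_sub_sum_chordalFeature_mul z w, div_le_one_of_le₀ hdist (by positivity)]

theorem sum_chordalFeature_mul_lt_one {z w : ℂ} (h : z ≠ w) :
    ∑ a, chordalFeature a z * chordalFeature a w < 1 := by
  have hdist : 0 < ‖z - w‖ := norm_pos_iff.2 (sub_ne_zero.2 h)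
  rw [← sub_pos, one_sub_sum_chordalFeature_mul]
  positivity

theorem sum_chordalFeature_mul_self (z : ℂ) :
    ∑ a, chordalFeature a z * chordalFeature a z = 1 := by
  have hdiag := one_sub_sum_chordalFeature_mul z z
  rw [sub_self, norm_zero, zero_pow two_ne_zero, zero_div] at hdiag
  linarith

theorem eq_of_chordalFeature_eq {z w : ℂ} (h : ∀ a, chordalFeature a z = chordalFeature a w) :
    z = w := by
  by_contra hne
  have hlt := sum_chordalFeature_mul_lt_one hne
  simp only [h, sum_chordalFeature_mul_self, lt_irrefl] at hlt

theorem abs_chordalFeature_le_one (a : Fin 4) (z : ℂ) : |chordalFeature a z| ≤ 1 := by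
  rw [abs_le_one_iff_mul_self_le_one, ← sum_chordalFeature_mul_self z]
  exact Finset.single_le_sum (f := fun a ↦ chordalFeature a z * chordalFeature a z)
    (fun _ _ ↦ mul_self_nonneg _) (Finset.mem_univ a)

theorem continuous_chordalFeature (a : Fin 4) : Continuous (chordalFeature a) := by
  refine Continuous.div ?_ (by fun_prop) fun z ↦ by positivity
  fin_cases a <;> simp only [Fin.mk_zero, Fin.mk_one, Fin.reduceFinMk, Matrix.cons_val] <;> fun_prop

theorem neg_log_one_sub_sum_chordalFeature_mul {z w : ℂ} (h : z ≠ w) :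
    -Real.log (1 - ∑ a, chordalFeature a z * chordalFeature a w) =
      -2 * Real.log ‖z - w‖ + Real.log (1 + ‖z‖ ^ 2) + Real.log (1 + ‖w‖ ^ 2) := by
  have hz : 1 + ‖z‖ ^ 2 ≠ 0 := by positivity
  have hw : 1 + ‖w‖ ^ 2 ≠ 0 := by positivity
  have hdist : ‖z - w‖ ≠ 0 := norm_ne_zero_iff.2 (sub_ne_zero.2 h)
  rw [one_sub_sum_chordalFeature_mul, Real.log_div (pow_ne_zero 2 hdist) (mul_ne_zero hz hw),
    Real.log_mul hz hw, Real.log_pow, Nat.cast_ofNat]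
  ring

end ChordalKernel

namespace IsSimpleClosedCurve

variable {L : ℝ} {l : ℝ → ℂ} {g : ℝ → ℝ}

theorem ae_apply_ne (hl : IsSimpleClosedCurve L l) :
    ∀ᵐ p : ℝ × ℝ ∂(periodMeasure L).prod (periodMeasure L), l p.1 ≠ l p.2 := by
  have hcont := hl.contDiff.continuous
  have hmeas : MeasurableSet {p : ℝ × ℝ | l p.1 ≠ l p.2} :=
    (isOpen_ne_fun (hcont.comp continuous_fst) (hcont.comp continuous_snd)).measurableSet
  refine (Measure.ae_prod_iff_ae_ae hmeas).2 (.of_forall fun s ↦ ?_)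
  filter_upwards [ae_restrict_of_ae ((countable_setOf_circlePt_eq hl.pos.ne' s).ae_notMem volume)]
    with t ht heq
  exact ht (hl.circlePt_eq_of_apply_eq heq).symm

theorem integrable_log_one_add_norm_sq_mul (hl : IsSimpleClosedCurve L l)
    (hg : Integrable g (periodMeasure L)) :
    Integrable (fun s ↦ Real.log (1 + ‖l s‖ ^ 2) * g s) (periodMeasure L) := by
  have hcont := hl.contDiff.continuous
  have hlog : Continuous fun s ↦ Real.log (1 + ‖l s‖ ^ 2) :=
    (show Continuous fun s ↦ 1 + ‖l s‖ ^ 2 by fun_prop).log fun s ↦ by positivity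
  simp only [mul_comm _ (g _)]
  exact integrable_mul_of_continuous_of_periodic hl.pos.ne' hg hlog fun s ↦ by rw [hl.periodic]

theorem neg_log_one_sub_sum_chordalFeature_mul_ae_eq (hl : IsSimpleClosedCurve L l) :
    (fun p : ℝ × ℝ ↦
      -Real.log (1 - ∑ a, chordalFeature a (l p.1) * chordalFeature a (l p.2)) * (g p.1 * g p.2))
      =ᵐ[(periodMeasure L).prod (periodMeasure L)] fun p ↦
        -2 * (logKernel l p.1 p.2 * (g p.1 * g p.2)) +
          (Real.log (1 + ‖l p.1‖ ^ 2) * g p.1 * g p.2 +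
            g p.1 * (Real.log (1 + ‖l p.2‖ ^ 2) * g p.2)) := by
  filter_upwards [hl.ae_apply_ne] with p hp
  rw [neg_log_one_sub_sum_chordalFeature_mul hp, logKernel]
  ring

theorem integrable_neg_log_one_sub_sum_chordalFeature_mul (hl : IsSimpleClosedCurve L l)
    (hg : MemLp g 2 (periodMeasure L)) :
    Integrable (fun p : ℝ × ℝ ↦
      -Real.log (1 - ∑ a, chordalFeature a (l p.1) * chordalFeature a (l p.2)) * (g p.1 * g p.2))
      ((periodMeasure L).prod (periodMeasure L)) := by
  have hg1 : Integrable g (periodMeasure L) := hg.integrable one_le_two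
  have hlog := hl.integrable_log_one_add_norm_sq_mul hg1
  exact (((hl.integrable_logKernel_mul_mul hg).const_mul (-2)).add
    ((hlog.mul_prod hg1).add (hg1.mul_prod hlog))).congr
      hl.neg_log_one_sub_sum_chordalFeature_mul_ae_eq.symm

theorem integral_neg_log_one_sub_sum_chordalFeature_mul (hl : IsSimpleClosedCurve L l)
    (hg : MemLp g 2 (periodMeasure L)) (hmean : ∫ x, g x ∂periodMeasure L = 0) :
    ∫ p : ℝ × ℝ,
      -Real.log (1 - ∑ a, chordalFeature a (l p.1) * chordalFeature a (l p.2)) * (g p.1 * g p.2)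
        ∂(periodMeasure L).prod (periodMeasure L) =
      -2 * ∫ p : ℝ × ℝ, logKernel l p.1 p.2 * (g p.1 * g p.2)
        ∂(periodMeasure L).prod (periodMeasure L) := by
  have hg1 : Integrable g (periodMeasure L) := hg.integrable one_le_two
  have hlog := hl.integrable_log_one_add_norm_sq_mul hg1
  have hlogs : Integrable (fun p : ℝ × ℝ ↦ Real.log (1 + ‖l p.1‖ ^ 2) * g p.1 * g p.2 +
      g p.1 * (Real.log (1 + ‖l p.2‖ ^ 2) * g p.2)) ((periodMeasure L).prod (periodMeasure L)) :=
    (hlog.mul_prod hg1).add (hg1.mul_prod hlog)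
  rw [integral_congr_ae hl.neg_log_one_sub_sum_chordalFeature_mul_ae_eq,
    integral_add ((hl.integrable_logKernel_mul_mul hg).const_mul (-2)) hlogs,
    integral_add (hlog.mul_prod hg1) (hg1.mul_prod hlog), integral_const_mul,
    integral_prod_mul (fun s ↦ Real.log (1 + ‖l s‖ ^ 2) * g s) g,
    integral_prod_mul g fun s ↦ Real.log (1 + ‖l s‖ ^ 2) * g s, hmean]
  ring

theorem integral_prod_chordalFeature_mul_eq_zero (hl : IsSimpleClosedCurve L l)
    (hg : MemLp g 2 (periodMeasure L)) (hmean : ∫ x, g x ∂periodMeasure L = 0)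
    (horth : ∀ φ : ℝ → ℝ, ContDiff ℝ ∞ φ → Function.Periodic φ L →
      ∫ x, g x * pvTransform L l φ x ∂periodMeasure L = 0) (n : ℕ) (f : Fin n → Fin 4) :
    ∫ x, (∏ i, chordalFeature (f i) (l x)) * g x ∂periodMeasure L = 0 := by
  obtain _ | n := n
  · simpa only [Finset.univ_eq_empty, Finset.prod_empty, one_mul] using hmean
  refine integral_prod_apply_mul_eq_zero (v := fun a x ↦ chordalFeature a (l x))
    (fun a ↦ ((continuous_chordalFeature a).comp hl.contDiff.continuous).aestronglyMeasurable)
    (fun a x ↦ abs_chordalFeature_le_one a (l x)) (hg.integrable one_le_two)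
    (fun x y ↦ sum_chordalFeature_mul_nonneg (l x) (l y)) ?_
    (hl.integrable_neg_log_one_sub_sum_chordalFeature_mul hg) ?_ f
  · filter_upwards [hl.ae_apply_ne] with p hp
    exact sum_chordalFeature_mul_lt_one hp
  · rw [hl.integral_neg_log_one_sub_sum_chordalFeature_mul hg hmean,
      hl.integral_logKernel_mul_mul_eq_zero hg hmean horth, mul_zero]

theorem integral_mul_eq_zero_of_integral_mul_pvTransform_eq_zero (hl : IsSimpleClosedCurve L l)
    (hg : MemLp g 2 (periodMeasure L)) (hmean : ∫ x, g x ∂periodMeasure L = 0)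
    (horth : ∀ φ : ℝ → ℝ, ContDiff ℝ ∞ φ → Function.Periodic φ L →
      ∫ x, g x * pvTransform L l φ x ∂periodMeasure L = 0)
    {ψ : ℝ → ℝ} (hψ : Continuous ψ) (hper : Function.Periodic ψ L) :
    ∫ x, ψ x * g x ∂periodMeasure L = 0 :=
  integral_mul_eq_zero_of_moments_eq_zero hl.pos (v := fun a x ↦ chordalFeature a (l x))
    (fun a ↦ (continuous_chordalFeature a).comp hl.contDiff.continuous)
    (fun a ↦ hl.periodic.comp (chordalFeature a))
    (fun _ _ h ↦ (circlePt_eq_iff hl.pos.ne').1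
      (hl.circlePt_eq_of_apply_eq (eq_of_chordalFeature_eq h)))
    (hg.integrable one_le_two) (hl.integral_prod_chordalFeature_mul_eq_zero hg hmean horth) hψ hper

end IsSimpleClosedCurve

/-! ### Weak limits of discrete densities -/

section WeakCompactness

open scoped InnerProductSpace

theorem exists_tendsto_inner_of_norm_le {𝕜 H ι : Type*} [RCLike 𝕜] [NormedAddCommGroup H]
    [InnerProductSpace 𝕜 H] [CompleteSpace H] {x : ι → H} {B : ℝ} (hB : ∀ n, ‖x n‖ ≤ B)
    (U : Ultrafilter ι) : ∃ y, ∀ z, Tendsto (fun n ↦ ⟪x n, z⟫_𝕜) U (𝓝 ⟪y, z⟫_𝕜) := by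
  let f : ι → WeakDual 𝕜 H := fun n ↦
    StrongDual.toWeakDual (InnerProductSpace.toDual 𝕜 H (x n))
  have hf : ∀ n, f n ∈ WeakDual.toStrongDual ⁻¹' Metric.closedBall (0 : StrongDual 𝕜 H) B :=
    fun n ↦ mem_closedBall_zero_iff.2
      (((InnerProductSpace.toDual 𝕜 H).norm_map (x n)).trans_le (hB n))
  obtain ⟨w, -, hw⟩ := (WeakDual.isCompact_closedBall (0 : StrongDual 𝕜 H) B).ultrafilter_le_nhds
    (U.map f) (le_principal_iff.2 (mem_map.2 (univ_mem' hf)))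
  refine ⟨(InnerProductSpace.toDual 𝕜 H).symm (WeakDual.toStrongDual w), fun z ↦ ?_⟩
  rw [InnerProductSpace.toDual_symm_apply]
  exact ((WeakDual.eval_continuous z).tendsto w).comp hw

theorem exists_tendsto_integral_mul_of_integral_sq_le {ι X : Type*} {mX : MeasurableSpace X}
    {μ : Measure X} {u : ι → X → ℝ} (hu : ∀ n, MemLp (u n) 2 μ) {B : ℝ}
    (hB : ∀ n, ∫ x, u n x ^ 2 ∂μ ≤ B) (U : Ultrafilter ι) :
    ∃ g : X → ℝ, MemLp g 2 μ ∧ ∀ ψ : X → ℝ, MemLp ψ 2 μ →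
      Tendsto (fun n ↦ ∫ x, ψ x * u n x ∂μ) U (𝓝 (∫ x, ψ x * g x ∂μ)) := by
  have hinner : ∀ {v ψ : X → ℝ} (hv : MemLp v 2 μ) (hψ : MemLp ψ 2 μ),
      ⟪hv.toLp, hψ.toLp⟫_ℝ = ∫ x, ψ x * v x ∂μ := fun hv hψ ↦ by
    rw [L2.inner_def]
    refine integral_congr_ae ?_
    filter_upwards [hv.coeFn_toLp, hψ.coeFn_toLp] with x hxv hxψ
    rw [hxv, hxψ]
    rfl
  have hnorm : ∀ n, ‖(hu n).toLp‖ ≤ √B := fun n ↦ Real.le_sqrt_of_sq_le <| by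
    rw [← real_inner_self_eq_norm_sq, hinner]
    simpa only [← sq] using hB n
  obtain ⟨y, hy⟩ := exists_tendsto_inner_of_norm_le (𝕜 := ℝ) hnorm U
  refine ⟨y, Lp.memLp y, fun ψ hψ ↦ ?_⟩
  have hlim := hy hψ.toLp
  rw [← Lp.toLp_coeFn y (Lp.memLp y)] at hlim
  simpa only [hinner] using hlim

end WeakCompactness

section StepFunction

variable {L : ℝ} {N : ℕ}

/-- The cell `(j h, (j + 1) h]` of the uniform grid of mesh size `h = L / N`. -/
def gridCell (L : ℝ) (N j : ℕ) : Set ℝ := Set.Ioc (j * (L / N)) ((j + 1) * (L / N))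

theorem measurableSet_gridCell (L : ℝ) (N j : ℕ) : MeasurableSet (gridCell L N j) :=
  measurableSet_Ioc

theorem volume_real_gridCell (hL : 0 ≤ L) (N j : ℕ) : volume.real (gridCell L N j) = L / N := by
  have hcell : (j : ℝ) * (L / N) ≤ (j + 1) * (L / N) := by
    gcongr
    exact le_add_of_nonneg_right zero_le_one
  rw [gridCell, Real.volume_real_Ioc_of_le hcell]
  ring

theorem gridCell_subset (hL : 0 ≤ L) (j : Fin N) : gridCell L N j ⊆ Set.Ioc 0 L := by
  have hN : (N : ℝ) ≠ 0 := by exact_mod_cast j.pos.ne'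
  have hj : (j : ℝ) + 1 ≤ N := by exact_mod_cast j.2
  refine Set.Ioc_subset_Ioc (by positivity) ?_
  calc ((j : ℝ) + 1) * (L / N) ≤ N * (L / N) := by gcongr
    _ = L := mul_div_cancel₀ L hN

theorem pairwise_disjoint_gridCell (hL : 0 ≤ L) (N : ℕ) :
    Pairwise (Function.onFun Disjoint (gridCell L N)) := by
  have hmono : Monotone fun j : ℕ ↦ (j : ℝ) * (L / N) := fun i j hij ↦ by
    beta_reduce
    gcongr
  unfold gridCell
  simpa only [Order.succ_eq_add_one, Nat.cast_add_one] using
    hmono.pairwise_disjoint_on_Ioc_succ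

/-- The piecewise constant function with value `γ j` on the `j`-th cell of the uniform grid. -/
noncomputable def stepFunction (L : ℝ) (γ : Fin N → ℝ) (x : ℝ) : ℝ :=
  ∑ j : Fin N, (gridCell L N j).indicator (fun _ ↦ γ j) x

theorem stepFunction_of_mem_gridCell (hL : 0 ≤ L) (γ : Fin N → ℝ) {j : Fin N} {x : ℝ}
    (hx : x ∈ gridCell L N j) : stepFunction L γ x = γ j := by
  rw [stepFunction, Finset.sum_eq_single j, Set.indicator_of_mem hx]
  · exact fun i _ hij ↦ Set.indicator_of_notMem
      ((pairwise_disjoint_gridCell hL N (Fin.val_injective.ne hij)).notMem_of_mem_right hx) _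
  · simp only [Finset.mem_univ, not_true_eq_false, false_imp_iff]

theorem memLp_stepFunction (L : ℝ) (γ : Fin N → ℝ) :
    MemLp (stepFunction L γ) 2 (periodMeasure L) :=
  memLp_finsetSum _ fun j _ ↦ (memLp_const (γ j)).indicator (measurableSet_gridCell L N j)

theorem integral_mul_stepFunction (hL : 0 ≤ L) {ψ : ℝ → ℝ} (hψ : Integrable ψ (periodMeasure L))
    (γ : Fin N → ℝ) :
    ∫ x, ψ x * stepFunction L γ x ∂periodMeasure L = ∑ j, γ j * ∫ x in gridCell L N j, ψ x := by
  have hind : ∀ (j : Fin N) (x : ℝ), ψ x * (gridCell L N j).indicator (fun _ ↦ γ j) x =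
      (gridCell L N j).indicator (fun x ↦ γ j * ψ x) x := fun j x ↦ by
    simp only [← Set.indicator_mul_right, mul_comm]
  simp only [stepFunction, Finset.mul_sum, hind]
  rw [integral_finsetSum _ fun j _ ↦ (hψ.const_mul (γ j)).indicator (measurableSet_gridCell L N j)]
  refine Finset.sum_congr rfl fun j _ ↦ ?_
  rw [integral_indicator (measurableSet_gridCell L N j),
    Measure.restrict_restrict (measurableSet_gridCell L N j),
    Set.inter_eq_left.2 (gridCell_subset hL j), integral_const_mul]

theorem integral_stepFunction_sq (hL : 0 ≤ L) (γ : Fin N → ℝ) :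
    ∫ x, stepFunction L γ x ^ 2 ∂periodMeasure L = L / N * ∑ j, γ j ^ 2 := by
  have hstep := (memLp_stepFunction L γ).integrable one_le_two
  simp only [sq, integral_mul_stepFunction hL hstep, Finset.mul_sum]
  refine Finset.sum_congr rfl fun j _ ↦ ?_
  rw [setIntegral_congr_fun (measurableSet_gridCell L N j)
    fun _ hx ↦ stepFunction_of_mem_gridCell hL γ hx, setIntegral_const,
    volume_real_gridCell hL, smul_eq_mul]
  ring

theorem abs_integral_mul_stepFunction_sub_le (hL : 0 ≤ L) {ψ : ℝ → ℝ}
    (hψ : Integrable ψ (periodMeasure L)) (γ s : Fin N → ℝ) {ε : ℝ}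
    (hε : ∀ j : Fin N, ∀ x ∈ gridCell L N j, |ψ x - ψ (s j)| ≤ ε) :
    |∫ x, ψ x * stepFunction L γ x ∂periodMeasure L - L / N * ∑ j, γ j * ψ (s j)| ≤
      L * ε * ((N : ℝ)⁻¹ * ∑ j, |γ j|) := by
  have hcell : ∀ j : Fin N, |(∫ x in gridCell L N j, ψ x) - L / N * ψ (s j)| ≤ ε * (L / N) :=
    fun j ↦ by
    have hfin : volume (gridCell L N j) < ⊤ := measure_Ioc_lt_top
    have hint : IntegrableOn ψ (gridCell L N j) := IntegrableOn.mono_set hψ (gridCell_subset hL j)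
    have hconst : ∫ _ in gridCell L N j, ψ (s j) = L / N * ψ (s j) := by
      rw [setIntegral_const, volume_real_gridCell hL, smul_eq_mul]
    rw [← hconst, ← integral_sub hint (integrableOn_const hfin.ne), ← Real.norm_eq_abs,
      ← volume_real_gridCell hL N j]
    exact norm_setIntegral_le_of_norm_le_const hfin (hε j)
  rw [integral_mul_stepFunction hL hψ, Finset.mul_sum, ← Finset.sum_sub_distrib]
  calc |∑ j, ((γ j * ∫ x in gridCell L N j, ψ x) - L / N * (γ j * ψ (s j)))|
      ≤ ∑ j, |γ j| * (ε * (L / N)) := by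
        refine (Finset.abs_sum_le_sum_abs _ _).trans (Finset.sum_le_sum fun j _ ↦ ?_)
        rw [mul_left_comm, ← mul_sub, abs_mul]
        exact mul_le_mul_of_nonneg_left (hcell j) (abs_nonneg _)
    _ = L * ε * ((N : ℝ)⁻¹ * ∑ j, |γ j|) := by
        rw [← Finset.sum_mul]
        ring

end StepFunction

section WeakLimit

variable {L M : ℝ} {κ : ℕ}

theorem uniformContinuous_of_periodic {α : Type*} [UniformSpace α] (hL : 0 < L) {ψ : ℝ → α}
    (hψ : Continuous ψ) (hper : Function.Periodic ψ L) : UniformContinuous ψ := by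
  have := Fact.mk hL
  have hlift : Continuous hper.lift := continuous_coinduced_dom.2 hψ
  exact (CompactSpace.uniformContinuous_of_continuous hlift).comp
    (uniformContinuous_addMonoidHom_of_continuous
      (f := QuotientAddGroup.mk' (AddSubgroup.zmultiples L)) continuous_quotient_mk')

theorem memLp_periodMeasure_of_continuous_of_periodic (hL : L ≠ 0) (p : ENNReal) {ψ : ℝ → ℝ}
    (hψ : Continuous ψ) (hper : Function.Periodic ψ L) : MemLp ψ p (periodMeasure L) := by
  obtain ⟨B, hB⟩ := exists_norm_le_of_periodic hL hψ hper
  exact .of_bound hψ.aestronglyMeasurable B (.of_forall hB)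

theorem sq_mean_abs_le {N : ℕ} (γ : Fin N → ℝ) :
    ((N : ℝ)⁻¹ * ∑ j, |γ j|) ^ 2 ≤ (N : ℝ)⁻¹ * ∑ j, γ j ^ 2 := by
  have hsq := sq_sum_le_card_mul_sum_sq (s := Finset.univ) (f := fun j ↦ |γ j|)
  simp only [sq_abs, Finset.card_univ, Fintype.card_fin] at hsq
  obtain rfl | hN := eq_or_ne N 0
  · simp
  calc ((N : ℝ)⁻¹ * ∑ j, |γ j|) ^ 2 ≤ (N : ℝ)⁻¹ ^ 2 * (N * ∑ j, γ j ^ 2) := by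
        rw [mul_pow]
        gcongr
    _ = (N : ℝ)⁻¹ * ∑ j, γ j ^ 2 := by field_simp

theorem mean_abs_le_one {N : ℕ} {γ : Fin N → ℝ} (hγ : (N : ℝ)⁻¹ * ∑ j, γ j ^ 2 ≤ 1) :
    (N : ℝ)⁻¹ * ∑ j, |γ j| ≤ 1 :=
  (sq_le_one_iff₀ (by positivity)).1 ((sq_mean_abs_le γ).trans hγ)

theorem IsWellDistributed.abs_sub_node_le {N : ℕ} {s st : Fin N → ℝ}
    (hmesh : IsWellDistributed L κ M s st) {j : Fin N} {x : ℝ} (hx : x ∈ gridCell L N j) :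
    |x - s j| ≤ (L + |M|) / N := by
  have hN : (1 : ℝ) ≤ N := by exact_mod_cast j.pos
  have hxj : |x - j * L / N| ≤ L / N := by
    rw [abs_le, mul_div_assoc]
    constructor <;> linarith [hx.1, hx.2, hx.1.trans_le hx.2]
  have hnode : |s j - j * L / N| ≤ |M| / N :=
    (hmesh.node j).trans <| div_le_div₀ (abs_nonneg M) (le_abs_self M) (by positivity)
      (le_self_pow₀ hN κ.succ_ne_zero)
  calc |x - s j| = |(x - j * L / N) - (s j - j * L / N)| := by rw [sub_sub_sub_cancel_right]
    _ ≤ L / N + |M| / N := (abs_sub _ _).trans (add_le_add hxj hnode)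
    _ = (L + |M|) / N := (add_div _ _ _).symm

variable {ι : Type*} {N : ι → ℕ} {s st γ : ∀ n, Fin (N n) → ℝ} {ψ : ℝ → ℝ}

theorem tendsto_integral_mul_stepFunction_sub {ℱ : Filter ι} (hL : 0 < L) (hN : Tendsto N ℱ atTop)
    (hmesh : ∀ n, IsWellDistributed L κ M (s n) (st n))
    (hγ : ∀ n, (N n : ℝ)⁻¹ * ∑ j, γ n j ^ 2 ≤ 1) (hψ : Continuous ψ)
    (hper : Function.Periodic ψ L) :
    Tendsto (fun n ↦ ∫ x, ψ x * stepFunction L (γ n) x ∂periodMeasure L -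
      L / N n * ∑ j, γ n j * ψ (s n j)) ℱ (𝓝 0) := by
  rw [Metric.tendsto_nhds]
  intro ε hε
  obtain ⟨δ, hδ, hδψ⟩ := Metric.uniformContinuous_iff.1 (uniformContinuous_of_periodic hL hψ hper)
    (ε / (2 * L)) (by positivity)
  have hmeshSize : Tendsto (fun n ↦ (L + |M|) / (N n : ℝ)) ℱ (𝓝 0) :=
    (tendsto_const_div_atTop_nhds_zero_nat _).comp hN
  filter_upwards [hmeshSize.eventually_lt_const hδ] with n hn
  rw [Real.dist_0_eq_abs]
  calc |∫ x, ψ x * stepFunction L (γ n) x ∂periodMeasure L - L / N n * ∑ j, γ n j * ψ (s n j)|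
      ≤ L * (ε / (2 * L)) * ((N n : ℝ)⁻¹ * ∑ j, |γ n j|) :=
        abs_integral_mul_stepFunction_sub_le hL.le (integrable_periodMeasure_of_continuous hψ) _ _
          fun j x hx ↦ (hδψ (((hmesh n).abs_sub_node_le hx).trans_lt hn)).le
    _ ≤ L * (ε / (2 * L)) * 1 := by
        gcongr
        exact mean_abs_le_one (hγ n)
    _ = ε / 2 := by field_simp
    _ < ε := half_lt_self hε

theorem exists_tendsto_mean_mul_apply_node {U : Ultrafilter ι} (hL : 0 < L)
    (hN : Tendsto N U atTop) (hmesh : ∀ n, IsWellDistributed L κ M (s n) (st n))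
    (hγ : ∀ n, (N n : ℝ)⁻¹ * ∑ j, γ n j ^ 2 ≤ 1) :
    ∃ g, MemLp g 2 (periodMeasure L) ∧ ∀ ψ : ℝ → ℝ, Continuous ψ → Function.Periodic ψ L →
      Tendsto (fun n ↦ (N n : ℝ)⁻¹ * ∑ j, γ n j * ψ (s n j)) U
        (𝓝 (∫ x, ψ x * g x ∂periodMeasure L)) := by
  have hsq : ∀ n, ∫ x, stepFunction L (γ n) x ^ 2 ∂periodMeasure L ≤ L := fun n ↦ by
    rw [integral_stepFunction_sq hL.le, div_eq_mul_inv, mul_assoc]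
    exact mul_le_of_le_one_right hL.le (hγ n)
  obtain ⟨g, hg, hlim⟩ := exists_tendsto_integral_mul_of_integral_sq_le
    (fun n ↦ memLp_stepFunction L (γ n)) hsq U
  refine ⟨fun x ↦ L⁻¹ * g x, hg.const_mul L⁻¹, fun ψ hψ hper ↦ ?_⟩
  have hsum := ((hlim ψ (memLp_periodMeasure_of_continuous_of_periodic hL.ne' 2 hψ hper)).sub
    (tendsto_integral_mul_stepFunction_sub hL hN hmesh hγ hψ hper)).const_mul L⁻¹
  simp only [mul_left_comm _ L⁻¹, integral_const_mul]
  rw [sub_zero] at hsum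
  refine hsum.congr fun n ↦ ?_
  rw [sub_sub_cancel, div_eq_mul_inv, mul_assoc, inv_mul_cancel_left₀ hL.ne']

end WeakLimit

/-! ### Stability of the discrete problem -/

section DiscreteOperator

theorem sum_sq_sum_mul_le_of_sum_abs_le {ι ι' : Type*} [Fintype ι] [Fintype ι'] {k : ι → ι' → ℝ}
    {A B : ℝ} (hA : 0 ≤ A) (hrow : ∀ i, ∑ j, |k i j| ≤ A) (hcol : ∀ j, ∑ i, |k i j| ≤ B)
    (γ : ι' → ℝ) : ∑ i, (∑ j, γ j * k i j) ^ 2 ≤ A * B * ∑ j, γ j ^ 2 := by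
  have hCS (i : ι) : (∑ j, γ j * k i j) ^ 2 ≤ A * ∑ j, |k i j| * γ j ^ 2 :=
    calc (∑ j, γ j * k i j) ^ 2 ≤ (∑ j, |γ j * k i j|) ^ 2 :=
          sq_le_sq.2 ((Finset.abs_sum_le_sum_abs _ _).trans (le_abs_self _))
      _ ≤ (∑ j, |k i j|) * ∑ j, |k i j| * γ j ^ 2 :=
          Finset.sum_sq_le_sum_mul_sum_of_sq_le_mul _ (fun j _ ↦ abs_nonneg _)
            (fun j _ ↦ by positivity) fun j _ ↦ le_of_eq (by
              rw [abs_mul, mul_pow, sq_abs (γ j)]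
              ring)
      _ ≤ A * ∑ j, |k i j| * γ j ^ 2 := by
          gcongr
          exact hrow i
  calc ∑ i, (∑ j, γ j * k i j) ^ 2 ≤ ∑ i, A * ∑ j, |k i j| * γ j ^ 2 :=
        Finset.sum_le_sum fun i _ ↦ hCS i
    _ = A * ∑ j, (∑ i, |k i j|) * γ j ^ 2 := by
        rw [← Finset.mul_sum, Finset.sum_comm]
        simp only [Finset.sum_mul]
    _ ≤ A * ∑ j, B * γ j ^ 2 := by
        gcongr with j
        exact hcol j
    _ = A * B * ∑ j, γ j ^ 2 := by rw [← Finset.mul_sum, mul_assoc]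

/-- The quadrature approximation `N⁻¹ ∑ j, γ j * k x (s j)` at the nodes `s` of the integral
operator with kernel `k`, applied to the density with nodal values `γ`. -/
noncomputable def kernelSum (k : ℝ → ℝ → ℝ) {N : ℕ} (s γ : Fin N → ℝ) (x : ℝ) : ℝ :=
  (N : ℝ)⁻¹ * ∑ j, γ j * k x (s j)

variable {L : ℝ} {l : ℝ → ℂ} {κ N : ℕ} {M : ℝ} {s st : Fin N → ℝ}

theorem kernelSum_const_mul (k : ℝ → ℝ → ℝ) (s γ : Fin N → ℝ) (r x : ℝ) :
    kernelSum k s (fun j ↦ r * γ j) x = r * kernelSum k s γ x := by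
  simp only [kernelSum, mul_assoc, ← Finset.mul_sum]
  exact mul_left_comm _ _ _

theorem mean_mul_kernelSum (k : ℝ → ℝ → ℝ) (s γ : Fin N → ℝ) (c : ℝ) (u x : Fin N → ℝ) :
    c * ∑ i, kernelSum k s γ (x i) * u i =
      (N : ℝ)⁻¹ * ∑ j, γ j * (c * ∑ i, k (x i) (s j) * u i) := by
  simp only [kernelSum, Finset.mul_sum, Finset.sum_mul]
  rw [Finset.sum_comm]
  exact Finset.sum_congr rfl fun j _ ↦ Finset.sum_congr rfl fun i _ ↦ by ring

theorem IsSimpleClosedCurve.exists_abs_mean_mul_pvTransform_sub_le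
    (hl : IsSimpleClosedCurve L l) (hκ : κ ≠ 0) (M : ℝ) :
    ∃ C, ∀ᶠ N : ℕ in atTop, ∀ s st : Fin N → ℝ, IsWellDistributed L κ M s st →
      ∀ (γ : Fin N → ℝ) (φ : ℝ → ℝ), ContDiff ℝ ∞ φ → Function.Periodic φ L →
      |(N : ℝ)⁻¹ * ∑ j, γ j * pvTransform L l φ (s j) -
          L / N * ∑ i, kernelSum (tangentialKernel l) s γ (st i) * φ (st i)| ≤
        C / N ^ κ * Cnorm (κ + 1) φ * ((N : ℝ)⁻¹ * ∑ j, |γ j|) := by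
  obtain ⟨C, hC⟩ := hl.exists_abs_sum_tangentialKernel_sub_le hκ M
  refine ⟨C, ?_⟩
  filter_upwards [hC] with N hC s st hmesh γ φ hφ hper
  rw [mean_mul_kernelSum, ← mul_sub, ← Finset.sum_sub_distrib, abs_mul,
    abs_of_nonneg (inv_nonneg.2 N.cast_nonneg), mul_left_comm, Finset.mul_sum]
  gcongr
  refine (Finset.abs_sum_le_sum_abs _ _).trans (Finset.sum_le_sum fun j _ ↦ ?_)
  rw [← mul_sub, abs_mul, abs_sub_comm, mul_comm]
  gcongr
  exact hC s st hmesh φ hφ hper j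

theorem IsWellDistributed.sum_sq_kernelSum_cotKernel_sub_le (hmesh : IsWellDistributed L κ M s st)
    (hL : 0 < L) (hN : N ≠ 0) (hNM : 4 * π * M / L ≤ N ^ κ) (γ : Fin N → ℝ) :
    ∑ i : Fin N, (kernelSum (fun x t ↦ cotKernel L (x - t)) s γ (st i) -
        π / L * ((N : ℝ)⁻¹ * ∑ j : Fin N, gridCot N (i.1 - j.1) * γ j)) ^ 2 ≤
      (4 * π ^ 2 * M / L ^ 2 / N ^ κ) ^ 2 * ∑ j, γ j ^ 2 := by
  set k : Fin N → Fin N → ℝ := fun i j ↦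
    (N : ℝ)⁻¹ * (cotKernel L (st i - s j) - π / L * gridCot N (i.1 - j.1))
  have hk (i j : Fin N) : |k i j| ≤
      4 * π ^ 2 * M / L ^ 2 / N ^ (κ + 2) * (1 + gridCot N (i.1 - j.1) ^ 2) := by
    rw [abs_mul, abs_of_nonneg (by positivity)]
    calc (N : ℝ)⁻¹ * |cotKernel L (st i - s j) - π / L * gridCot N (i.1 - j.1)|
        ≤ (N : ℝ)⁻¹ * (4 * π ^ 2 * M / L ^ 2 / N ^ (κ + 1) *
            (1 + gridCot N (i.1 - j.1) ^ 2)) := by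
          gcongr
          exact hmesh.abs_cotKernel_sub_gridCot_le hL hN hNM i j
      _ = _ := by
          rw [pow_succ (N : ℝ) (κ + 1)]
          field_simp
  have hc : 4 * π ^ 2 * M / L ^ 2 / N ^ (κ + 2) * N ^ 2 = 4 * π ^ 2 * M / L ^ 2 / N ^ κ := by
    rw [pow_add]
    field_simp
  have hrow (i : Fin N) : ∑ j, |k i j| ≤ 4 * π ^ 2 * M / L ^ 2 / N ^ κ := by
    refine (Finset.sum_le_sum fun j _ ↦ hk i j).trans_eq ?_
    rw [← Finset.mul_sum, sum_one_add_gridCot_sq' hN, hc]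
  have hcol (j : Fin N) : ∑ i, |k i j| ≤ 4 * π ^ 2 * M / L ^ 2 / N ^ κ := by
    refine (Finset.sum_le_sum fun i _ ↦ hk i j).trans_eq ?_
    rw [← Finset.mul_sum, sum_one_add_gridCot_sq hN, hc]
  have hA : 0 ≤ 4 * π ^ 2 * M / L ^ 2 / N ^ κ :=
    (Finset.sum_nonneg fun j _ ↦ abs_nonneg _).trans (hrow ⟨0, Nat.pos_of_ne_zero hN⟩)
  rw [sq (4 * π ^ 2 * M / L ^ 2 / N ^ κ : ℝ)]
  refine le_of_eq_of_le (Finset.sum_congr rfl fun i _ ↦ ?_)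
    (sum_sq_sum_mul_le_of_sum_abs_le hA hrow hcol γ)
  simp only [kernelSum, k, Finset.mul_sum, ← Finset.sum_sub_distrib]
  congr 1
  exact Finset.sum_congr rfl fun j _ ↦ by ring

theorem IsSimpleClosedCurve.kernelSum_tangentialKernel_eq (hl : IsSimpleClosedCurve L l) {x : ℝ}
    (hx : ∀ j, circlePt L x ≠ circlePt L (s j)) (γ : Fin N → ℝ) :
    kernelSum (tangentialKernel l) s γ x = kernelSum (fun x t ↦ cotKernel L (x - t)) s γ x +
      kernelSum (Function.curry (regularKernel L l)) s γ x := by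
  simp only [kernelSum, ← mul_add, ← Finset.sum_add_distrib, Function.curry_apply,
    tangentialKernel_eq hl (hx _)]

/- The cotangent matrix is, up to the factor `π / L`, an isometry on vectors of mean zero. -/
theorem IsSimpleClosedCurve.mean_sq_le_of_isWellDistributed (hl : IsSimpleClosedCurve L l)
    (hmesh : IsWellDistributed L κ M s st) (hN : N ≠ 0) (hNM : 4 * π * M / L ≤ N ^ κ)
    (γ : Fin N → ℝ) :
    (π / L) ^ 2 * ((N : ℝ)⁻¹ * ∑ j, γ j ^ 2) ≤ (π / L) ^ 2 * ((N : ℝ)⁻¹ * ∑ j, γ j) ^ 2 +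
      3 * ((N : ℝ)⁻¹ * ∑ i, kernelSum (tangentialKernel l) s γ (st i) ^ 2 +
        (N : ℝ)⁻¹ * ∑ i, kernelSum (Function.curry (regularKernel L l)) s γ (st i) ^ 2 +
        (4 * π ^ 2 * M / L ^ 2 / N ^ κ) ^ 2 * ((N : ℝ)⁻¹ * ∑ j, γ j ^ 2)) := by
  set a := fun i ↦ kernelSum (tangentialKernel l) s γ (st i)
  set F := fun i ↦ kernelSum (Function.curry (regularKernel L l)) s γ (st i)
  set G := fun i : Fin N ↦ (N : ℝ)⁻¹ * ∑ j : Fin N, gridCot N (i.1 - j.1) * γ j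
  set e := fun i ↦ kernelSum (fun x t ↦ cotKernel L (x - t)) s γ (st i) - π / L * G i
  have he : ∑ i, e i ^ 2 ≤ (4 * π ^ 2 * M / L ^ 2 / N ^ κ) ^ 2 * ∑ j, γ j ^ 2 :=
    hmesh.sum_sq_kernelSum_cotKernel_sub_le hl.pos hN hNM γ
  have hG (i : Fin N) : (π / L) ^ 2 * G i ^ 2 ≤ 3 * (a i ^ 2 + F i ^ 2 + e i ^ 2) := by
    have hi : a i = π / L * G i + e i + F i := by
      simp only [a, F, e, add_sub_cancel,
        hl.kernelSum_tangentialKernel_eq (hmesh.circlePt_ne hl.pos hN hNM i) γ]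
    rw [← mul_pow, show π / L * G i = a i - F i - e i by linarith]
    nlinarith [sq_nonneg (a i + F i), sq_nonneg (a i + e i), sq_nonneg (F i - e i)]
  have hsum := Finset.sum_le_sum fun i (_ : i ∈ Finset.univ) ↦ hG i
  rw [← Finset.mul_sum, sum_sq_sum_gridCot_mul hN, ← Finset.mul_sum, Finset.sum_add_distrib,
    Finset.sum_add_distrib] at hsum
  have hmean : (N : ℝ)⁻¹ * ((π / L) ^ 2 * (∑ j, γ j ^ 2 - N * ((N : ℝ)⁻¹ * ∑ j, γ j) ^ 2)) ≤
      (N : ℝ)⁻¹ * (3 * (∑ i, a i ^ 2 + ∑ i, F i ^ 2 +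
        (4 * π ^ 2 * M / L ^ 2 / N ^ κ) ^ 2 * ∑ j, γ j ^ 2)) := by
    refine mul_le_mul_of_nonneg_left (hsum.trans ?_) (by positivity)
    linarith
  have hcancel : (N : ℝ)⁻¹ * ((π / L) ^ 2 * (∑ j, γ j ^ 2 - N * ((N : ℝ)⁻¹ * ∑ j, γ j) ^ 2)) =
      (π / L) ^ 2 * ((N : ℝ)⁻¹ * ∑ j, γ j ^ 2) - (π / L) ^ 2 * ((N : ℝ)⁻¹ * ∑ j, γ j) ^ 2 := by
    field_simp
  linarith

end DiscreteOperator

section Stability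

variable {ι : Type*} {ℱ : Filter ι} {L : ℝ}

theorem tendstoUniformly_of_equicontinuous_of_periodic {α : Type*} [UniformSpace α] (hL : 0 < L)
    {F : ι → ℝ → α} {f : ℝ → α} (hF : Equicontinuous F) (hFper : ∀ n, Function.Periodic (F n) L)
    (hfper : Function.Periodic f L) (hlim : ∀ x, Tendsto (fun n ↦ F n x) ℱ (𝓝 (f x))) :
    TendstoUniformly F f ℱ := by
  have hIcc : TendstoUniformlyOn F f ℱ (Set.Icc 0 L) := by
    have := (EquicontinuousOn.tendsto_uniformOnFun_iff_pi (𝔖 := {K | IsCompact K})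
      (fun K hK ↦ hK) (Set.sUnion_eq_univ_iff.2 fun x ↦ ⟨{x}, isCompact_singleton, rfl⟩)
      (fun K _ ↦ hF.equicontinuousOn K) ℱ f).2
      (tendsto_pi_nhds.2 hlim)
    exact UniformOnFun.tendsto_iff_tendstoUniformlyOn.1 this _ isCompact_Icc
  intro u hu
  filter_upwards [hIcc u hu] with n hn x
  have hper : Function.Periodic (fun x ↦ (f x, F n x)) L := fun x ↦
    Prod.ext (hfper x) (hFper n x)
  obtain ⟨y, hy, hxy⟩ := hper.exists_mem_Ico₀ hL x
  exact (congrArg (· ∈ u) hxy).mpr (hn y (Set.Ico_subset_Icc_self hy))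

theorem tendsto_mean_sq_of_tendstoUniformly {F : ι → ℝ → ℝ} (hF : TendstoUniformly F 0 ℱ)
    {N : ι → ℕ} (x : ∀ n, Fin (N n) → ℝ) :
    Tendsto (fun n ↦ (N n : ℝ)⁻¹ * ∑ i, F n (x n i) ^ 2) ℱ (𝓝 0) := by
  refine Metric.nhds_basis_closedBall.tendsto_right_iff.2 fun ε hε ↦ ?_
  filter_upwards [Metric.tendstoUniformly_iff.1 hF (√ε) (by positivity)] with n hn
  have hsq (i : Fin (N n)) : F n (x n i) ^ 2 ≤ ε := by
    have hi := (hn (x n i)).le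
    rw [Pi.zero_apply, dist_zero_left, Real.norm_eq_abs] at hi
    rw [← sq_abs]
    exact (Real.le_sqrt (abs_nonneg _) hε.le).1 hi
  rw [mem_closedBall_zero_iff, Real.norm_of_nonneg (by positivity)]
  calc (N n : ℝ)⁻¹ * ∑ i, F n (x n i) ^ 2 ≤ (N n : ℝ)⁻¹ * (N n * ε) := by
        gcongr
        simpa using Finset.sum_le_sum fun i (_ : i ∈ Finset.univ) ↦ hsq i
    _ ≤ ε := by
        rw [← mul_assoc]
        exact mul_le_of_le_one_left hε.le inv_mul_le_one

theorem IsSmoothPeriodicKernel.exists_lipschitzWith {E : Type*} [NormedAddCommGroup E]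
    [NormedSpace ℝ E] {F : ℝ × ℝ → E} (hF : IsSmoothPeriodicKernel L F) (hL : 0 < L) :
    ∃ K, ∀ t, LipschitzWith K fun s ↦ F (s, t) := by
  obtain ⟨C, hC⟩ := hF.deriv_left.exists_norm_le hL
  refine ⟨C.toNNReal, fun t ↦ lipschitzWith_of_nnnorm_deriv_le
    ((hF.contDiff_left t).differentiable (by simp)) fun s ↦ ?_⟩
  exact NNReal.le_toNNReal_of_coe_le (hC (s, t))

theorem lipschitzWith_kernelSum {k : ℝ → ℝ → ℝ} {K : NNReal}
    (hk : ∀ t, LipschitzWith K fun s ↦ k s t) {N : ℕ} (s : Fin N → ℝ) {γ : Fin N → ℝ}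
    (hγ : (N : ℝ)⁻¹ * ∑ j, |γ j| ≤ 1) : LipschitzWith K (kernelSum k s γ) := by
  refine LipschitzWith.of_dist_le_mul fun x y ↦ ?_
  have hterm (j : Fin N) : |γ j * k x (s j) - γ j * k y (s j)| ≤ |γ j| * (K * dist x y) := by
    rw [← mul_sub, abs_mul]
    gcongr
    exact (hk (s j)).dist_le_mul x y
  rw [Real.dist_eq, kernelSum, kernelSum, ← mul_sub, ← Finset.sum_sub_distrib, abs_mul,
    abs_of_nonneg (by positivity)]
  calc (N : ℝ)⁻¹ * |∑ j, (γ j * k x (s j) - γ j * k y (s j))|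
      ≤ (N : ℝ)⁻¹ * ∑ j, |γ j| * (K * dist x y) := by
        gcongr
        exact (Finset.abs_sum_le_sum_abs _ _).trans (Finset.sum_le_sum fun j _ ↦ hterm j)
    _ = ((N : ℝ)⁻¹ * ∑ j, |γ j|) * (K * dist x y) := by rw [← Finset.sum_mul, mul_assoc]
    _ ≤ K * dist x y := mul_le_of_le_one_left (by positivity) hγ

theorem abs_mean_mul_le {N : ℕ} {B : ℝ} (a u : Fin N → ℝ) (hu : ∀ i, |u i| ≤ B) :
    |(N : ℝ)⁻¹ * ∑ i, a i * u i| ≤ (N : ℝ)⁻¹ * (∑ i, |a i|) * B := by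
  rw [abs_mul, abs_of_nonneg (by positivity), mul_assoc, Finset.sum_mul]
  gcongr
  refine (Finset.abs_sum_le_sum_abs _ _).trans (Finset.sum_le_sum fun i _ ↦ ?_)
  rw [abs_mul]
  gcongr
  exact hu i

theorem tendsto_mean_abs_of_tendsto_mean_sq {N : ι → ℕ} {a : ∀ n, Fin (N n) → ℝ}
    (ha : Tendsto (fun n ↦ (N n : ℝ)⁻¹ * ∑ i, a n i ^ 2) ℱ (𝓝 0)) :
    Tendsto (fun n ↦ (N n : ℝ)⁻¹ * ∑ i, |a n i|) ℱ (𝓝 0) := by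
  have hsqrt := (Real.continuous_sqrt.tendsto 0).comp ha
  rw [Real.sqrt_zero] at hsqrt
  exact squeeze_zero (fun n ↦ by positivity) (fun n ↦ Real.le_sqrt_of_sq_le (sq_mean_abs_le _))
    hsqrt

theorem tendsto_const_div_natCast_pow {κ : ℕ} (hκ : κ ≠ 0) (c : ℝ) {N : ι → ℕ}
    (hN : Tendsto N ℱ atTop) : Tendsto (fun n ↦ c / (N n : ℝ) ^ κ) ℱ (𝓝 0) :=
  (tendsto_const_div_pow c κ hκ).comp (tendsto_natCast_atTop_atTop.comp hN)

namespace IsSimpleClosedCurve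

variable {l : ℝ → ℂ} {φ : ℝ → ℝ}

theorem continuous_pvTransform (hl : IsSimpleClosedCurve L l) (hφ : ContDiff ℝ ∞ φ)
    (hper : Function.Periodic φ L) : Continuous (pvTransform L l φ) :=
  intervalIntegral.continuous_parametric_intervalIntegral_of_continuous'
    (f := fun t s ↦ regularizedIntegrand L l φ (s, t))
    ((hl.isSmoothPeriodicKernel_regularizedIntegrand hφ hper).contDiff.continuous.comp
      continuous_swap) 0 L

theorem periodic_pvTransform (hl : IsSimpleClosedCurve L l) (hφ : ContDiff ℝ ∞ φ)
    (hper : Function.Periodic φ L) : Function.Periodic (pvTransform L l φ) L := fun t ↦ by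
  simp only [pvTransform,
    (hl.isSmoothPeriodicKernel_regularizedIntegrand hφ hper).periodic_right _ t]

theorem pvTransform_one (hl : IsSimpleClosedCurve L l) (t : ℝ) :
    pvTransform L l (fun _ ↦ 1) t = 0 := by
  rw [hl.pvTransform_eq_neg_integral contDiff_const fun _ ↦ rfl]
  simp only [deriv_const', mul_zero, integral_zero, neg_zero]

variable {κ : ℕ} {M : ℝ} {N : ι → ℕ} {s st γ : ∀ n, Fin (N n) → ℝ}

theorem tendsto_mean_mul_pvTransform (hl : IsSimpleClosedCurve L l) (hκ : κ ≠ 0)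
    (hN : Tendsto N ℱ atTop) (hmesh : ∀ n, IsWellDistributed L κ M (s n) (st n))
    (hγ : ∀ n, (N n : ℝ)⁻¹ * ∑ j, γ n j ^ 2 ≤ 1)
    (ha : Tendsto (fun n ↦ (N n : ℝ)⁻¹ *
      ∑ i, kernelSum (tangentialKernel l) (s n) (γ n) (st n i) ^ 2) ℱ (𝓝 0))
    (hφ : ContDiff ℝ ∞ φ) (hper : Function.Periodic φ L) :
    Tendsto (fun n ↦ (N n : ℝ)⁻¹ * ∑ j, γ n j * pvTransform L l φ (s n j)) ℱ (𝓝 0) := by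
  obtain ⟨C, hC⟩ := hl.exists_abs_mean_mul_pvTransform_sub_le hκ M
  set a := fun n i ↦ kernelSum (tangentialKernel l) (s n) (γ n) (st n i)
  have hdiff : Tendsto (fun n ↦ (N n : ℝ)⁻¹ * ∑ j, γ n j * pvTransform L l φ (s n j) -
      L / N n * ∑ i, a n i * φ (st n i)) ℱ (𝓝 0) := by
    have hlim := (tendsto_const_div_natCast_pow hκ |C| hN).mul_const (Cnorm (κ + 1) φ)
    rw [zero_mul] at hlim
    refine squeeze_zero_norm' ?_ hlim
    filter_upwards [hN.eventually hC] with n hC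
    refine (hC _ _ (hmesh n) (γ n) φ hφ hper).trans ?_
    have hB := Cnorm_nonneg (κ + 1) φ
    calc C / N n ^ κ * Cnorm (κ + 1) φ * ((N n : ℝ)⁻¹ * ∑ j, |γ n j|)
        ≤ |C| / N n ^ κ * Cnorm (κ + 1) φ * 1 := by
          gcongr
          · exact le_abs_self C
          · exact mean_abs_le_one (hγ n)
      _ = |C| / N n ^ κ * Cnorm (κ + 1) φ := mul_one _
  have hdisc : Tendsto (fun n ↦ L / N n * ∑ i, a n i * φ (st n i)) ℱ (𝓝 0) := by
    have hlim := ((tendsto_mean_abs_of_tendsto_mean_sq ha).mul_const (Cnorm (κ + 1) φ)).const_mul L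
    rw [zero_mul, mul_zero] at hlim
    refine squeeze_zero_norm (fun n ↦ ?_) hlim
    rw [div_eq_mul_inv, mul_assoc, norm_mul, Real.norm_of_nonneg hl.pos.le]
    exact mul_le_mul_of_nonneg_left (abs_mean_mul_le _ _ fun i ↦
      abs_le_Cnorm hl.pos.ne' (contDiff_infty.1 hφ _) hper _) hl.pos.le
  simpa only [sub_add_cancel, add_zero] using hdiff.add hdisc

theorem tendsto_mean_mul_apply_node (hl : IsSimpleClosedCurve L l) (hκ : κ ≠ 0)
    (hN : Tendsto N ℱ atTop) (hmesh : ∀ n, IsWellDistributed L κ M (s n) (st n))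
    (hγ : ∀ n, (N n : ℝ)⁻¹ * ∑ j, γ n j ^ 2 ≤ 1)
    (ha : Tendsto (fun n ↦ (N n : ℝ)⁻¹ *
      ∑ i, kernelSum (tangentialKernel l) (s n) (γ n) (st n i) ^ 2) ℱ (𝓝 0))
    (hmean : Tendsto (fun n ↦ (N n : ℝ)⁻¹ * ∑ j, γ n j) ℱ (𝓝 0))
    {ψ : ℝ → ℝ} (hψ : Continuous ψ) (hper : Function.Periodic ψ L) :
    Tendsto (fun n ↦ (N n : ℝ)⁻¹ * ∑ j, γ n j * ψ (s n j)) ℱ (𝓝 0) := by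
  refine tendsto_iff_ultrafilter _ _ _ |>.2 fun U hU ↦ ?_
  obtain ⟨g, hg, hlim⟩ := exists_tendsto_mean_mul_apply_node hl.pos (hN.mono_left hU) hmesh hγ
  have hg_mean : ∫ x, g x ∂periodMeasure L = 0 := by
    have hone := hlim (fun _ ↦ 1) continuous_const fun _ ↦ rfl
    simp only [mul_one, one_mul] at hone
    exact tendsto_nhds_unique hone (hmean.mono_left hU)
  have hg_orth (φ : ℝ → ℝ) (hφ : ContDiff ℝ ∞ φ) (hφper : Function.Periodic φ L) :
      ∫ x, g x * pvTransform L l φ x ∂periodMeasure L = 0 := by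
    simp only [mul_comm (g _)]
    exact tendsto_nhds_unique
      (hlim _ (hl.continuous_pvTransform hφ hφper) (hl.periodic_pvTransform hφ hφper))
      ((hl.tendsto_mean_mul_pvTransform hκ hN hmesh hγ ha hφ hφper).mono_left hU)
  have hψg :=
    hl.integral_mul_eq_zero_of_integral_mul_pvTransform_eq_zero hg hg_mean hg_orth hψ hper
  exact hψg ▸ hlim ψ hψ hper

theorem tendsto_mean_sq_kernelSum_regularKernel (hl : IsSimpleClosedCurve L l) (hκ : κ ≠ 0)
    (hN : Tendsto N ℱ atTop) (hmesh : ∀ n, IsWellDistributed L κ M (s n) (st n))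
    (hγ : ∀ n, (N n : ℝ)⁻¹ * ∑ j, γ n j ^ 2 ≤ 1)
    (ha : Tendsto (fun n ↦ (N n : ℝ)⁻¹ *
      ∑ i, kernelSum (tangentialKernel l) (s n) (γ n) (st n i) ^ 2) ℱ (𝓝 0))
    (hmean : Tendsto (fun n ↦ (N n : ℝ)⁻¹ * ∑ j, γ n j) ℱ (𝓝 0)) :
    Tendsto (fun n ↦ (N n : ℝ)⁻¹ *
      ∑ i, kernelSum (Function.curry (regularKernel L l)) (s n) (γ n) (st n i) ^ 2) ℱ (𝓝 0) := by
  have hR := hl.isSmoothPeriodicKernel_regularKernel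
  obtain ⟨K, hK⟩ := hR.exists_lipschitzWith hl.pos
  have hequi : Equicontinuous fun n ↦ kernelSum (Function.curry (regularKernel L l)) (s n) (γ n) :=
    (LipschitzWith.uniformEquicontinuous _ K fun n ↦
      lipschitzWith_kernelSum hK (s n) (mean_abs_le_one (hγ n))).equicontinuous
  have hper (n : ι) :
      Function.Periodic (kernelSum (Function.curry (regularKernel L l)) (s n) (γ n)) L := fun x ↦ by
    simp only [kernelSum, Function.curry, hR.periodic_left _ x]
  have hlim (x : ℝ) : Tendsto
      (fun n ↦ kernelSum (Function.curry (regularKernel L l)) (s n) (γ n) x) ℱ (𝓝 0) :=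
    hl.tendsto_mean_mul_apply_node hκ hN hmesh hγ ha hmean
      (hR.contDiff.continuous.comp (Continuous.prodMk_right x)) (hR.periodic_right x)
  exact tendsto_mean_sq_of_tendstoUniformly (tendstoUniformly_of_equicontinuous_of_periodic hl.pos
    hequi hper (fun _ ↦ rfl) hlim) st

theorem tendsto_mean_sq (hl : IsSimpleClosedCurve L l) (hκ : κ ≠ 0)
    (hN : Tendsto N ℱ atTop) (hmesh : ∀ n, IsWellDistributed L κ M (s n) (st n))
    (hγ : ∀ n, (N n : ℝ)⁻¹ * ∑ j, γ n j ^ 2 ≤ 1)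
    (ha : Tendsto (fun n ↦ (N n : ℝ)⁻¹ *
      ∑ i, kernelSum (tangentialKernel l) (s n) (γ n) (st n i) ^ 2) ℱ (𝓝 0))
    (hmean : Tendsto (fun n ↦ (N n : ℝ)⁻¹ * ∑ j, γ n j) ℱ (𝓝 0)) :
    Tendsto (fun n ↦ (N n : ℝ)⁻¹ * ∑ j, γ n j ^ 2) ℱ (𝓝 0) := by
  have hF := hl.tendsto_mean_sq_kernelSum_regularKernel hκ hN hmesh hγ ha hmean
  have hcot := (tendsto_const_div_natCast_pow hκ (4 * π ^ 2 * M / L ^ 2) hN).pow 2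
  have hlim := (((hmean.pow 2).const_mul ((π / L) ^ 2)).add
    (((ha.add hF).add hcot).const_mul 3)).const_mul ((π / L) ^ 2)⁻¹
  simp only [ne_eq, OfNat.ofNat_ne_zero, not_false_eq_true, zero_pow, add_zero, mul_zero] at hlim
  refine squeeze_zero' (Eventually.of_forall fun n ↦ by positivity) ?_ hlim
  filter_upwards [hN.eventually (eventually_ne_zero_and_le_pow hκ (4 * π * M / L))] with n h
  obtain ⟨hn, hnM⟩ := h
  have hpos : 0 < (π / L) ^ 2 := pow_pos (div_pos Real.pi_pos hl.pos) 2
  refine (le_inv_mul_iff₀ hpos).2 ((hl.mean_sq_le_of_isWellDistributed (hmesh n) hn hnM _).trans ?_)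
  gcongr
  exact mul_le_of_le_one_right (sq_nonneg _) (hγ n)

end IsSimpleClosedCurve

/-- The squared size of the data of the discrete problem with kernel `k` solved by `γ`: the mean
square of the values collocated at `st` plus the square of the mean of `γ`. -/
noncomputable def dataEnergy (k : ℝ → ℝ → ℝ) {N : ℕ} (s st γ : Fin N → ℝ) : ℝ :=
  (N : ℝ)⁻¹ * ∑ i, kernelSum k s γ (st i) ^ 2 + ((N : ℝ)⁻¹ * ∑ j, γ j) ^ 2

theorem dataEnergy_nonneg (k : ℝ → ℝ → ℝ) {N : ℕ} (s st γ : Fin N → ℝ) :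
    0 ≤ dataEnergy k s st γ := by
  unfold dataEnergy
  positivity

theorem dataEnergy_const_mul (k : ℝ → ℝ → ℝ) {N : ℕ} (s st γ : Fin N → ℝ) (r : ℝ) :
    dataEnergy k s st (fun j ↦ r * γ j) = r ^ 2 * dataEnergy k s st γ := by
  simp only [dataEnergy, kernelSum_const_mul, mul_pow, ← Finset.mul_sum]
  ring

theorem exists_mean_sq_eq_one_of_mul_dataEnergy_lt {k : ℝ → ℝ → ℝ} {N : ℕ} {s st γ : Fin N → ℝ}
    {C : ℝ} (hC : 0 < C) (h : C * dataEnergy k s st γ < (N : ℝ)⁻¹ * ∑ j, γ j ^ 2) :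
    ∃ γ' : Fin N → ℝ, (N : ℝ)⁻¹ * ∑ j, γ' j ^ 2 = 1 ∧ dataEnergy k s st γ' ≤ C⁻¹ := by
  set σ := (N : ℝ)⁻¹ * ∑ j, γ j ^ 2
  have hσ : 0 < σ := (mul_nonneg hC.le (dataEnergy_nonneg k s st γ)).trans_lt h
  have hr : (√σ)⁻¹ ^ 2 = σ⁻¹ := by rw [inv_pow, Real.sq_sqrt hσ.le]
  refine ⟨fun j ↦ (√σ)⁻¹ * γ j, ?_, ?_⟩
  · simp only [mul_pow, ← Finset.mul_sum]
    rw [hr, mul_left_comm]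
    exact inv_mul_cancel₀ hσ.ne'
  · rw [dataEnergy_const_mul, hr, inv_mul_le_iff₀ hσ, ← div_eq_mul_inv, le_div_iff₀' hC]
    exact h.le

theorem IsSimpleClosedCurve.tendsto_mean_sq_of_tendsto_dataEnergy {l : ℝ → ℂ}
    (hl : IsSimpleClosedCurve L l) {κ : ℕ} (hκ : κ ≠ 0) {M : ℝ} {N : ι → ℕ}
    {s st γ : ∀ n, Fin (N n) → ℝ} (hN : Tendsto N ℱ atTop)
    (hmesh : ∀ n, IsWellDistributed L κ M (s n) (st n))
    (hγ : ∀ n, (N n : ℝ)⁻¹ * ∑ j, γ n j ^ 2 ≤ 1)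
    (hE : Tendsto (fun n ↦ dataEnergy (tangentialKernel l) (s n) (st n) (γ n)) ℱ (𝓝 0)) :
    Tendsto (fun n ↦ (N n : ℝ)⁻¹ * ∑ j, γ n j ^ 2) ℱ (𝓝 0) := by
  have ha := squeeze_zero (fun n ↦ by positivity)
    (fun n ↦ le_add_of_nonneg_right (sq_nonneg ((N n : ℝ)⁻¹ * ∑ j, γ n j))) hE
  have hsq : Tendsto (fun n ↦ ((N n : ℝ)⁻¹ * ∑ j, γ n j) ^ 2) ℱ (𝓝 0) :=
    squeeze_zero (fun n ↦ sq_nonneg _) (fun n ↦ le_add_of_nonneg_left (by positivity)) hE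
  have hmean : Tendsto (fun n ↦ (N n : ℝ)⁻¹ * ∑ j, γ n j) ℱ (𝓝 0) := by
    have hsqrt := (Real.continuous_sqrt.tendsto 0).comp hsq
    rw [Real.sqrt_zero] at hsqrt
    exact squeeze_zero_norm (fun n ↦ (Real.sqrt_sq_eq_abs _).ge) hsqrt
  exact hl.tendsto_mean_sq hκ hN hmesh hγ ha hmean

theorem IsSimpleClosedCurve.exists_mean_sq_le_mul_dataEnergy {l : ℝ → ℂ}
    (hl : IsSimpleClosedCurve L l) {κ : ℕ} (hκ : κ ≠ 0) (M : ℝ) :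
    ∃ C, ∀ᶠ N : ℕ in atTop, ∀ s st : Fin N → ℝ, IsWellDistributed L κ M s st →
      ∀ γ : Fin N → ℝ,
        (N : ℝ)⁻¹ * ∑ j, γ j ^ 2 ≤ C * dataEnergy (tangentialKernel l) s st γ := by
  by_contra! h
  have hex (n : ℕ) : ∃ N ≥ n, ∃ s st γ : Fin N → ℝ, IsWellDistributed L κ M s st ∧
      (N : ℝ)⁻¹ * ∑ j, γ j ^ 2 = 1 ∧
      dataEnergy (tangentialKernel l) s st γ ≤ ((n : ℝ) + 1)⁻¹ := by
    obtain ⟨N, hN, s, st, hmesh, γ, hγ⟩ := frequently_atTop.1 (h (n + 1)) n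
    obtain ⟨γ', hγ', hE⟩ := exists_mean_sq_eq_one_of_mul_dataEnergy_lt n.cast_add_one_pos hγ
    exact ⟨N, hN, s, st, γ', hmesh, hγ', hE⟩
  choose N hN s st γ hmesh hγ hE using hex
  have hEzero : Tendsto (fun n ↦ dataEnergy (tangentialKernel l) (s n) (st n) (γ n)) atTop (𝓝 0) :=
    squeeze_zero (fun n ↦ dataEnergy_nonneg _ _ _ _) hE
      (by simpa only [one_div] using tendsto_one_div_add_atTop_nhds_zero_nat (𝕜 := ℝ))
  have hlim := hl.tendsto_mean_sq_of_tendsto_dataEnergy hκ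
    (tendsto_atTop_mono hN tendsto_id) hmesh (fun n ↦ (hγ n).le) hEzero
  simp only [hγ] at hlim
  exact one_ne_zero (tendsto_nhds_unique tendsto_const_nhds hlim)

end Stability

/-! ### Weak convergence -/

section CnormQuadrature

variable {L : ℝ} {m : ℕ} {f g : ℝ → ℝ}

theorem Cnorm_mul_le (hL : L ≠ 0) (hf : ContDiff ℝ m f) (hg : ContDiff ℝ (m + 1 : ℕ) g)
    (hfper : Function.Periodic f L) (hgper : Function.Periodic g L) :
    Cnorm m (fun x ↦ f x * g x) ≤ 2 ^ m * (Cnorm m f * Cnorm (m + 1) g) := by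
  have := Cnorm_nonneg m f
  have := Cnorm_nonneg (m + 1) g
  refine ciSup_le fun p ↦ ?_
  have hp : (p.1 : ℕ) ≤ m := p.1.is_le
  calc |iteratedDeriv p.1 (fun x ↦ f x * g x) p.2|
      ≤ 2 ^ (p.1 : ℕ) * (Cnorm m f * Cnorm (m + 1) g) :=
        norm_iteratedDeriv_mul_le_of_le (hf.of_le (by exact_mod_cast hp)).contDiffAt
          (hg.of_le (by exact_mod_cast hp.trans m.le_succ)).contDiffAt
          (fun i hi ↦ abs_iteratedDeriv_le_Cnorm hL hf hfper (hi.trans hp) _)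
          (fun i hi ↦ abs_iteratedDeriv_le_Cnorm hL hg hgper (hi.trans (hp.trans m.le_succ)) _)
    _ ≤ 2 ^ m * (Cnorm m f * Cnorm (m + 1) g) := by
        gcongr
        exact one_le_two

theorem IsWellDistributed.abs_sum_collocation_sub_integral_le {κ N : ℕ} {M : ℝ}
    {s st : Fin N → ℝ} (hmesh : IsWellDistributed L κ M s st) (hL : 0 < L) (hκ : κ ≠ 0)
    (hN : N ≠ 0) (hf : ContDiff ℝ κ f) (hper : Function.Periodic f L) :
    |L / N * ∑ i, f (st i) - ∫ x in (0 : ℝ)..L, f x| ≤ L * (L ^ κ + M) / N ^ κ * Cnorm κ f := by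
  refine abs_sum_sub_integral_le hL hκ hf hper (fun x ↦ ?_)
    (abs_iteratedDeriv_le_Cnorm hL.ne' hf hper le_rfl) hN hmesh.collocation
  simpa only [iteratedDeriv_one] using
    abs_iteratedDeriv_le_Cnorm hL.ne' hf hper (Nat.one_le_iff_ne_zero.2 hκ) x

theorem IsWellDistributed.abs_sum_collocation_mul_sub_integral_le {κ N : ℕ} {M : ℝ}
    {s st : Fin N → ℝ} (hmesh : IsWellDistributed L κ M s st) (hL : 0 < L) (hκ : κ ≠ 0)
    (hN : N ≠ 0) (hf : ContDiff ℝ κ f) (hg : ContDiff ℝ (κ + 1 : ℕ) g)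
    (hfper : Function.Periodic f L) (hgper : Function.Periodic g L) :
    |L / N * ∑ i, f (st i) * g (st i) - ∫ x in (0 : ℝ)..L, f x * g x| ≤
      |L * (L ^ κ + M)| * 2 ^ κ / N ^ κ * Cnorm κ f * Cnorm (κ + 1) g :=
  calc |L / N * ∑ i, f (st i) * g (st i) - ∫ x in (0 : ℝ)..L, f x * g x|
      ≤ L * (L ^ κ + M) / N ^ κ * Cnorm κ fun x ↦ f x * g x :=
        hmesh.abs_sum_collocation_sub_integral_le hL hκ hN
          (hf.mul (hg.of_le (by exact_mod_cast κ.le_succ))) (hfper.mul hgper)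
    _ ≤ |L * (L ^ κ + M)| / N ^ κ * (2 ^ κ * (Cnorm κ f * Cnorm (κ + 1) g)) := by
        gcongr
        · exact Cnorm_nonneg _ _
        · exact le_abs_self _
        · exact Cnorm_mul_le hL.ne' hf hg hfper hgper
    _ = |L * (L ^ κ + M)| * 2 ^ κ / N ^ κ * Cnorm κ f * Cnorm (κ + 1) g := by ring

end CnormQuadrature

section AlmostEqual

theorem sum_mul_sub_sum_mul_of_eq_off {ι : Type*} [Fintype ι] {a b : ι → ℝ} {i₀ : ι}
    (h : ∀ i ≠ i₀, a i = b i) (u : ι → ℝ) :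
    ∑ i, a i * u i - ∑ i, b i * u i = (a i₀ - b i₀) * u i₀ := by
  rw [← Finset.sum_sub_distrib, Fintype.sum_eq_single i₀ fun i hi ↦ by rw [h i hi, sub_self],
    sub_mul]

theorem mean_sq_le_of_eq_off {N : ℕ} {a b : Fin N → ℝ} {i₀ : Fin N} {F : ℝ}
    (h : ∀ i ≠ i₀, a i = b i) (hb : ∀ i, |b i| ≤ F) :
    (N : ℝ)⁻¹ * ∑ i, a i ^ 2 ≤ 2 * F ^ 2 + 2 * ((N : ℝ)⁻¹ * (a i₀ - b i₀) ^ 2) := by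
  have hN : (N : ℝ) ≠ 0 := Nat.cast_ne_zero.2 i₀.pos.ne'
  have hterm (i : Fin N) : a i ^ 2 ≤ 2 * F ^ 2 + 2 * (a i - b i) ^ 2 := by
    have := sq_le_sq' (abs_le.1 (hb i)).1 (abs_le.1 (hb i)).2
    nlinarith [sq_nonneg (a i - 2 * b i)]
  have hsum : ∑ i, (a i - b i) ^ 2 = (a i₀ - b i₀) ^ 2 :=
    Fintype.sum_eq_single i₀ fun i hi ↦ by rw [h i hi, sub_self, zero_pow two_ne_zero]
  calc (N : ℝ)⁻¹ * ∑ i, a i ^ 2 ≤ (N : ℝ)⁻¹ * ∑ i, (2 * F ^ 2 + 2 * (a i - b i) ^ 2) := by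
        gcongr with i
        exact hterm i
    _ = 2 * F ^ 2 + 2 * ((N : ℝ)⁻¹ * (a i₀ - b i₀) ^ 2) := by
        rw [Finset.sum_add_distrib, Fin.sum_const, nsmul_eq_mul, ← Finset.mul_sum, hsum]
        field_simp

end AlmostEqual

theorem le_mul_sq_of_absorb {C F g ε σ S δ : ℝ} (hC : 0 ≤ C) (hF : 0 ≤ F) (hε : ε ≤ 1)
    (hCε : 4 * C * ε ≤ 1) (hσ : 0 ≤ σ) (hσS : σ ≤ C * (S + g ^ 2)) (hS : S ≤ 2 * F ^ 2 + 2 * δ)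
    (hδ : δ ≤ ε * (σ + F ^ 2)) : σ ≤ 8 * C * (F + |g|) ^ 2 := by
  have hbound : σ ≤ C * (4 * F ^ 2 + g ^ 2) + σ / 2 :=
    calc σ ≤ C * (2 * F ^ 2 + 2 * (ε * (σ + F ^ 2)) + g ^ 2) := hσS.trans (by gcongr; linarith)
      _ = C * (2 * F ^ 2 + 2 * (ε * F ^ 2) + g ^ 2) + 4 * C * ε * (σ / 2) := by ring
      _ ≤ C * (2 * F ^ 2 + 2 * (1 * F ^ 2) + g ^ 2) + 1 * (σ / 2) := by gcongr
      _ = C * (4 * F ^ 2 + g ^ 2) + σ / 2 := by ring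
  calc σ ≤ 2 * C * (4 * F ^ 2 + |g| ^ 2) := by
        rw [sq_abs]
        linarith
    _ ≤ 2 * C * (4 * (F + |g|) ^ 2) := by
        gcongr
        nlinarith [mul_nonneg hF (abs_nonneg g), sq_nonneg g, sq_abs g]
    _ = 8 * C * (F + |g|) ^ 2 := by ring

theorem inv_mul_sq_le_of_mul_abs_le {L D m F σ d : ℝ} {N κ : ℕ} (hL : 0 < L) (hD : 0 ≤ D)
    (hN : N ≠ 0) (hκ : κ ≠ 0) (hm : 0 ≤ m) (hF : 0 ≤ F) (hmσ : m ^ 2 ≤ σ)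
    (hd : L / N * |d| ≤ D / N ^ κ * (m + F)) :
    (N : ℝ)⁻¹ * d ^ 2 ≤ 2 * (D / L) ^ 2 / N * (σ + F ^ 2) := by
  have hN1 : (1 : ℝ) ≤ N := by exact_mod_cast Nat.one_le_iff_ne_zero.2 hN
  have habs : |d| ≤ D / L * (m + F) := by
    have hpow : D / N ^ κ * (m + F) ≤ D / N * (m + F) := by
      gcongr
      exact le_self_pow₀ hN1 hκ
    refine le_of_mul_le_mul_left ((hd.trans hpow).trans_eq ?_) (by positivity : 0 < L / N)
    field_simp
  calc (N : ℝ)⁻¹ * d ^ 2 = (N : ℝ)⁻¹ * |d| ^ 2 := by rw [sq_abs]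
    _ ≤ (N : ℝ)⁻¹ * (D / L * (m + F)) ^ 2 := by gcongr
    _ ≤ (N : ℝ)⁻¹ * ((D / L) ^ 2 * (2 * (m ^ 2 + F ^ 2))) := by
        rw [mul_pow]
        gcongr
        exact add_sq_le
    _ ≤ (N : ℝ)⁻¹ * ((D / L) ^ 2 * (2 * (σ + F ^ 2))) := by gcongr
    _ = 2 * (D / L) ^ 2 / N * (σ + F ^ 2) := by ring

namespace IsSimpleClosedCurve

variable {L : ℝ} {l : ℝ → ℂ} {κ : ℕ}

/- Testing with `φ = 1` bounds the sum of all the collocated values, hence the one which is not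
prescribed. -/
theorem exists_abs_defect_le (hl : IsSimpleClosedCurve L l) (hκ : κ ≠ 0) (M : ℝ) :
    ∃ D, 0 ≤ D ∧ ∀ᶠ N : ℕ in atTop, ∀ s st : Fin N → ℝ, IsWellDistributed L κ M s st →
      ∀ f : ℝ → ℝ, ContDiff ℝ κ f → Function.Periodic f L → ∫ x in (0 : ℝ)..L, f x = 0 →
      ∀ (γ : Fin N → ℝ) (i₀ : Fin N),
        (∀ i ≠ i₀, kernelSum (tangentialKernel l) s γ (st i) = f (st i)) →
        L / N * |kernelSum (tangentialKernel l) s γ (st i₀) - f (st i₀)| ≤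
          D / N ^ κ * ((N : ℝ)⁻¹ * ∑ j, |γ j| + Cnorm κ f) := by
  obtain ⟨C, hC⟩ := hl.exists_abs_mean_mul_pvTransform_sub_le hκ M
  set D := max |C * Cnorm (κ + 1) fun _ ↦ 1| |L * (L ^ κ + M)|
  refine ⟨D, (abs_nonneg _).trans (le_max_left _ _), ?_⟩
  filter_upwards [hC, eventually_ne_atTop 0] with N hC hN s st hmesh f hf hper hf0 γ i₀ hγ
  have hF := Cnorm_nonneg κ f
  have hL := hl.pos
  have ha : |L / N * ∑ i, kernelSum (tangentialKernel l) s γ (st i)| ≤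
      D / N ^ κ * ((N : ℝ)⁻¹ * ∑ j, |γ j|) := by
    have h := hC s st hmesh γ (fun _ ↦ 1) contDiff_const fun _ ↦ rfl
    simp only [hl.pvTransform_one, mul_zero, Finset.sum_const_zero, zero_sub, abs_neg,
      mul_one] at h
    refine h.trans ?_
    rw [div_mul_eq_mul_div]
    gcongr
    exact (le_abs_self _).trans (le_max_left _ _)
  have hquad : |L / N * ∑ i, f (st i)| ≤ D / N ^ κ * Cnorm κ f := by
    have h := hmesh.abs_sum_collocation_sub_integral_le hL hκ hN hf hper
    rw [hf0, sub_zero] at h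
    refine h.trans ?_
    gcongr
    exact (le_abs_self _).trans (le_max_right _ _)
  have hdiff := sum_mul_sub_sum_mul_of_eq_off hγ 1
  simp only [Pi.one_apply, mul_one] at hdiff
  rw [← abs_of_pos (div_pos hL (Nat.cast_pos.2 (Nat.pos_of_ne_zero hN))), ← abs_mul, ← hdiff,
    mul_sub, mul_add]
  exact (abs_sub _ _).trans (add_le_add ha hquad)

theorem exists_mean_abs_le (hl : IsSimpleClosedCurve L l) (hκ : κ ≠ 0) (M : ℝ) :
    ∃ A, 0 ≤ A ∧ ∀ᶠ N : ℕ in atTop, ∀ s st : Fin N → ℝ, IsWellDistributed L κ M s st →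
      ∀ f : ℝ → ℝ, ContDiff ℝ κ f → Function.Periodic f L → ∫ x in (0 : ℝ)..L, f x = 0 →
      ∀ (γ : Fin N → ℝ) (i₀ : Fin N),
        (∀ i ≠ i₀, kernelSum (tangentialKernel l) s γ (st i) = f (st i)) →
        (N : ℝ)⁻¹ * ∑ j, |γ j| ≤ A * (Cnorm κ f + |(N : ℝ)⁻¹ * ∑ j, γ j|) := by
  obtain ⟨D, hD0, hD⟩ := hl.exists_abs_defect_le hκ M
  obtain ⟨C, hC⟩ := hl.exists_mean_sq_le_mul_dataEnergy hκ M
  have hlim := tendsto_const_div_atTop_nhds_zero_nat (2 * (D / L) ^ 2)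
  have hlimC := hlim.const_mul (4 * |C|)
  rw [mul_zero] at hlimC
  refine ⟨√(8 * |C|), Real.sqrt_nonneg _, ?_⟩
  filter_upwards [hD, hC, hlim.eventually_le_const one_pos, hlimC.eventually_le_const one_pos,
    eventually_ne_atTop 0] with N hD hC hε hCε hN s st hmesh f hf hper hf0 γ i₀ hγ
  have hF := Cnorm_nonneg κ f
  have hδ := inv_mul_sq_le_of_mul_abs_le hl.pos hD0 hN hκ (by positivity) hF (sq_mean_abs_le γ)
    (hD s st hmesh f hf hper hf0 γ i₀ hγ)
  have hσ := le_mul_sq_of_absorb (abs_nonneg C) hF hε hCε (by positivity)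
    ((hC s st hmesh γ).trans
      (mul_le_mul_of_nonneg_right (le_abs_self C) (dataEnergy_nonneg _ _ _ _)))
    (mean_sq_le_of_eq_off hγ fun i ↦ abs_le_Cnorm hl.pos.ne' hf hper (st i)) hδ
  refine le_of_sq_le_sq ((sq_mean_abs_le γ).trans (hσ.trans_eq ?_)) (by positivity)
  rw [mul_pow, Real.sq_sqrt (by positivity)]

theorem exists_abs_mean_mul_pvTransform_sub_integral_le (hl : IsSimpleClosedCurve L l)
    (hκ : κ ≠ 0) (M : ℝ) :
    ∃ C, 0 ≤ C ∧ ∀ᶠ N : ℕ in atTop, ∀ s st : Fin N → ℝ, IsWellDistributed L κ M s st →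
      ∀ f : ℝ → ℝ, ContDiff ℝ κ f → Function.Periodic f L → ∫ x in (0 : ℝ)..L, f x = 0 →
      ∀ (γ : Fin N → ℝ) (i₀ : Fin N),
        (∀ i ≠ i₀, kernelSum (tangentialKernel l) s γ (st i) = f (st i)) →
      ∀ φ : ℝ → ℝ, ContDiff ℝ ∞ φ → Function.Periodic φ L →
        |(N : ℝ)⁻¹ * ∑ j, γ j * pvTransform L l φ (s j) - ∫ x in (0 : ℝ)..L, f x * φ x| ≤
          C / N ^ κ * ((N : ℝ)⁻¹ * ∑ j, |γ j| + Cnorm κ f) * Cnorm (κ + 1) φ := by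
  obtain ⟨C, hC⟩ := hl.exists_abs_mean_mul_pvTransform_sub_le hκ M
  obtain ⟨D, hD0, hD⟩ := hl.exists_abs_defect_le hκ M
  set Q := |L * (L ^ κ + M)| * 2 ^ κ
  refine ⟨|C| + D + Q, by positivity, ?_⟩
  filter_upwards [hC, hD, eventually_ne_atTop 0]
    with N hC hD hN s st hmesh f hf hper hf0 γ i₀ hγ φ hφ hφper
  have hF := Cnorm_nonneg κ f
  have hΦ := Cnorm_nonneg (κ + 1) φ
  have hφκ : ContDiff ℝ (κ + 1 : ℕ) φ := contDiff_infty.1 hφ _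
  set m := (N : ℝ)⁻¹ * ∑ j, |γ j|
  have hm : 0 ≤ m := by positivity
  set a := fun i ↦ kernelSum (tangentialKernel l) s γ (st i)
  have htransform := hC s st hmesh γ φ hφ hφper
  have hdefect : |L / N * ∑ i, a i * φ (st i) - L / N * ∑ i, f (st i) * φ (st i)| ≤
      D / N ^ κ * (m + Cnorm κ f) * Cnorm (κ + 1) φ := by
    rw [← mul_sub, sum_mul_sub_sum_mul_of_eq_off hγ fun i ↦ φ (st i), ← mul_assoc, abs_mul,
      abs_mul, abs_of_nonneg (div_nonneg hl.pos.le N.cast_nonneg)]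
    exact mul_le_mul (hD s st hmesh f hf hper hf0 γ i₀ hγ)
      (abs_le_Cnorm hl.pos.ne' hφκ hφper _) (abs_nonneg _) (by positivity)
  have hquad := hmesh.abs_sum_collocation_mul_sub_integral_le hl.pos hκ hN hf hφκ hper hφper
  calc |(N : ℝ)⁻¹ * ∑ j, γ j * pvTransform L l φ (s j) - ∫ x in (0 : ℝ)..L, f x * φ x|
      ≤ C / N ^ κ * Cnorm (κ + 1) φ * m + D / N ^ κ * (m + Cnorm κ f) * Cnorm (κ + 1) φ +
          Q / N ^ κ * Cnorm κ f * Cnorm (κ + 1) φ :=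
        (abs_sub_le _ _ _).trans (add_le_add
          ((abs_sub_le _ _ _).trans (add_le_add htransform hdefect)) hquad)
    _ ≤ |C| / N ^ κ * Cnorm (κ + 1) φ * (m + Cnorm κ f) +
          D / N ^ κ * (m + Cnorm κ f) * Cnorm (κ + 1) φ +
          Q / N ^ κ * (m + Cnorm κ f) * Cnorm (κ + 1) φ := by
        gcongr
        · exact le_abs_self C
        · exact le_add_of_nonneg_right hF
        · exact le_add_of_nonneg_left hm
    _ = (|C| + D + Q) / N ^ κ * (m + Cnorm κ f) * Cnorm (κ + 1) φ := by ring

end IsSimpleClosedCurve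

theorem weak_convergence_fapp_general {L : ℝ} {l : ℝ → ℂ} (hl : IsSimpleClosedCurve L l) {κ : ℕ}
    (hκ : κ ≠ 0) (M : ℝ) :
    ∃ C > 0, ∃ N₀ : ℕ, ∀ N : ℕ, N₀ ≤ N →
      ∀ s st : Fin N → ℝ, IsWellDistributed L κ M s st →
      ∀ f : ℝ → ℝ, ContDiff ℝ κ f → Function.Periodic f L → ∫ x in (0 : ℝ)..L, f x = 0 →
      ∀ (γ : Fin N → ℝ) (i₀ : Fin N),
        (∀ i ≠ i₀, kernelSum (tangentialKernel l) s γ (st i) = f (st i)) →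
      ∀ φ : ℝ → ℝ, ContDiff ℝ ∞ φ → Function.Periodic φ L →
        ∃ I : ℝ,
          Tendsto (fun ε ↦ ∫ x in puncturedPeriod L s ε, kernelSum (tangentialKernel l) s γ x * φ x)
            (𝓝[>] 0) (𝓝 I) ∧
          |I - ∫ x in (0 : ℝ)..L, f x * φ x| ≤
            C / N ^ κ * (Cnorm κ f + |(N : ℝ)⁻¹ * ∑ j, γ j|) * Cnorm (κ + 1) φ := by
  obtain ⟨A, hA0, hA⟩ := hl.exists_mean_abs_le hκ M
  obtain ⟨B, hB0, hB⟩ := hl.exists_abs_mean_mul_pvTransform_sub_integral_le hκ M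
  refine ⟨B * (A + 1) + 1, by positivity, eventually_atTop.1 ?_⟩
  filter_upwards [hA, hB, eventually_ne_zero_and_le_pow hκ (4 * π * M / L)]
    with N hA hB hNM s st hmesh f hf hper hf0 γ i₀ hγ φ hφ hφper
  have hinj := hmesh.injective_circlePt_node hl.pos hNM.1 hNM.2
  have hF := Cnorm_nonneg κ f
  have hΦ := Cnorm_nonneg (κ + 1) φ
  refine ⟨_, hl.tendsto_integral_sum_tangentialKernel_mul hinj hφ hφper _ γ, ?_⟩
  set m := (N : ℝ)⁻¹ * ∑ j, |γ j|
  set g := |(N : ℝ)⁻¹ * ∑ j, γ j|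
  have hg : 0 ≤ g := abs_nonneg _
  calc |(N : ℝ)⁻¹ * ∑ j, γ j * pvTransform L l φ (s j) - ∫ x in (0 : ℝ)..L, f x * φ x|
      ≤ B / N ^ κ * (m + Cnorm κ f) * Cnorm (κ + 1) φ :=
        hB s st hmesh f hf hper hf0 γ i₀ hγ φ hφ hφper
    _ ≤ B / N ^ κ * (A * (Cnorm κ f + g) + (Cnorm κ f + g)) * Cnorm (κ + 1) φ := by
        gcongr
        · exact hA s st hmesh f hf hper hf0 γ i₀ hγ
        · exact le_add_of_nonneg_right hg
    _ = B * (A + 1) / N ^ κ * (Cnorm κ f + g) * Cnorm (κ + 1) φ := by ring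
    _ ≤ (B * (A + 1) + 1) / N ^ κ * (Cnorm κ f + g) * Cnorm (κ + 1) φ := by
        gcongr
        exact le_add_of_nonneg_right zero_le_one

/-- Weak convergence of the discretized singular integral operator: the tangential
component of the approximate vortex flow converges weakly to `f` at rate `N^{-κ}`. -/
theorem weak_convergence_fapp
    (L : ℝ) (hL : 0 < L) (l : ℝ → ℂ)
    (hsm : ContDiff ℝ (⊤ : ℕ∞) l) (hper : ∀ s, l (s + L) = l s)
    (harc : ∀ s, ‖deriv l s‖ = 1) (hinj : Set.InjOn l (Set.Ico 0 L))
    (horient : ∃ z₀ : ℂ, (∀ s, l s ≠ z₀) ∧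
      (∫ t in (0:ℝ)..L, deriv l t / (l t - z₀)) = 2 * (π : ℂ) * Complex.I)
    (κ : ℕ) (hκ : 2 ≤ κ) (M : ℝ) (hM : 0 < M)
    (ms mst : (N : ℕ) → Fin N → ℝ)
    (hms : ∀ N, 2 ≤ N → ∀ i : Fin N, ms N i ∈ Set.Ico (0:ℝ) L ∧
      |ms N i - ((i : ℕ) : ℝ) * L / (N : ℝ)| ≤ M / (N : ℝ) ^ (κ + 1))
    (hmst : ∀ N, 2 ≤ N → ∀ i : Fin N, mst N i ∈ Set.Ico (0:ℝ) L ∧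
      |mst N i - (((i : ℕ) : ℝ) + 1/2) * L / (N : ℝ)| ≤ M / (N : ℝ) ^ (κ + 1)) :
    ∃ C > 0, ∃ N₀ : ℕ, ∀ N : ℕ, N₀ ≤ N →
      ∀ f : ℝ → ℝ, ContDiff ℝ (κ : ℕ∞) f → (∀ x, f (x + L) = f x) →
        (∫ x in (0:ℝ)..L, f x) = 0 →
      ∀ γ : ℝ, ∀ gam : Fin N → ℝ,
        (∀ i : Fin N, (i : ℕ) < N - 1 →
          (N : ℝ)⁻¹ * ∑ j : Fin N, gam j *
            (dotR (l (mst N i) - l (ms N j)) (deriv l (mst N i))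
              / ‖l (mst N i) - l (ms N j)‖ ^ 2) = f (mst N i)) →
        (N : ℝ)⁻¹ * ∑ j : Fin N, gam j = γ →
      ∀ φ : ℝ → ℝ, ContDiff ℝ (⊤ : ℕ∞) φ → (∀ x, φ (x + L) = φ x) →
        ∃ I : ℝ,
          Tendsto (fun ε : ℝ =>
              ∫ x in {x : ℝ | x ∈ Set.Ico (0:ℝ) L ∧
                  ∀ j : Fin N, ∀ k : ℤ, ε ≤ |x - ms N j - k * L|},
                ((N : ℝ)⁻¹ * ∑ j : Fin N, gam j *
                  (dotR (l x - l (ms N j)) (deriv l x) / ‖l x - l (ms N j)‖ ^ 2)) * φ x)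
            (𝓝[>] 0) (𝓝 I) ∧
          |I - ∫ x in (0:ℝ)..L, f x * φ x| ≤
            C / (N : ℝ) ^ κ * (Cnorm κ f + |γ|) * Cnorm (κ + 1) φ := by
  have hl : IsSimpleClosedCurve L l :=
    ⟨hL, hsm, hper, fun s ↦ norm_ne_zero_iff.1 (harc s ▸ one_ne_zero), hinj⟩
  obtain ⟨C, hC, N₀, hmain⟩ := weak_convergence_fapp_general hl (by omega : κ ≠ 0) M
  refine ⟨C, hC, max N₀ 2, fun N hN f hf hfper hf0 γ gam hgam hγ ↦ ?_⟩
  have hN2 : 2 ≤ N := le_of_max_le_right hN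
  exact hγ ▸ hmain N (le_of_max_le_left hN) (ms N) (mst N)
    ⟨fun i ↦ (hms N hN2 i).2, fun i ↦ (hmst N hN2 i).2⟩ f hf hfper hf0 gam ⟨N - 1, by omega⟩
    fun i hi ↦ hgam i (by grind)
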